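/- arXiv:2302.00708 — 3 statements merged into one kernel-verified Lean document; each statement's English description precedes it below -/
import Mathlib

section
/- For every natural number n: for every B in {3, 5, 8, 9, 12, 13, 15, 17, 18, 19, 20}, b_46(529n + 23B − 22) ≡ p_21(23n + B) (mod 2); for every B in {1, 3, 6, 7, 10, 11, 13, 15, 16, 17, 18}, b_92(529n + 23B − 22) ≡ p_19(23n + B) (mod 2); for every B in {2, 3, 6, 7, 9, 11, 12, 13, 14, 20, 22}, b_184(529n + 23B − 22) ≡ p_15(23n + B) (mod 2); and for every B in {1, 3, 4, 5, 6, 12, 14, 17, 18, 21, 22}, b_368(529n + 23B − 22) ≡ p_7(23n + B) (mod 2). -/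
/-- The number of `m`-regular partitions of `n`, i.e. partitions of `n`
in which no part is divisible by `m`. -/
noncomputable def numRegularPartitions (m n : ℕ) : ℕ :=
  Nat.card {π : n.Partition // ∀ j ∈ π.parts, ¬ m ∣ j}

/-- The number of `t`-multipartitions of `n`, i.e. `t`-tuples of partitions
whose sizes sum to `n`. -/
noncomputable def numMultipartitions (t n : ℕ) : ℕ :=
  Nat.card {f : Fin t → Σ k : ℕ, k.Partition // (∑ i, (f i).1) = n}

/-!
Write `E(q) = ∑ (-1)ᵏ q ^ (k(3k - 1)/2)` and `P = 1 / E`. Modulo `2`, the series `E(q)` and `E(q²³)`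
satisfy an algebraic equation of degree `24`. It comes from counting representations modulo `4` by
the quadratic forms `u² + uv + 6v²` and `2u² + uv + 3v²` of discriminant `-23`, using
`4(u² + uv + 6v²) = (2u + v)² + 23v²` and `8(2u² + uv + 3v²) = (4u + v)² + 23v²`, together with
Jacobi's identity for `E³`.

Rewritten for `P`, it says that `q²² P(q)` is a root of a polynomial of degree `24` with
coefficients in `𝔽₂⟦q²³⟧`. The other roots are its images under `q ↦ ζq` with `ζ²³ = 1`, and
`P(q⁵²⁹)`. The sum of the roots gives `U₂₃(q²² P) + P(q²³) = P²³`, where `U₂₃` extracts the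
exponents divisible by `23`. The `23 · 2ᵏ`-regular partitions have generating series
`E(q ^ (23 · 2ᵏ)) P(q)`; applying `U₂₃` after a shift by `q²²` turns it into
`E(q ^ 2ᵏ) P²³ + E(q ^ 2ᵏ) P(q²³)`. The first term is `P ^ (23 - 2ᵏ)`, since `E(q ^ 2ᵏ) = E ^ 2ᵏ`
modulo `2`. The second vanishes in every residue class modulo `23` which contains no
`2ᵏ · j(3j - 1)/2`.
-/

namespace ModularEquation

open Function

/-! ### Counting by involutions -/

section SignedCounts

variable {α : Type*} {S : Set α}

lemma ncard_eq_two_mul_of_involutive {f : α → α} (hf : f.Involutive) (hfS : ∀ x ∈ S, f x ∈ S)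
    {P : α → Prop} (hP : ∀ x ∈ S, (P (f x) ↔ ¬ P x)) :
    S.ncard = 2 * {x ∈ S | P x}.ncard := by
  have hsplit : S = {x ∈ S | P x} ∪ f '' {x ∈ S | P x} := by
    ext x
    constructor
    · intro hx
      by_cases h : P x
      · exact .inl ⟨hx, h⟩
      · exact .inr ⟨f x, ⟨hfS x hx, (hP x hx).2 h⟩, hf x⟩
    · rintro (⟨hx, -⟩ | ⟨y, ⟨hy, -⟩, rfl⟩)
      exacts [hx, hfS y hy]
  have hdisj : Disjoint {x ∈ S | P x} (f '' {x ∈ S | P x}) := by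
    rw [Set.disjoint_left]
    rintro _ ⟨-, hfy⟩ ⟨y, ⟨hy, hPy⟩, rfl⟩
    exact (hP y hy).1 hfy hPy
  by_cases hfin : {x ∈ S | P x}.Finite
  · conv_lhs => rw [hsplit]
    rw [Set.ncard_union_eq hdisj hfin (hfin.image f), Set.ncard_image_of_injective _ hf.injective,
      two_mul]
  · rw [Set.Infinite.ncard hfin, Set.Infinite.ncard fun h => hfin (h.subset fun _ hx => hx.1)]

lemma ncard_eq_four_mul_of_involutive {f g : α → α} (hf : f.Involutive) (hg : g.Involutive)
    (hfS : ∀ x ∈ S, f x ∈ S) (hgS : ∀ x ∈ S, g x ∈ S) {P Q : α → Prop}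
    (hPf : ∀ x ∈ S, (P (f x) ↔ ¬ P x)) (hPg : ∀ x ∈ S, (P (g x) ↔ P x))
    (hQg : ∀ x ∈ S, (Q (g x) ↔ ¬ Q x)) :
    S.ncard = 4 * {x ∈ S | P x ∧ Q x}.ncard := by
  rw [ncard_eq_two_mul_of_involutive hf hfS hPf,
    ncard_eq_two_mul_of_involutive (S := {x ∈ S | P x}) hg
      (fun x hx => ⟨hgS x hx.1, (hPg x hx.1).2 hx.2⟩) fun x hx => hQg x hx.1,
    ← mul_assoc]
  simp only [Set.mem_ofPred_eq, and_assoc, Nat.reduceMul]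

lemma ncard_setOf_add_ncard_setOf_not (hS : S.Finite) (P : α → Prop) :
    {x ∈ S | P x}.ncard + {x ∈ S | ¬ P x}.ncard = S.ncard :=
  Set.ncard_inter_add_ncard_sdiff_eq_ncard S {x | P x} hS

-- `a` and `b` are coordinates on `S`, and `f`, `g` are the reflections in their zero sets.
lemma ncard_modEq_four_of_reflections (hS : S.Finite) {f g : α → α}
    (hf : f.Involutive) (hg : g.Involutive) (hfS : ∀ x ∈ S, f x ∈ S) (hgS : ∀ x ∈ S, g x ∈ S)
    {a b : α → ℤ} (haf : ∀ x, a (f x) = -a x) (hag : ∀ x, a (g x) = a x)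
    (hbf : ∀ x, b (f x) = b x) (hbg : ∀ x, b (g x) = -b x)
    (hab : ∀ x ∈ S, a x = 0 → b x ≠ 0) :
    S.ncard ≡ {x ∈ S | a x = 0}.ncard + {x ∈ S | b x = 0}.ncard [MOD 4] := by
  have hb : {x ∈ S | b x = 0} = {x ∈ {x ∈ S | a x ≠ 0} | b x = 0} := by
    ext x
    have := hab x
    simp only [Set.mem_ofPred_eq]
    tauto
  have hfree : {x ∈ {x ∈ S | a x ≠ 0} | b x ≠ 0}.ncard =
      4 * {x ∈ {x ∈ {x ∈ S | a x ≠ 0} | b x ≠ 0} | 0 < a x ∧ 0 < b x}.ncard := by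
    refine ncard_eq_four_mul_of_involutive hf hg ?_ ?_ ?_ ?_ ?_ <;> rintro x ⟨⟨hx, ha⟩, hb⟩
    · exact ⟨⟨hfS x hx, by simpa [haf] using ha⟩, by simpa [hbf] using hb⟩
    · exact ⟨⟨hgS x hx, by simpa [hag] using ha⟩, by simpa [hbg] using hb⟩
    · rw [haf]; omega
    · rw [hag]
    · rw [hbg]; omega
  rw [← ncard_setOf_add_ncard_setOf_not hS fun x => a x = 0, hb,
    ← ncard_setOf_add_ncard_setOf_not (S := {x ∈ S | ¬ a x = 0}) (hS.subset fun _ h => h.1)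
      fun x => b x = 0, hfree, ← add_assoc]
  simp [Nat.ModEq]

end SignedCounts

lemma even_ncard_of_neg_mem {S : Set (ℤ × ℤ)} (hS : ∀ p ∈ S, -p ∈ S) (h0 : 0 ∉ S) :
    Even S.ncard := by
  rw [ncard_eq_two_mul_of_involutive neg_involutive hS
    (P := fun p => 0 < p.1 ∨ p.1 = 0 ∧ 0 < p.2)]
  · exact even_two_mul _
  · rintro ⟨x, y⟩ hp
    have : ¬ (x = 0 ∧ y = 0) := by rintro ⟨rfl, rfl⟩; exact h0 hp
    simp only [Prod.neg_mk]
    omega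

lemma finite_setOf_mul_sq_add_mul_sq_eq {c d : ℤ} (hc : 0 < c) (hd : 0 < d) (e : ℤ) :
    {p : ℤ × ℤ | c * p.1 ^ 2 + d * p.2 ^ 2 = e}.Finite := by
  refine (Set.finite_Icc ((-e, -e) : ℤ × ℤ) (e, e)).subset ?_
  rintro ⟨x, y⟩ (h : c * x ^ 2 + d * y ^ 2 = e)
  have hcx : x ^ 2 ≤ c * x ^ 2 := le_mul_of_one_le_left (sq_nonneg x) hc
  have hdy : y ^ 2 ≤ d * y ^ 2 := le_mul_of_one_le_left (sq_nonneg y) hd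
  have hx : |x| ≤ e := (sq_abs x ▸ Int.le_self_sq |x|).trans (by linarith [sq_nonneg y])
  have hy : |y| ≤ e := (sq_abs y ▸ Int.le_self_sq |y|).trans (by linarith [sq_nonneg x])
  rw [abs_le] at hx hy
  exact ⟨⟨hx.1, hy.1⟩, hx.2, hy.2⟩

lemma negFst_involutive : Involutive fun p : ℤ × ℤ => (-p.1, p.2) := fun p => by simp

lemma negSnd_involutive : Involutive fun p : ℤ × ℤ => (p.1, -p.2) := fun p => by simp

lemma ncard_mul_sq_add_mul_sq_modEq_four {c d e : ℤ} (hc : 0 < c) (hd : 0 < d) (he : e ≠ 0) :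
    {p : ℤ × ℤ | c * p.1 ^ 2 + d * p.2 ^ 2 = e}.ncard ≡
      {x : ℤ | c * x ^ 2 = e}.ncard + {y : ℤ | d * y ^ 2 = e}.ncard [MOD 4] := by
  have h := ncard_modEq_four_of_reflections (finite_setOf_mul_sq_add_mul_sq_eq hc hd e)
    negFst_involutive negSnd_involutive (by simp) (by simp) (a := Prod.fst) (b := Prod.snd)
    (by simp) (by simp) (by simp) (by simp)
    (by rintro ⟨x, y⟩ hp rfl rfl; exact he (by simpa using hp.symm))
  have hx : {p ∈ {p : ℤ × ℤ | c * p.1 ^ 2 + d * p.2 ^ 2 = e} | p.2 = 0} =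
      (fun x => (x, 0)) '' {x : ℤ | c * x ^ 2 = e} := by
    ext ⟨x, y⟩; simp; grind
  have hy : {p ∈ {p : ℤ × ℤ | c * p.1 ^ 2 + d * p.2 ^ 2 = e} | p.1 = 0} =
      (fun y => (0, y)) '' {y : ℤ | d * y ^ 2 = e} := by
    ext ⟨x, y⟩; simp; grind
  rwa [hx, hy, Set.ncard_image_of_injective _ (Prod.mk_left_injective 0),
    Set.ncard_image_of_injective _ (Prod.mk_right_injective 0), add_comm] at h

lemma ncard_odd_mul_sq (c e : ℤ) :
    {x : ℤ | x % 2 = 1 ∧ c * x ^ 2 = e}.ncard = 2 * {n : ℕ | c * (2 * n + 1) ^ 2 = e}.ncard := by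
  rw [ncard_eq_two_mul_of_involutive neg_involutive (P := fun x => 0 < x)
    (by rintro x ⟨hx, h⟩; exact ⟨by omega, by rwa [neg_sq]⟩) (by rintro x ⟨hx, -⟩; omega)]
  have himage : {x ∈ {x : ℤ | x % 2 = 1 ∧ c * x ^ 2 = e} | 0 < x} =
      (fun n : ℕ => (2 * n + 1 : ℤ)) '' {n : ℕ | c * (2 * n + 1) ^ 2 = e} := by
    ext x
    constructor
    · rintro ⟨⟨hx, h⟩, hpos⟩
      obtain ⟨n, rfl⟩ : ∃ n : ℕ, x = 2 * n + 1 := ⟨(x / 2).toNat, by omega⟩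
      exact ⟨n, h, rfl⟩
    · rintro ⟨n, h, rfl⟩
      exact ⟨⟨show (2 * n + 1 : ℤ) % 2 = 1 by omega, h⟩, by positivity⟩
  rw [himage, Set.ncard_image_of_injective _ fun m n h => by simpa using h]

lemma ncard_odd_pairs (d e : ℤ) :
    {p : ℤ × ℤ | p.1 ^ 2 + d * p.2 ^ 2 = e ∧ p.1 % 2 = 1 ∧ p.2 % 2 = 1}.ncard =
      4 * {p : ℕ × ℕ | (2 * p.1 + 1 : ℤ) ^ 2 + d * (2 * p.2 + 1) ^ 2 = e}.ncard := by
  rw [ncard_eq_four_mul_of_involutive negFst_involutive negSnd_involutive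
    (P := fun p => 0 < p.1) (Q := fun p => 0 < p.2)]
  · have himage : {p ∈ {p : ℤ × ℤ | p.1 ^ 2 + d * p.2 ^ 2 = e ∧ p.1 % 2 = 1 ∧ p.2 % 2 = 1} |
        0 < p.1 ∧ 0 < p.2} = (fun p : ℕ × ℕ => ((2 * p.1 + 1, 2 * p.2 + 1) : ℤ × ℤ)) ''
          {p | (2 * p.1 + 1 : ℤ) ^ 2 + d * (2 * p.2 + 1) ^ 2 = e} := by
      ext ⟨x, y⟩
      constructor
      · rintro ⟨⟨h, hx, hy⟩, hx0, hy0⟩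
        obtain ⟨m, rfl⟩ : ∃ m : ℕ, x = 2 * m + 1 := ⟨(x / 2).toNat, by omega⟩
        obtain ⟨n, rfl⟩ : ∃ n : ℕ, y = 2 * n + 1 := ⟨(y / 2).toNat, by omega⟩
        exact ⟨(m, n), h, rfl⟩
      · rintro ⟨⟨m, n⟩, h, hmn⟩
        simp only [Prod.mk.injEq] at hmn
        obtain ⟨rfl, rfl⟩ := hmn
        exact ⟨⟨h, by omega, by omega⟩, by positivity, by positivity⟩
    rw [himage, Set.ncard_image_of_injective _ fun p q h => by simpa [Prod.ext_iff] using h]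
  all_goals rintro ⟨x, y⟩ ⟨h, hx, hy⟩
  · exact ⟨by simpa using h, by omega, hy⟩
  · exact ⟨by simpa using h, hx, by omega⟩
  all_goals omega

/-- Both coordinates are prime to `6`. -/
def CoprimeSix (p : ℤ × ℤ) : Prop := (p.1 % 2 = 1 ∧ p.1 % 3 ≠ 0) ∧ p.2 % 2 = 1 ∧ p.2 % 3 ≠ 0

lemma ncard_coprime_six_pairs (d e : ℤ) :
    {p : ℤ × ℤ | p.1 ^ 2 + d * p.2 ^ 2 = e ∧ CoprimeSix p}.ncard =
      4 * {p : ℤ × ℤ | (6 * p.1 - 1) ^ 2 + d * (6 * p.2 - 1) ^ 2 = e}.ncard := by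
  rw [ncard_eq_four_mul_of_involutive negFst_involutive negSnd_involutive
    (P := fun p => p.1 % 3 = 2) (Q := fun p => p.2 % 3 = 2)]
  · have himage : {p ∈ {p : ℤ × ℤ | p.1 ^ 2 + d * p.2 ^ 2 = e ∧ CoprimeSix p} |
        p.1 % 3 = 2 ∧ p.2 % 3 = 2} = (fun p : ℤ × ℤ => (6 * p.1 - 1, 6 * p.2 - 1)) ''
          {p | (6 * p.1 - 1) ^ 2 + d * (6 * p.2 - 1) ^ 2 = e} := by
      ext ⟨x, y⟩
      constructor
      · rintro ⟨⟨h, ⟨hx2, -⟩, hy2, -⟩, hx3, hy3⟩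
        obtain ⟨k, rfl⟩ : ∃ k, x = 6 * k - 1 := ⟨(x + 1) / 6, by omega⟩
        obtain ⟨l, rfl⟩ : ∃ l, y = 6 * l - 1 := ⟨(y + 1) / 6, by omega⟩
        exact ⟨(k, l), h, rfl⟩
      · rintro ⟨⟨k, l⟩, h, hkl⟩
        simp only [Prod.mk.injEq] at hkl
        obtain ⟨rfl, rfl⟩ := hkl
        exact ⟨⟨h, by simp only [CoprimeSix]; omega⟩, by omega, by omega⟩
    rw [himage, Set.ncard_image_of_injective _ fun p q h => by simpa [Prod.ext_iff] using h]
  all_goals rintro ⟨x, y⟩ ⟨h, hx, hy⟩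
  · exact ⟨by simpa using h, by omega, hy⟩
  · exact ⟨by simpa using h, hx, by omega⟩
  all_goals omega

/-! ### Representations by `x² + 2y²` -/

lemma injective_add_two_mul_sub : Injective fun p : ℤ × ℤ => (p.1 + 2 * p.2, p.1 - p.2) := by
  rintro ⟨x, y⟩ ⟨z, w⟩ h
  simp only [Prod.mk.injEq] at h ⊢
  omega

lemma ncard_three_mul_sq_add_six_mul_sq_modEq_zero (N : ℤ) :
    {p : ℤ × ℤ | 3 * p.1 ^ 2 + 6 * p.2 ^ 2 = 8 * N + 1}.ncard ≡ 0 [MOD 4] := by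
  have h3 : {x : ℤ | 3 * x ^ 2 = 8 * N + 1} = ∅ := by
    refine Set.eq_empty_of_forall_notMem fun x (hx : 3 * x ^ 2 = 8 * N + 1) => ?_
    have hodd : Odd x := (Int.odd_pow' two_ne_zero).1 (Int.odd_iff.2 (by omega))
    have := Int.sq_mod_four_eq_one_of_odd hodd
    omega
  have h6 : {y : ℤ | 6 * y ^ 2 = 8 * N + 1} = ∅ :=
    Set.eq_empty_of_forall_notMem fun y (hy : 6 * y ^ 2 = 8 * N + 1) => by omega
  simpa [h3, h6] using
    ncard_mul_sq_add_mul_sq_modEq_four (c := 3) (d := 6) (e := 8 * N + 1) (by simp) (by simp)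
      (by omega)

lemma ncard_sq_add_two_mul_sq_modEq (N : ℤ) :
    {p : ℤ × ℤ | p.1 ^ 2 + 2 * p.2 ^ 2 = 8 * N + 1}.ncard ≡
      2 * {n : ℕ | (2 * n + 1 : ℤ) ^ 2 = 8 * N + 1}.ncard [MOD 4] := by
  have hx : {x : ℤ | x ^ 2 = 8 * N + 1}.ncard =
      2 * {n : ℕ | (2 * n + 1 : ℤ) ^ 2 = 8 * N + 1}.ncard := by
    have hodd : {x : ℤ | x ^ 2 = 8 * N + 1} = {x : ℤ | x % 2 = 1 ∧ 1 * x ^ 2 = 8 * N + 1} := by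
      ext x
      simp only [Set.mem_ofPred_eq, one_mul, iff_and_self]
      intro h
      exact Int.odd_iff.1 ((Int.odd_pow' two_ne_zero).1 (Int.odd_iff.2 (by omega)))
    rw [hodd, ncard_odd_mul_sq]
    simp only [one_mul]
  have hy : {y : ℤ | 2 * y ^ 2 = 8 * N + 1} = ∅ :=
    Set.eq_empty_of_forall_notMem fun y (hy : 2 * y ^ 2 = 8 * N + 1) => by omega
  simpa [hy, hx] using
    ncard_mul_sq_add_mul_sq_modEq_four (c := 1) (d := 2) (e := 8 * N + 1) (by simp) (by simp)
      (by omega)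

lemma odd_and_even_of_sq_add_two_mul_sq {x y N : ℤ} (h : x ^ 2 + 2 * y ^ 2 = 8 * N + 1) :
    x % 2 = 1 ∧ y % 2 = 0 := by
  have hx : Odd x := (Int.odd_pow' two_ne_zero).1 (Int.odd_iff.2 (by omega))
  have hx4 := Int.sq_mod_four_eq_one_of_odd hx
  refine ⟨Int.odd_iff.1 hx, by_contra fun hy => ?_⟩
  have hy4 := Int.sq_mod_four_eq_one_of_odd (Int.odd_iff.2 (Int.emod_two_ne_zero.1 hy))
  omega

-- `(x + 2y)² + 2(x - y)² = 3(x² + 2y²)`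
lemma ncard_coprime_six_pairs_eq_two_mul (N : ℤ) :
    {p : ℤ × ℤ | p.1 ^ 2 + 2 * p.2 ^ 2 = 24 * N + 3 ∧ CoprimeSix p}.ncard =
      2 * {p : ℤ × ℤ | p.1 ^ 2 + 2 * p.2 ^ 2 = 8 * N + 1 ∧ ¬ 3 ∣ p.1 - p.2}.ncard := by
  rw [ncard_eq_two_mul_of_involutive negSnd_involutive (P := fun p => 3 ∣ p.1 - p.2)]
  · congr 1
    refine (congrArg Set.ncard ?_).trans (Set.ncard_image_of_injective _ injective_add_two_mul_sub)
    ext ⟨a, b⟩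
    constructor
    · rintro ⟨⟨h, ha, hb⟩, hab⟩
      obtain ⟨y, rfl⟩ : ∃ y, a = b + 3 * y := ⟨(a - b) / 3, by omega⟩
      refine ⟨(b + y, y), ⟨?_, by omega⟩, by simp; ring⟩
      dsimp only at h ⊢
      linarith
    · rintro ⟨⟨x, y⟩, ⟨h, hxy⟩, hab⟩
      simp only [Prod.mk.injEq] at hab
      obtain ⟨rfl, rfl⟩ := hab
      have := odd_and_even_of_sq_add_two_mul_sq h
      refine ⟨⟨?_, ?_, ?_⟩, ?_⟩
      · dsimp only at h ⊢
        linarith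
      all_goals dsimp only at hxy ⊢; omega
  all_goals rintro ⟨x, y⟩ ⟨h, hx, hy⟩
  · exact ⟨by simpa using h, hx, by omega⟩
  · have hx3 : x % 3 = 1 ∨ x % 3 = 2 := by omega
    have hy3 : y % 3 = 1 ∨ y % 3 = 2 := by omega
    rcases hx3 with hx3 | hx3 <;> rcases hy3 with hy3 | hy3 <;> omega

lemma ncard_sq_add_two_mul_sq_of_three_dvd_sub_modEq (N : ℤ) :
    {p : ℤ × ℤ | p.1 ^ 2 + 2 * p.2 ^ 2 = 8 * N + 1 ∧ 3 ∣ p.1 - p.2}.ncard ≡ 0 [MOD 4] := by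
  convert ncard_three_mul_sq_add_six_mul_sq_modEq_zero N using 1
  refine (congrArg Set.ncard ?_).trans (Set.ncard_image_of_injective _ injective_add_two_mul_sub)
  ext ⟨x, y⟩
  constructor
  · rintro ⟨h, hxy⟩
    obtain ⟨t, rfl⟩ : ∃ t, x = y + 3 * t := ⟨(x - y) / 3, by omega⟩
    refine ⟨(y + t, t), ?_, by simp; ring⟩
    dsimp only at h
    rw [Set.mem_ofPred_eq]
    linarith
  · rintro ⟨⟨s, t⟩, h, hst⟩
    simp only [Prod.mk.injEq] at hst
    obtain ⟨rfl, rfl⟩ := hst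
    rw [Set.mem_ofPred_eq] at h
    refine ⟨?_, by omega⟩
    linarith

lemma ncard_six_mul_sub_one_sq_add_two_mul_modEq (N : ℤ) :
    {p : ℤ × ℤ | (6 * p.1 - 1) ^ 2 + 2 * (6 * p.2 - 1) ^ 2 = 24 * N + 3}.ncard ≡
      {n : ℕ | (2 * n + 1 : ℤ) ^ 2 = 8 * N + 1}.ncard [MOD 2] := by
  have hfin : {p : ℤ × ℤ | p.1 ^ 2 + 2 * p.2 ^ 2 = 8 * N + 1}.Finite := by
    simpa using finite_setOf_mul_sq_add_mul_sq_eq one_pos two_pos (8 * N + 1)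
  have hsplit := ncard_setOf_add_ncard_setOf_not hfin fun p => 3 ∣ p.1 - p.2
  have hcoprime := ncard_coprime_six_pairs 2 (24 * N + 3)
  have hhalf := ncard_coprime_six_pairs_eq_two_mul N
  have hall := ncard_sq_add_two_mul_sq_modEq N
  have hdvd := ncard_sq_add_two_mul_sq_of_three_dvd_sub_modEq N
  simp only [Nat.ModEq, Set.mem_ofPred_eq] at *
  omega

/-! ### Forms of discriminant `-23` -/

/-- The principal binary quadratic form `u² + uv + 6v²` of discriminant `-23`. -/
def principalForm (p : ℤ × ℤ) : ℤ := p.1 ^ 2 + p.1 * p.2 + 6 * p.2 ^ 2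

/-- The form `2u² + uv + 3v²`, which together with `2u² - uv + 3v²` represents the two
non-principal classes of discriminant `-23`. -/
def nonprincipalForm (p : ℤ × ℤ) : ℤ := 2 * p.1 ^ 2 + p.1 * p.2 + 3 * p.2 ^ 2

lemma four_mul_principalForm (p : ℤ × ℤ) :
    4 * principalForm p = (2 * p.1 + p.2) ^ 2 + 23 * p.2 ^ 2 := by
  rw [principalForm]; ring

lemma eight_mul_nonprincipalForm (p : ℤ × ℤ) :
    8 * nonprincipalForm p = (4 * p.1 + p.2) ^ 2 + 23 * p.2 ^ 2 := by
  rw [nonprincipalForm]; ring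

lemma finite_setOf_sq_add_mul_sq_comp {c d : ℤ} (hc : c ≠ 0) (hd : 0 < d) (e : ℤ) :
    {p : ℤ × ℤ | (c * p.1 + p.2) ^ 2 + d * p.2 ^ 2 = e}.Finite := by
  have hinj : Injective fun p : ℤ × ℤ => (c * p.1 + p.2, p.2) := by
    rintro ⟨u, v⟩ ⟨u', v'⟩ h
    simp only [Prod.mk.injEq] at h ⊢
    obtain ⟨h, rfl⟩ := h
    exact ⟨mul_left_cancel₀ hc (add_right_cancel h), rfl⟩
  simpa using (finite_setOf_mul_sq_add_mul_sq_eq one_pos hd e).preimage hinj.injOn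

lemma finite_setOf_principalForm_eq (M : ℤ) : {p | principalForm p = M}.Finite := by
  refine (finite_setOf_sq_add_mul_sq_comp two_ne_zero (by simp : (0 : ℤ) < 23) (4 * M)).subset ?_
  rintro p rfl
  exact (four_mul_principalForm p).symm

lemma finite_setOf_nonprincipalForm_eq (M : ℤ) : {p | nonprincipalForm p = M}.Finite := by
  refine (finite_setOf_sq_add_mul_sq_comp four_ne_zero (by simp : (0 : ℤ) < 23) (8 * M)).subset ?_
  rintro p rfl
  exact (eight_mul_nonprincipalForm p).symm

lemma ncard_nonprincipalForm_odd (M : ℤ) :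
    {p | nonprincipalForm p = M ∧ p.2 % 2 = 1}.ncard =
      2 * {p : ℕ × ℕ | (2 * p.1 + 1 : ℤ) ^ 2 + 23 * (2 * p.2 + 1) ^ 2 = 8 * M}.ncard := by
  have hflip : {p : ℤ × ℤ | p.1 ^ 2 + 23 * p.2 ^ 2 = 8 * M ∧ p.1 % 2 = 1 ∧ p.2 % 2 = 1}.ncard =
      2 * {p : ℤ × ℤ | (p.1 ^ 2 + 23 * p.2 ^ 2 = 8 * M ∧ p.1 % 2 = 1 ∧ p.2 % 2 = 1) ∧
        4 ∣ p.1 - p.2}.ncard := by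
    refine ncard_eq_two_mul_of_involutive negSnd_involutive ?_ ?_ <;> rintro ⟨x, y⟩ ⟨h, hx, hy⟩
    · exact ⟨by simpa using h, hx, by omega⟩
    · omega
  have himage : {p : ℤ × ℤ | (p.1 ^ 2 + 23 * p.2 ^ 2 = 8 * M ∧ p.1 % 2 = 1 ∧ p.2 % 2 = 1) ∧
      4 ∣ p.1 - p.2} = (fun p : ℤ × ℤ => (4 * p.1 + p.2, p.2)) ''
        {p | nonprincipalForm p = M ∧ p.2 % 2 = 1} := by
    ext ⟨x, y⟩
    constructor
    · rintro ⟨⟨h, -, hy⟩, hxy⟩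
      obtain ⟨u, rfl⟩ : ∃ u, x = 4 * u + y := ⟨(x - y) / 4, by omega⟩
      have := eight_mul_nonprincipalForm (u, y)
      exact ⟨(u, y), ⟨by dsimp only at h this; linarith, hy⟩, rfl⟩
    · rintro ⟨⟨u, v⟩, ⟨rfl, hv⟩, huv⟩
      simp only [Prod.mk.injEq] at huv
      obtain ⟨rfl, rfl⟩ := huv
      have := eight_mul_nonprincipalForm (u, v)
      exact ⟨⟨this.symm, by omega, hv⟩, by omega⟩
  have hodd := ncard_odd_pairs 23 (8 * M)
  rw [himage, Set.ncard_image_of_injective _ fun p q h => by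
    simp only [Prod.mk.injEq] at h; ext <;> omega] at hflip
  omega

lemma ncard_nonprincipalForm (M : ℤ) :
    {p | nonprincipalForm p = M}.ncard =
      2 * {p : ℕ × ℕ | (2 * p.1 + 1 : ℤ) ^ 2 + 23 * (2 * p.2 + 1) ^ 2 = 8 * M}.ncard +
        {p | 2 * principalForm p = M}.ncard := by
  have heven : {p ∈ {p | nonprincipalForm p = M} | ¬ p.2 % 2 = 1} =
      (fun p => (p.1, 2 * p.2)) '' {p | 2 * principalForm p = M} := by
    ext ⟨u, v⟩
    constructor
    · rintro ⟨rfl, hv⟩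
      obtain ⟨w, rfl⟩ : ∃ w, v = 2 * w := ⟨v / 2, by omega⟩
      exact ⟨(u, w), by simp only [principalForm, nonprincipalForm, Set.mem_ofPred_eq]; ring, rfl⟩
    · rintro ⟨⟨u, w⟩, rfl, huw⟩
      simp only [Prod.mk.injEq] at huw
      obtain ⟨rfl, rfl⟩ := huw
      exact ⟨by simp only [principalForm, nonprincipalForm, Set.mem_ofPred_eq]; ring, by omega⟩
  rw [← ncard_setOf_add_ncard_setOf_not (finite_setOf_nonprincipalForm_eq M) fun p => p.2 % 2 = 1,
    heven, Set.ncard_image_of_injective _ fun p q h => by simpa [Prod.ext_iff] using h]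
  simp only [Set.mem_ofPred_eq, ncard_nonprincipalForm_odd]

lemma ncard_principalForm_not_even_of_snd_eq_zero (M : ℤ) :
    {p | (principalForm p = M ∧ ¬ (p.1 % 2 = 0 ∧ p.2 % 2 = 0)) ∧ p.2 = 0}.ncard =
      2 * {n : ℕ | (2 * n + 1 : ℤ) ^ 2 = M}.ncard := by
  have himage : {p | (principalForm p = M ∧ ¬ (p.1 % 2 = 0 ∧ p.2 % 2 = 0)) ∧ p.2 = 0} =
      (fun u => (u, 0)) '' {u : ℤ | u % 2 = 1 ∧ 1 * u ^ 2 = M} := by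
    ext ⟨u, v⟩
    simp only [principalForm, Set.mem_ofPred_eq, Set.mem_image, Prod.mk.injEq]
    constructor
    · rintro ⟨⟨h, hu⟩, rfl⟩
      exact ⟨u, ⟨by omega, by linarith⟩, rfl, rfl⟩
    · rintro ⟨u, ⟨hu, h⟩, rfl, rfl⟩
      exact ⟨⟨by linarith, by omega⟩, rfl⟩
  rw [himage, Set.ncard_image_of_injective _ (Prod.mk_left_injective 0), ncard_odd_mul_sq]
  simp only [one_mul]

lemma ncard_principalForm_not_even_of_two_mul_fst_add_snd_eq_zero (M : ℤ) :
    {p | (principalForm p = M ∧ ¬ (p.1 % 2 = 0 ∧ p.2 % 2 = 0)) ∧ 2 * p.1 + p.2 = 0}.ncard =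
      2 * {n : ℕ | 23 * (2 * n + 1 : ℤ) ^ 2 = M}.ncard := by
  have himage : {p | (principalForm p = M ∧ ¬ (p.1 % 2 = 0 ∧ p.2 % 2 = 0)) ∧ 2 * p.1 + p.2 = 0} =
      (fun u => (u, -2 * u)) '' {u : ℤ | u % 2 = 1 ∧ 23 * u ^ 2 = M} := by
    ext ⟨u, v⟩
    simp only [principalForm, Set.mem_ofPred_eq, Set.mem_image, Prod.mk.injEq]
    constructor
    · rintro ⟨⟨h, hu⟩, huv⟩
      obtain rfl : v = -2 * u := by omega
      exact ⟨u, ⟨by omega, by linarith⟩, rfl, rfl⟩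
    · rintro ⟨u, ⟨hu, h⟩, rfl, rfl⟩
      exact ⟨⟨by linarith, by omega⟩, by omega⟩
  rw [himage, Set.ncard_image_of_injective _ fun u v h => (Prod.mk.inj h).1, ncard_odd_mul_sq]

-- By `4(u² + uv + 6v²) = (2u + v)² + 23v²`, the form has the reflections `2u + v ↦ -(2u + v)` and
-- `v ↦ -v`.
lemma ncard_principalForm_not_even_modEq {M : ℤ} (hM : M ≠ 0) :
    {p | principalForm p = M ∧ ¬ (p.1 % 2 = 0 ∧ p.2 % 2 = 0)}.ncard ≡
      2 * ({n : ℕ | (2 * n + 1 : ℤ) ^ 2 = M}.ncard +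
        {n : ℕ | 23 * (2 * n + 1 : ℤ) ^ 2 = M}.ncard) [MOD 4] := by
  have h := ncard_modEq_four_of_reflections
    (S := {p | principalForm p = M ∧ ¬ (p.1 % 2 = 0 ∧ p.2 % 2 = 0)})
    (f := fun p => (-p.1 - p.2, p.2)) (g := fun p => (p.1 + p.2, -p.2))
    (a := fun p => 2 * p.1 + p.2) (b := fun p => p.2)
    ((finite_setOf_principalForm_eq M).subset fun p hp => hp.1)
    (fun p => by ext <;> simp) (fun p => by ext <;> simp)
    (by rintro ⟨u, v⟩ ⟨rfl, h⟩; exact ⟨by simp only [principalForm]; ring, by omega⟩)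
    (by rintro ⟨u, v⟩ ⟨rfl, h⟩; exact ⟨by simp only [principalForm]; ring, by omega⟩)
    (fun p => by ring) (fun p => by ring) (fun p => rfl) (fun p => rfl)
    (by
      rintro ⟨u, v⟩ ⟨rfl, -⟩ hu rfl
      obtain rfl : u = 0 := by omega
      exact hM rfl)
  simp only [Set.mem_ofPred_eq] at h
  rwa [ncard_principalForm_not_even_of_snd_eq_zero,
    ncard_principalForm_not_even_of_two_mul_fst_add_snd_eq_zero, ← mul_add, add_comm] at h

lemma ncard_principalForm_modEq {M : ℤ} (hM : M ≠ 0) :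
    {p | principalForm p = M}.ncard ≡ {p | 4 * principalForm p = M}.ncard +
      2 * ({n : ℕ | (2 * n + 1 : ℤ) ^ 2 = M}.ncard +
        {n : ℕ | 23 * (2 * n + 1 : ℤ) ^ 2 = M}.ncard) [MOD 4] := by
  have heven : {p ∈ {p | principalForm p = M} | p.1 % 2 = 0 ∧ p.2 % 2 = 0} =
      (fun p => (2 * p.1, 2 * p.2)) '' {p | 4 * principalForm p = M} := by
    ext ⟨u, v⟩
    constructor
    · rintro ⟨rfl, hu, hv⟩
      obtain ⟨k, rfl⟩ : ∃ k, u = 2 * k := ⟨u / 2, by omega⟩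
      obtain ⟨l, rfl⟩ : ∃ l, v = 2 * l := ⟨v / 2, by omega⟩
      exact ⟨(k, l), by simp only [principalForm, Set.mem_ofPred_eq]; ring, rfl⟩
    · rintro ⟨⟨k, l⟩, rfl, hkl⟩
      simp only [Prod.mk.injEq] at hkl
      obtain ⟨rfl, rfl⟩ := hkl
      exact ⟨by simp only [principalForm, Set.mem_ofPred_eq]; ring, by omega, by omega⟩
  rw [← ncard_setOf_add_ncard_setOf_not (finite_setOf_principalForm_eq M)
      fun p => p.1 % 2 = 0 ∧ p.2 % 2 = 0,
    heven, Set.ncard_image_of_injective _ fun p q h => by simpa [Prod.ext_iff] using h]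
  exact (ncard_principalForm_not_even_modEq hM).add_left _

lemma even_ncard_nonprincipalForm {M : ℤ} (hM : M ≠ 0) :
    Even {p | nonprincipalForm p = M}.ncard :=
  even_ncard_of_neg_mem (by rintro p rfl; simp [nonprincipalForm])
    fun h => hM (h.symm.trans rfl)

lemma ncard_principalForm_eq_ncard_twelve_dvd (M : ℤ) :
    {p | principalForm p = M}.ncard =
      {p : ℤ × ℤ | p.1 ^ 2 + 23 * p.2 ^ 2 = 24 * M ∧ 12 ∣ p.1 - p.2}.ncard := by
  have hform (u v : ℤ) :
      24 * principalForm (u, v) = (u + 12 * v) ^ 2 + 23 * u ^ 2 := by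
    rw [principalForm]; ring
  have hinj : Injective fun p : ℤ × ℤ => (p.1 + 12 * p.2, p.1) := fun p q h => by
    simp only [Prod.mk.injEq] at h
    ext <;> omega
  rw [← Set.ncard_image_of_injective _ hinj]
  congr 1
  ext ⟨x, y⟩
  constructor
  · rintro ⟨⟨u, v⟩, rfl, huv⟩
    simp only [Prod.mk.injEq] at huv
    obtain ⟨rfl, rfl⟩ := huv
    exact ⟨(hform u v).symm, by omega⟩
  · rintro ⟨h, v, hv⟩
    obtain rfl : x = y + 12 * v := by omega
    exact ⟨(y, v), by have := hform y v; dsimp only at h ⊢; rw [Set.mem_ofPred_eq]; linarith, rfl⟩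

lemma ncard_nonprincipalForm_eq_ncard_twelve_dvd (M : ℤ) :
    {p | nonprincipalForm p = M}.ncard =
      {p : ℤ × ℤ | p.1 ^ 2 + 23 * p.2 ^ 2 = 24 * M ∧ 12 ∣ p.1 - 5 * p.2}.ncard := by
  have hform (u v : ℤ) :
      24 * nonprincipalForm (u, v) = (5 * u + 7 * v) ^ 2 + 23 * (u - v) ^ 2 := by
    rw [nonprincipalForm]; ring
  have hinj : Injective fun p : ℤ × ℤ => (5 * p.1 + 7 * p.2, p.1 - p.2) := fun p q h => by
    simp only [Prod.mk.injEq] at h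
    ext <;> omega
  rw [← Set.ncard_image_of_injective _ hinj]
  congr 1
  ext ⟨x, y⟩
  constructor
  · rintro ⟨⟨u, v⟩, rfl, huv⟩
    simp only [Prod.mk.injEq] at huv
    obtain ⟨rfl, rfl⟩ := huv
    exact ⟨(hform u v).symm, by omega⟩
  · rintro ⟨h, v, hv⟩
    obtain rfl : x = 5 * (y + v) + 7 * v := by omega
    refine ⟨(y + v, v), ?_, by simp⟩
    have := hform (y + v) v
    simp only [add_sub_cancel_right] at this
    dsimp only at h
    rw [Set.mem_ofPred_eq]
    linarith

-- Up to changing the sign of `b`, pairs of integers prime to `6` satisfy `4 ∣ a - b`, and then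
-- `a ≡ b` or `a ≡ 5b` mod `12`.
lemma ncard_twelve_dvd_coprimeSix (M : ℤ) :
    {p : ℤ × ℤ | (p.1 ^ 2 + 23 * p.2 ^ 2 = 24 * M ∧ 12 ∣ p.1 - p.2) ∧ CoprimeSix p}.ncard +
      {p : ℤ × ℤ | (p.1 ^ 2 + 23 * p.2 ^ 2 = 24 * M ∧ 12 ∣ p.1 - 5 * p.2) ∧ CoprimeSix p}.ncard =
      2 * {p : ℤ × ℤ | (6 * p.1 - 1) ^ 2 + 23 * (6 * p.2 - 1) ^ 2 = 24 * M}.ncard := by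
  have hfin : {p : ℤ × ℤ | p.1 ^ 2 + 23 * p.2 ^ 2 = 24 * M}.Finite := by
    simpa using finite_setOf_mul_sq_add_mul_sq_eq one_pos (by simp : (0 : ℤ) < 23) (24 * M)
  have hflip : {p : ℤ × ℤ | p.1 ^ 2 + 23 * p.2 ^ 2 = 24 * M ∧ CoprimeSix p}.ncard =
      2 * {p : ℤ × ℤ | (p.1 ^ 2 + 23 * p.2 ^ 2 = 24 * M ∧ CoprimeSix p) ∧ 4 ∣ p.1 - p.2}.ncard := by
    refine ncard_eq_two_mul_of_involutive negSnd_involutive ?_ ?_ <;> rintro ⟨x, y⟩ ⟨h, hx, hy⟩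
    · exact ⟨by simpa using h, hx, by omega⟩
    · omega
  have hunion : {p : ℤ × ℤ | (p.1 ^ 2 + 23 * p.2 ^ 2 = 24 * M ∧ CoprimeSix p) ∧ 4 ∣ p.1 - p.2} =
      {p | (p.1 ^ 2 + 23 * p.2 ^ 2 = 24 * M ∧ 12 ∣ p.1 - p.2) ∧ CoprimeSix p} ∪
      {p | (p.1 ^ 2 + 23 * p.2 ^ 2 = 24 * M ∧ 12 ∣ p.1 - 5 * p.2) ∧ CoprimeSix p} := by
    ext ⟨x, y⟩
    simp only [CoprimeSix, Set.mem_ofPred_eq, Set.mem_union]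
    constructor
    · rintro ⟨⟨h, hp⟩, hxy⟩
      have : 3 ∣ x - y ∨ 3 ∣ x - 5 * y := by
        have hx3 : x % 3 = 1 ∨ x % 3 = 2 := by omega
        have hy3 : y % 3 = 1 ∨ y % 3 = 2 := by omega
        rcases hx3 with hx3 | hx3 <;> rcases hy3 with hy3 | hy3 <;> omega
      exact this.imp (fun _ => ⟨⟨h, by omega⟩, hp⟩) fun _ => ⟨⟨h, by omega⟩, hp⟩
    · rintro (⟨⟨h, hxy⟩, hp⟩ | ⟨⟨h, hxy⟩, hp⟩) <;> exact ⟨⟨h, hp⟩, by omega⟩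
  rw [← Set.ncard_union_eq ?_ (hfin.subset fun p hp => hp.1.1) (hfin.subset fun p hp => hp.1.1),
    ← hunion]
  · have := ncard_coprime_six_pairs 23 (24 * M)
    omega
  · rw [Set.disjoint_left]
    rintro ⟨x, y⟩ ⟨⟨-, h⟩, hx, hy⟩ ⟨⟨-, h'⟩, -⟩
    omega

lemma ncard_twelve_dvd_not_coprimeSix (M : ℤ) :
    {p : ℤ × ℤ | (p.1 ^ 2 + 23 * p.2 ^ 2 = 24 * M ∧ 12 ∣ p.1 - p.2) ∧ ¬ CoprimeSix p}.ncard =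
      {p : ℤ × ℤ |
        (p.1 ^ 2 + 23 * p.2 ^ 2 = 24 * M ∧ 12 ∣ p.1 - 5 * p.2) ∧ ¬ CoprimeSix p}.ncard := by
  let φ : ℤ × ℤ → ℤ × ℤ := fun p => (p.1, if p.2 % 2 = 0 then -p.2 else p.2)
  have hφ : φ.Involutive := by
    refine fun p => Prod.ext rfl ?_
    dsimp only [φ]
    split_ifs <;> omega
  have hφsq (p : ℤ × ℤ) : (φ p).2 ^ 2 = p.2 ^ 2 := by
    dsimp only [φ]; split_ifs <;> ring
  rw [← Set.ncard_image_of_injective _ hφ.injective, hφ.image_eq_preimage_symm]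
  congr 1
  ext ⟨x, y⟩
  simp only [Set.mem_preimage, Set.mem_ofPred_eq, hφsq, CoprimeSix]
  dsimp only [φ]
  split_ifs with hy
  all_goals
    constructor <;> rintro ⟨⟨h, hxy⟩, hp⟩ <;> exact ⟨⟨h, by omega⟩, by omega⟩

lemma ncard_principalForm_add_ncard_nonprincipalForm_modEq {M : ℤ} (hM : M ≠ 0) :
    {p | principalForm p = M}.ncard + {p | nonprincipalForm p = M}.ncard ≡
      2 * {p : ℤ × ℤ | (6 * p.1 - 1) ^ 2 + 23 * (6 * p.2 - 1) ^ 2 = 24 * M}.ncard [MOD 4] := by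
  have hfin : {p : ℤ × ℤ | p.1 ^ 2 + 23 * p.2 ^ 2 = 24 * M}.Finite := by
    simpa using finite_setOf_mul_sq_add_mul_sq_eq one_pos (by simp : (0 : ℤ) < 23) (24 * M)
  have hone := ncard_setOf_add_ncard_setOf_not
    (S := {p : ℤ × ℤ | p.1 ^ 2 + 23 * p.2 ^ 2 = 24 * M ∧ 12 ∣ p.1 - p.2})
    (hfin.subset fun p hp => hp.1) CoprimeSix
  have hfive := ncard_setOf_add_ncard_setOf_not
    (S := {p : ℤ × ℤ | p.1 ^ 2 + 23 * p.2 ^ 2 = 24 * M ∧ 12 ∣ p.1 - 5 * p.2})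
    (hfin.subset fun p hp => hp.1) CoprimeSix
  obtain ⟨c, hc⟩ : Even {p : ℤ × ℤ |
      (p.1 ^ 2 + 23 * p.2 ^ 2 = 24 * M ∧ 12 ∣ p.1 - p.2) ∧ ¬ CoprimeSix p}.ncard := by
    refine even_ncard_of_neg_mem ?_ ?_
    · rintro ⟨x, y⟩ ⟨⟨h, hxy⟩, hp⟩
      exact ⟨⟨by simpa using h, by simp only [Prod.fst_neg, Prod.snd_neg]; omega⟩,
        by simp only [CoprimeSix, Prod.fst_neg, Prod.snd_neg] at hp ⊢; omega⟩
    · rintro ⟨⟨h, -⟩, -⟩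
      exact hM (by simpa using h.symm)
  have hcoprime := ncard_twelve_dvd_coprimeSix M
  have hswap := ncard_twelve_dvd_not_coprimeSix M
  rw [ncard_principalForm_eq_ncard_twelve_dvd, ncard_nonprincipalForm_eq_ncard_twelve_dvd]
  simp only [Nat.ModEq, Set.mem_ofPred_eq] at *
  omega

/-! ### Generating series -/

section CountSeries

open PowerSeries

/-- A weight function with finitely many elements of each weight. -/
def FiniteFibres {ι : Type*} (w : ι → ℕ) : Prop :=
  ∀ n, {i | w i = n}.Finite

/-- The generating series `∑ᵢ X ^ w i` of a weight function, with coefficients in `R`. The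
coefficients are cardinalities in the sense of `Set.ncard`, so infinite fibres count as `0`. -/
noncomputable def countSeries (R : Type*) [CommSemiring R] {ι : Type*} (w : ι → ℕ) : R⟦X⟧ :=
  mk fun n => ({i | w i = n}.ncard : R)

variable {R : Type*} {ι κ : Type*}

lemma FiniteFibres.of_injective {w : ι → ℕ} (hw : w.Injective) : FiniteFibres w := fun _ =>
  Set.Subsingleton.finite fun _ hi _ hj => hw (hi.trans hj.symm)

lemma FiniteFibres.comp_injective {w : ι → ℕ} (hw : FiniteFibres w) {f : κ → ι}
    (hf : f.Injective) : FiniteFibres (w ∘ f) := fun n =>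
  (hw n).preimage hf.injOn

lemma FiniteFibres.const_mul {w : ι → ℕ} (hw : FiniteFibres w) {k : ℕ} (hk : k ≠ 0) :
    FiniteFibres fun i => k * w i := fun n =>
  (hw (n / k)).subset fun _ hi => by
    simp only [Set.mem_ofPred_eq] at hi ⊢
    rw [← hi, Nat.mul_div_cancel_left _ (Nat.pos_of_ne_zero hk)]

lemma FiniteFibres.add {v : ι → ℕ} {w : κ → ℕ} (hv : FiniteFibres v) (hw : FiniteFibres w) :
    FiniteFibres fun p : ι × κ => v p.1 + w p.2 := by
  intro n
  refine ((Finset.finite_toSet (Finset.HasAntidiagonal.antidiagonal n)).biUnion fun b _ =>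
    (hv b.1).prod (hw b.2)).subset ?_
  rintro ⟨i, j⟩ h
  simp only [Set.mem_iUnion]
  exact ⟨(v i, w j), by simpa using h, by simp⟩

lemma sum_comp_eq_add_comp_consEquiv_symm (w : ι → ℕ) (t : ℕ) :
    (fun f : Fin (t + 1) → ι => ∑ i, w (f i)) =
      (fun p : ι × (Fin t → ι) => w p.1 + ∑ i, w (p.2 i)) ∘
        (Fin.consEquiv fun _ => ι).symm :=
  funext fun _ => Fin.sum_univ_succ _

lemma FiniteFibres.sum_comp {w : ι → ℕ} (hw : FiniteFibres w) (t : ℕ) :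
    FiniteFibres fun f : Fin t → ι => ∑ i, w (f i) := by
  induction t with
  | zero => exact fun n => Set.toFinite _
  | succ t ih =>
    rw [sum_comp_eq_add_comp_consEquiv_symm]
    exact (hw.add ih).comp_injective (Equiv.injective _)

variable [CommSemiring R]

lemma coeff_countSeries (w : ι → ℕ) (n : ℕ) :
    coeff n (countSeries R w) = ({i | w i = n}.ncard : R) :=
  coeff_mk _ _

lemma map_countSeries {S : Type*} [CommSemiring S] (f : R →+* S) (w : ι → ℕ) :
    map f (countSeries R w) = countSeries S w := by
  ext n
  simp only [coeff_map, coeff_countSeries, map_natCast]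

lemma countSeries_comp_equiv (w : ι → ℕ) (e : κ ≃ ι) :
    countSeries R (w ∘ e) = countSeries R w := by
  ext n
  simp only [coeff_countSeries]
  rw [← Set.ncard_image_of_injective _ e.injective]
  congr 2
  ext i
  simp

lemma countSeries_mul_countSeries {v : ι → ℕ} {w : κ → ℕ} (hv : FiniteFibres v)
    (hw : FiniteFibres w) :
    countSeries R v * countSeries R w = countSeries R fun p : ι × κ => v p.1 + w p.2 := by
  classical
  ext n
  have hmaps : ∀ p ∈ (hv.add hw n).toFinset,
      (v p.1, w p.2) ∈ Finset.HasAntidiagonal.antidiagonal n := by simp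
  rw [coeff_mul, coeff_countSeries, Set.ncard_eq_toFinset_card _ (hv.add hw n),
    Finset.card_eq_sum_card_fiberwise hmaps]
  push_cast
  refine Finset.sum_congr rfl fun b hb => ?_
  rw [coeff_countSeries, coeff_countSeries, ← Nat.cast_mul, ← Set.ncard_prod,
    ← Set.ncard_coe_finset]
  congr 2
  ext ⟨i, j⟩
  simp only [Finset.HasAntidiagonal.mem_antidiagonal] at hb
  simp only [Set.mem_prod, Set.mem_ofPred_eq, Finset.coe_filter, Set.Finite.mem_toFinset,
    Prod.ext_iff]
  exact ⟨fun h => ⟨by omega, h⟩, And.right⟩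

lemma X_pow_mul_countSeries (k : ℕ) (w : ι → ℕ) :
    X ^ k * countSeries R w = countSeries R fun i => w i + k := by
  ext n
  simp only [coeff_X_pow_mul', coeff_countSeries]
  split_ifs with hkn
  · congr 2
    ext i
    simp only [Set.mem_ofPred_eq]
    omega
  · rw [Set.eq_empty_of_forall_notMem (s := {i | w i + k = n}), Set.ncard_empty, Nat.cast_zero]
    intro i hi
    simp only [Set.mem_ofPred_eq] at hi
    omega

lemma countSeries_pow {w : ι → ℕ} (hw : FiniteFibres w) (t : ℕ) :
    countSeries R w ^ t = countSeries R fun f : Fin t → ι => ∑ i, w (f i) := by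
  induction t with
  | zero =>
    ext n
    rw [coeff_countSeries, pow_zero, coeff_one]
    rcases eq_or_ne n 0 with rfl | hn
    · simp
    · simp [hn, hn.symm]
  | succ t ih =>
    rw [sum_comp_eq_add_comp_consEquiv_symm, countSeries_comp_equiv,
      ← countSeries_mul_countSeries hw (hw.sum_comp t), ← ih, pow_succ']

end CountSeries

section Expand

open PowerSeries

variable {R : Type*} [CommRing R] {ι : Type*}

lemma expand_countSeries (k : ℕ) (hk : k ≠ 0) (w : ι → ℕ) :
    expand k hk (countSeries R w) = countSeries R fun i => k * w i := by
  ext n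
  by_cases h : k ∣ n
  · obtain ⟨m, rfl⟩ := h
    simp only [coeff_expand_mul, coeff_countSeries, Nat.mul_right_inj hk]
  · rw [coeff_expand_of_not_dvd _ _ _ h, coeff_countSeries,
      Set.eq_empty_of_forall_notMem (s := {i | k * w i = n}), Set.ncard_empty, Nat.cast_zero]
    rintro i rfl
    exact h (dvd_mul_right _ _)

lemma countSeries_pentagonal : countSeries (ZMod 2) pentagonal = pentagonalSeries (ZMod 2) := by
  ext n
  rw [coeff_countSeries]
  by_cases h : n ∈ Set.range pentagonal
  · obtain ⟨k, rfl⟩ := h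
    have hsign (u : ℤˣ) : ((u : ℤ) : ZMod 2) = 1 := by
      rcases Int.units_eq_one_or u with rfl | rfl <;> decide
    simp [coeff_pentagonalSeries_pentagonal, pentagonal_injective.eq_iff, hsign]
  · rw [coeff_pentagonalSeries_eq_zero _ h,
      Set.eq_empty_of_forall_notMem (s := {i | pentagonal i = n}), Set.ncard_empty, Nat.cast_zero]
    exact fun i hi => h ⟨i, hi⟩

end Expand

section ThetaSeries

open PowerSeries

lemma principalForm_eq_zero_iff {p : ℤ × ℤ} : principalForm p = 0 ↔ p = 0 := by
  constructor
  · intro h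
    have hsq := four_mul_principalForm p
    have hsnd : p.2 = 0 := by nlinarith [sq_nonneg (2 * p.1 + p.2)]
    have hfst : p.1 = 0 := by simpa [principalForm, hsnd] using h
    exact Prod.ext hfst hsnd
  · rintro rfl
    rfl

lemma nonprincipalForm_eq_zero_iff {p : ℤ × ℤ} : nonprincipalForm p = 0 ↔ p = 0 := by
  constructor
  · intro h
    have hsq := eight_mul_nonprincipalForm p
    have hsnd : p.2 = 0 := by nlinarith [sq_nonneg (4 * p.1 + p.2)]
    have hfst : p.1 = 0 := by simpa [nonprincipalForm, hsnd] using h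
    exact Prod.ext hfst hsnd
  · rintro rfl
    rfl

lemma natAbs_principalForm_eq_iff {p : ℤ × ℤ} {M : ℕ} :
    (principalForm p).natAbs = M ↔ principalForm p = M := by
  have hnonneg : 0 ≤ principalForm p := by
    nlinarith [four_mul_principalForm p, sq_nonneg (2 * p.1 + p.2), sq_nonneg p.2]
  omega

lemma natAbs_nonprincipalForm_eq_iff {p : ℤ × ℤ} {M : ℕ} :
    (nonprincipalForm p).natAbs = M ↔ nonprincipalForm p = M := by
  have hnonneg : 0 ≤ nonprincipalForm p := by
    nlinarith [eight_mul_nonprincipalForm p, sq_nonneg (4 * p.1 + p.2), sq_nonneg p.2]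
  omega

lemma coeff_two_mul {R : Type*} [CommSemiring R] (f : R⟦X⟧) (n : ℕ) :
    coeff n (2 * f) = 2 * coeff n f := by
  rw [← map_ofNat C 2, coeff_C_mul]

/-- The theta series `∑ X ^ (u² + uv + 6v²)` of the principal form. -/
noncomputable def principalTheta (R : Type*) [CommSemiring R] : R⟦X⟧ :=
  countSeries R fun p => (principalForm p).natAbs

/-- The theta series `∑ X ^ (2u² + uv + 3v²)` of the non-principal form. -/
noncomputable def nonprincipalTheta (R : Type*) [CommSemiring R] : R⟦X⟧ :=
  countSeries R fun p => (nonprincipalForm p).natAbs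

/-- The triangular numbers `n(n + 1)/2`. -/
def triangular (n : ℕ) : ℕ := n * (n + 1) / 2

/-- The series `∑ X ^ (2n + 1)²` over the natural numbers. -/
noncomputable def oddSquareSeries (R : Type*) [CommSemiring R] : R⟦X⟧ :=
  countSeries R fun n : ℕ => (2 * n + 1) ^ 2

/-- The exponents of `q E(q) E(q²³)`, where `E(q) = ∑ ± q ^ (k(3k - 1)/2)`. -/
def pentagonalPairWeight (p : ℤ × ℤ) : ℕ := pentagonal p.1 + 23 * pentagonal p.2 + 1

/-- The exponents of `q³ E(q)³ E(q²³)³` modulo `2`, by Jacobi's identity for `E(q)³`. -/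
def triangularPairWeight (p : ℕ × ℕ) : ℕ := triangular p.1 + 23 * triangular p.2 + 3

lemma eight_mul_triangular_add_one (n : ℕ) : 8 * triangular n + 1 = (2 * n + 1) ^ 2 := by
  obtain ⟨m, hm⟩ := (Nat.even_mul_succ_self n).two_dvd
  rw [triangular, hm, Nat.mul_div_cancel_left _ two_pos]
  linear_combination 4 * hm.symm

lemma twentyfour_mul_pentagonal_add_one (k : ℤ) :
    24 * (pentagonal k : ℤ) + 1 = (6 * k - 1) ^ 2 := by
  linear_combination 12 * two_mul_natCast_pentagonal k

lemma pentagonalPairWeight_eq_iff {p : ℤ × ℤ} {M : ℕ} :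
    pentagonalPairWeight p = M ↔ (6 * p.1 - 1) ^ 2 + 23 * (6 * p.2 - 1) ^ 2 = 24 * (M : ℤ) := by
  rw [← twentyfour_mul_pentagonal_add_one, ← twentyfour_mul_pentagonal_add_one,
    pentagonalPairWeight]
  omega

lemma triangularPairWeight_eq_iff {p : ℕ × ℕ} {M : ℕ} :
    triangularPairWeight p = M ↔
      (2 * p.1 + 1 : ℤ) ^ 2 + 23 * (2 * p.2 + 1) ^ 2 = 8 * (M : ℤ) := by
  have h₁ := eight_mul_triangular_add_one p.1
  have h₂ := eight_mul_triangular_add_one p.2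
  zify at h₁ h₂
  rw [← h₁, ← h₂, triangularPairWeight]
  omega

lemma coeff_principalTheta (R : Type*) [CommSemiring R] (M : ℕ) :
    coeff M (principalTheta R) = ({p | principalForm p = M}.ncard : R) := by
  simp only [principalTheta, coeff_countSeries, natAbs_principalForm_eq_iff]

lemma coeff_nonprincipalTheta (R : Type*) [CommSemiring R] (M : ℕ) :
    coeff M (nonprincipalTheta R) = ({p | nonprincipalForm p = M}.ncard : R) := by
  simp only [nonprincipalTheta, coeff_countSeries, natAbs_nonprincipalForm_eq_iff]

lemma coeff_expand_principalTheta (R : Type*) [CommRing R] {k : ℕ} (hk : k ≠ 0) (M : ℕ) :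
    coeff M (expand k hk (principalTheta R)) = ({p | k * principalForm p = M}.ncard : R) := by
  have hiff (p : ℤ × ℤ) : k * (principalForm p).natAbs = M ↔ k * principalForm p = M := by
    rw [natAbs_principalForm_eq_iff.1 (rfl : (principalForm p).natAbs = _)]
    norm_cast
  simp only [principalTheta, expand_countSeries, coeff_countSeries, hiff]

lemma coeff_countSeries_pentagonalPairWeight (R : Type*) [CommSemiring R] (M : ℕ) :
    coeff M (countSeries R pentagonalPairWeight) =
      ({p : ℤ × ℤ | (6 * p.1 - 1) ^ 2 + 23 * (6 * p.2 - 1) ^ 2 = 24 * (M : ℤ)}.ncard : R) := by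
  simp only [coeff_countSeries, pentagonalPairWeight_eq_iff]

lemma coeff_countSeries_triangularPairWeight (R : Type*) [CommSemiring R] (M : ℕ) :
    coeff M (countSeries R triangularPairWeight) =
      ({p : ℕ × ℕ | (2 * p.1 + 1 : ℤ) ^ 2 + 23 * (2 * p.2 + 1) ^ 2 = 8 * (M : ℤ)}.ncard : R) := by
  simp only [coeff_countSeries, triangularPairWeight_eq_iff]

lemma coeff_oddSquareSeries (R : Type*) [CommSemiring R] (M : ℕ) :
    coeff M (oddSquareSeries R) = ({n : ℕ | (2 * n + 1 : ℤ) ^ 2 = M}.ncard : R) := by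
  simp only [oddSquareSeries, coeff_countSeries]
  norm_cast

lemma coeff_expand_oddSquareSeries (R : Type*) [CommRing R] {k : ℕ} (hk : k ≠ 0) (M : ℕ) :
    coeff M (expand k hk (oddSquareSeries R)) =
      ({n : ℕ | k * (2 * n + 1 : ℤ) ^ 2 = M}.ncard : R) := by
  simp only [oddSquareSeries, expand_countSeries, coeff_countSeries]
  norm_cast

lemma nonprincipalTheta_eq (R : Type*) [CommRing R] :
    nonprincipalTheta R =
      2 * countSeries R triangularPairWeight + expand 2 two_ne_zero (principalTheta R) := by
  ext M
  have h := congrArg (Nat.cast : ℕ → R) (ncard_nonprincipalForm M)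
  push_cast at h
  rw [map_add, coeff_two_mul, coeff_nonprincipalTheta, coeff_countSeries_triangularPairWeight,
    coeff_expand_principalTheta]
  exact_mod_cast h

lemma principalTheta_add_nonprincipalTheta :
    principalTheta (ZMod 4) + nonprincipalTheta (ZMod 4) =
      2 + 2 * countSeries (ZMod 4) pentagonalPairWeight := by
  ext M
  rw [map_add, map_add, coeff_two_mul, coeff_principalTheta, coeff_nonprincipalTheta,
    ← map_ofNat C 2, coeff_C]
  rcases eq_or_ne M 0 with rfl | hM
  · simp [coeff_countSeries, pentagonalPairWeight, principalForm_eq_zero_iff,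
      nonprincipalForm_eq_zero_iff, one_add_one_eq_two]
  · rw [if_neg hM, zero_add, coeff_countSeries_pentagonalPairWeight]
    exact_mod_cast (ZMod.natCast_eq_natCast_iff _ _ 4).2
      (ncard_principalForm_add_ncard_nonprincipalForm_modEq (Int.natCast_ne_zero.2 hM))

lemma principalTheta_eq :
    principalTheta (ZMod 4) = expand 4 four_ne_zero (principalTheta (ZMod 4)) +
      2 * (oddSquareSeries (ZMod 4) + expand 23 (by simp) (oddSquareSeries (ZMod 4))) := by
  ext M
  rw [map_add, coeff_two_mul, map_add, coeff_principalTheta,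
    coeff_expand_principalTheta, coeff_oddSquareSeries, coeff_expand_oddSquareSeries]
  rcases eq_or_ne M 0 with rfl | hM
  · have hodd (n : ℕ) : (2 * n + 1 : ℤ) ≠ 0 := by omega
    simp [hodd]
  · exact_mod_cast (ZMod.natCast_eq_natCast_iff _ _ 4).2
      (ncard_principalForm_modEq (Int.natCast_ne_zero.2 hM))

lemma two_mul_nonprincipalTheta : 2 * nonprincipalTheta (ZMod 4) = 2 := by
  ext M
  rw [coeff_two_mul, coeff_nonprincipalTheta, ← map_ofNat C 2, coeff_C]
  rcases eq_or_ne M 0 with rfl | hM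
  · simp [nonprincipalForm_eq_zero_iff]
  · obtain ⟨r, hr⟩ := even_ncard_nonprincipalForm (Int.natCast_ne_zero.2 hM)
    rw [if_neg hM, hr, ← two_mul, Nat.cast_mul, ← mul_assoc,
      show (2 * (2 : ℕ) : ZMod 4) = 0 from rfl, zero_mul]

lemma map_castHom_eq_of_two_mul_eq {f g : (ZMod 4)⟦X⟧} (h : 2 * f = 2 * g) :
    map (ZMod.castHom (by decide : 2 ∣ 4) (ZMod 2)) f =
      map (ZMod.castHom (by decide) (ZMod 2)) g := by
  have hcoeff : ∀ a b : ZMod 4, 2 * a = 2 * b →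
      ZMod.castHom (by decide : 2 ∣ 4) (ZMod 2) a = ZMod.castHom (by decide) (ZMod 2) b := by decide
  ext n
  rw [coeff_map, coeff_map]
  apply hcoeff
  have hn := congrArg (coeff n) h
  rwa [coeff_two_mul, coeff_two_mul] at hn

lemma countSeries_add_expand_eq_oddSquareSeries :
    countSeries (ZMod 2) pentagonalPairWeight + countSeries (ZMod 2) triangularPairWeight +
        expand 2 two_ne_zero
          (countSeries (ZMod 2) pentagonalPairWeight + countSeries (ZMod 2) triangularPairWeight) =
      oddSquareSeries (ZMod 2) + expand 23 (by simp) (oddSquareSeries (ZMod 2)) := by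
  set θ := principalTheta (ZMod 4)
  set f := countSeries (ZMod 4) pentagonalPairWeight + countSeries (ZMod 4) triangularPairWeight
    with hf
  have hstep : 2 * f = θ - expand 2 two_ne_zero θ := by
    linear_combination 2 * hf + two_mul_nonprincipalTheta - principalTheta_add_nonprincipalTheta -
      nonprincipalTheta_eq (ZMod 4)
  have hstep' : 2 * expand 2 two_ne_zero f = expand 2 two_ne_zero θ - expand 4 four_ne_zero θ := by
    have h := congrArg (expand 2 two_ne_zero) hstep
    rwa [map_mul, map_ofNat, map_sub, ← expand_mul] at h
  have htwo : 2 * (f + expand 2 two_ne_zero f) =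
      2 * (oddSquareSeries (ZMod 4) + expand 23 (by simp) (oddSquareSeries (ZMod 4))) := by
    linear_combination hstep + hstep' + principalTheta_eq
  simpa only [hf, oddSquareSeries, map_add, map_expand, map_countSeries] using
    map_castHom_eq_of_two_mul_eq htwo

end ThetaSeries

/-! ### The modular equation of degree `23` -/

section DegreeTwentyThree

open PowerSeries

lemma sq_eq_expand_two (f : (ZMod 2)⟦X⟧) : f ^ 2 = expand 2 two_ne_zero f := by
  have h := MvPowerSeries.map_frobenius_expand 2 two_ne_zero (f := f)
  rw [ZMod.frobenius_zmod, MvPowerSeries.map_id] at h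
  exact h.symm

lemma pow_two_pow_eq_expand (f : (ZMod 2)⟦X⟧) (k : ℕ) :
    f ^ 2 ^ k = expand (2 ^ k) (by positivity) f := by
  induction k with
  | zero => simp
  | succ k ih =>
    simp only [pow_succ' 2 k, expand_mul 2 two_ne_zero (2 ^ k) (by positivity), ← ih,
      ← sq_eq_expand_two, ← pow_mul, mul_comm]

lemma pentagonalSeries_pow_three :
    pentagonalSeries (ZMod 2) ^ 3 = countSeries (ZMod 2) triangular := by
  have hfin : FiniteFibres pentagonal := .of_injective pentagonal_injective
  rw [pow_succ', sq_eq_expand_two, ← countSeries_pentagonal, expand_countSeries,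
    countSeries_mul_countSeries hfin (hfin.const_mul two_ne_zero)]
  ext N
  have hpent (p : ℤ × ℤ) : pentagonal p.1 + 2 * pentagonal p.2 = N ↔
      (6 * p.1 - 1) ^ 2 + 2 * (6 * p.2 - 1) ^ 2 = 24 * (N : ℤ) + 3 := by
    rw [← twentyfour_mul_pentagonal_add_one, ← twentyfour_mul_pentagonal_add_one]
    omega
  have htri (n : ℕ) : triangular n = N ↔ (2 * n + 1 : ℤ) ^ 2 = 8 * N + 1 := by
    have h := eight_mul_triangular_add_one n
    zify at h
    rw [← h]
    omega
  simp only [coeff_countSeries, hpent, htri]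
  exact (ZMod.natCast_eq_natCast_iff _ _ 2).2 (ncard_six_mul_sub_one_sq_add_two_mul_modEq N)

lemma triangular_injective : Injective triangular := by
  intro m n h
  have hsq := (eight_mul_triangular_add_one m).symm.trans (h ▸ eight_mul_triangular_add_one n)
  have := Nat.pow_left_injective two_ne_zero hsq
  omega

lemma countSeries_pentagonalPairWeight :
    countSeries (ZMod 2) pentagonalPairWeight =
      X * pentagonalSeries (ZMod 2) * expand 23 (by simp) (pentagonalSeries (ZMod 2)) := by
  have hfin : FiniteFibres pentagonal := .of_injective pentagonal_injective
  rw [← countSeries_pentagonal, expand_countSeries, mul_assoc,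
    countSeries_mul_countSeries hfin (hfin.const_mul (by simp)), ← pow_one X,
    X_pow_mul_countSeries]
  rfl

lemma countSeries_triangularPairWeight :
    countSeries (ZMod 2) triangularPairWeight =
      (X * pentagonalSeries (ZMod 2) * expand 23 (by simp) (pentagonalSeries (ZMod 2))) ^ 3 := by
  have hfin : FiniteFibres triangular := .of_injective triangular_injective
  rw [mul_pow, mul_pow, ← map_pow, pentagonalSeries_pow_three, expand_countSeries, mul_assoc,
    countSeries_mul_countSeries hfin (hfin.const_mul (by simp)), X_pow_mul_countSeries]
  rfl

lemma oddSquareSeries_eq : oddSquareSeries (ZMod 2) = X * pentagonalSeries (ZMod 2) ^ 24 := by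
  rw [show 24 = 3 * 2 ^ 3 from rfl, pow_mul, pow_two_pow_eq_expand, pentagonalSeries_pow_three,
    expand_countSeries, ← pow_one X, X_pow_mul_countSeries]
  simp only [oddSquareSeries, ← eight_mul_triangular_add_one]
  rfl

lemma modularEquation_pentagonalSeries {E E₂₃ : (ZMod 2)⟦X⟧} (hE : E = pentagonalSeries (ZMod 2))
    (hE₂₃ : E₂₃ = expand 23 (by simp) E) :
    X * E ^ 24 + X ^ 23 * E₂₃ ^ 24 =
      X * E * E₂₃ + (X * E * E₂₃) ^ 2 + (X * E * E₂₃) ^ 3 + (X * E * E₂₃) ^ 6 := by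
  subst hE hE₂₃
  have h := countSeries_add_expand_eq_oddSquareSeries
  rw [countSeries_pentagonalPairWeight, countSeries_triangularPairWeight, oddSquareSeries_eq,
    map_add, ← sq_eq_expand_two, ← sq_eq_expand_two, map_mul, map_pow, expand_X] at h
  linear_combination -h

/-- The modular equation of degree `23` relating `P(q)` and `W = P(q²³)`. -/
def SatisfiesModularEquation {R : Type*} [CommSemiring R] (P W : R⟦X⟧) : Prop :=
  X ^ 23 * P ^ 24 + X * W ^ 24 =
    X * (P * W) ^ 23 + X ^ 2 * (P * W) ^ 22 + X ^ 3 * (P * W) ^ 21 + X ^ 6 * (P * W) ^ 18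

theorem satisfiesModularEquation_of_pentagonalSeries_mul_eq_one {P : (ZMod 2)⟦X⟧}
    (hP : pentagonalSeries (ZMod 2) * P = 1) :
    SatisfiesModularEquation P (expand 23 (by simp) P) := by
  set W := expand 23 (by simp) P with hW
  set E := pentagonalSeries (ZMod 2) with hE
  set E₂₃ := expand 23 (by simp) E with hE₂₃
  have hEW : E₂₃ * W = 1 := by rw [hW, hE₂₃, ← map_mul, hP, map_one]
  have hleft : (X * E ^ 24 + X ^ 23 * E₂₃ ^ 24) * (P * W) ^ 24 =
      X * W ^ 24 * (E * P) ^ 24 + X ^ 23 * P ^ 24 * (E₂₃ * W) ^ 24 := by ring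
  have hterm (k l : ℕ) (hkl : k + l = 24) :
      (X * E * E₂₃) ^ k * (P * W) ^ 24 = X ^ k * (P * W) ^ l := by
    calc (X * E * E₂₃) ^ k * (P * W) ^ 24
        = X ^ k * (P * W) ^ l * ((E * P) * (E₂₃ * W)) ^ k := by rw [← hkl]; ring
      _ = X ^ k * (P * W) ^ l := by rw [hP, hEW, one_mul, one_pow, mul_one]
  have h := congrArg (· * (P * W) ^ 24) (modularEquation_pentagonalSeries hE hE₂₃)
  simp only [hleft, hP, hEW, one_pow, mul_one] at h
  rw [SatisfiesModularEquation]
  linear_combination h + hterm 1 23 rfl + hterm 2 22 rfl + hterm 3 21 rfl + hterm 6 18 rfl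

end DegreeTwentyThree

/-! ### The trace of a root -/

section Trace

open Polynomial in
lemma sum_eq_neg_nextCoeff_of_isRoot {A : Type*} [CommRing A] [IsDomain A] {ι : Type*} [Fintype ι]
    {f : A[X]} (hf : f.Monic) (hdeg : f.natDegree = Fintype.card ι) {r : ι → A}
    (hr : Injective r) (hroot : ∀ i, f.IsRoot (r i)) : ∑ i, r i = -f.nextCoeff := by
  have hroots : f.roots = Finset.univ.val.map r := by
    have h := roots_eq_of_natDegree_le_card_of_ne_zero (S := Finset.univ.map ⟨r, hr⟩)
      (by simpa using hroot) (by simp [hdeg]) hf.ne_zero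
    simpa using h
  have hsplit : f.Splits := splits_iff_card_roots.2 (by simp [hroots, hdeg])
  rw [hsplit.nextCoeff_eq_neg_sum_roots_of_monic hf, neg_neg, hroots]
  rfl

open Polynomial in
/-- The polynomial `T²⁴ + z²²w²⁴ - (wT)²³ - z(wT)²² - z²(wT)²¹ - z⁵(wT)¹⁸`. Dividing the modular
equation by `X` shows that `X²² P` is a root of it for `z = X²³` and `w = P(X²³)`, where `P` is the
reciprocal of the pentagonal series modulo `2`. -/
noncomputable def modularPolynomial {A : Type*} [CommRing A] (z w : A) : A[X] :=
  X ^ 24 + C (z ^ 22 * w ^ 24) - C (w ^ 23) * X ^ 23 - C (z * w ^ 22) * X ^ 22 -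
    C (z ^ 2 * w ^ 21) * X ^ 21 - C (z ^ 5 * w ^ 18) * X ^ 18

open Polynomial in
lemma eval_modularPolynomial {A : Type*} [CommRing A] (z w t : A) :
    (modularPolynomial z w).eval t = t ^ 24 + z ^ 22 * w ^ 24 - w ^ 23 * t ^ 23 -
      z * w ^ 22 * t ^ 22 - z ^ 2 * w ^ 21 * t ^ 21 - z ^ 5 * w ^ 18 * t ^ 18 := by
  simp [modularPolynomial]

lemma natDegree_modularPolynomial {A : Type*} [CommRing A] [Nontrivial A] (z w : A) :
    (modularPolynomial z w).natDegree = 24 := by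
  rw [modularPolynomial]
  compute_degree!

lemma monic_modularPolynomial {A : Type*} [CommRing A] (z w : A) :
    (modularPolynomial z w).Monic := by
  rw [modularPolynomial]
  monicity!

lemma nextCoeff_modularPolynomial {A : Type*} [CommRing A] [Nontrivial A] (z w : A) :
    (modularPolynomial z w).nextCoeff = -w ^ 23 := by
  rw [Polynomial.nextCoeff_of_natDegree_pos (by simp [natDegree_modularPolynomial]),
    natDegree_modularPolynomial, modularPolynomial]
  simp [Polynomial.coeff_X_pow, -map_mul, -map_pow]

lemma map_modularPolynomial {A B : Type*} [CommRing A] [CommRing B] (φ : A →+* B) (z w : A) :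
    (modularPolynomial z w).map φ = modularPolynomial (φ z) (φ w) := by
  simp [modularPolynomial]

open PowerSeries

/-- The operator `∑ aₙ Xⁿ ↦ ∑ aₘₙ Xⁿ`, Hecke's `U_m`. -/
noncomputable def dissect {R : Type*} [Semiring R] (m : ℕ) (f : R⟦X⟧) : R⟦X⟧ :=
  mk fun n => coeff (m * n) f

lemma coeff_dissect {R : Type*} [Semiring R] (m : ℕ) (f : R⟦X⟧) (n : ℕ) :
    coeff n (dissect m f) = coeff (m * n) f :=
  coeff_mk _ _

lemma map_dissect {R S : Type*} [Semiring R] [Semiring S] (φ : R →+* S) (m : ℕ) (f : R⟦X⟧) :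
    dissect m (map φ f) = map φ (dissect m f) := by
  ext n
  simp only [coeff_dissect, coeff_map]

lemma dissect_expand_mul {R : Type*} [CommRing R] (m : ℕ) (hm : m ≠ 0) (f g : R⟦X⟧) :
    dissect m (expand m hm f * g) = f * dissect m g := by
  ext n
  rw [coeff_dissect, coeff_mul, coeff_mul]
  symm
  refine Finset.sum_of_injOn (fun p => (m * p.1, m * p.2)) ?_ ?_ ?_ ?_
  · rintro ⟨a, b⟩ _ ⟨c, d⟩ _ h
    simpa [hm] using h
  · rintro ⟨a, b⟩ h
    simp only [Finset.mem_coe, Finset.HasAntidiagonal.mem_antidiagonal] at h ⊢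
    rw [← h, mul_add]
  · rintro ⟨a, b⟩ h hnotMem
    simp only [Finset.HasAntidiagonal.mem_antidiagonal] at h
    rw [coeff_expand_of_not_dvd _ _ _ _, zero_mul]
    rintro ⟨c, rfl⟩
    obtain ⟨d, rfl⟩ : m ∣ b := (Nat.dvd_add_right (dvd_mul_right m c)).1 ⟨n, h⟩
    refine hnotMem ⟨(c, d), ?_, rfl⟩
    rw [← mul_add] at h
    simpa using Nat.eq_of_mul_eq_mul_left (Nat.pos_of_ne_zero hm) h
  · rintro ⟨a, b⟩ _
    simp only [coeff_expand_mul, coeff_dissect]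

lemma sum_rescale_pow {K : Type*} [CommRing K] [IsDomain K] {ζ : K} {m : ℕ} (hm : m ≠ 0)
    (hζ : IsPrimitiveRoot ζ m) (f : K⟦X⟧) :
    ∑ j : Fin m, rescale (ζ ^ (j : ℕ)) f = m • expand m hm (dissect m f) := by
  ext n
  have hsum : coeff n (∑ j : Fin m, rescale (ζ ^ (j : ℕ)) f) =
      (∑ j ∈ Finset.range m, (ζ ^ n) ^ j) * coeff n f := by
    rw [map_sum, Finset.sum_mul, ← Fin.sum_univ_eq_sum_range fun j => (ζ ^ n) ^ j * coeff n f]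
    simp only [coeff_rescale, ← pow_mul, mul_comm]
  rw [hsum, map_nsmul]
  by_cases hn : m ∣ n
  · obtain ⟨k, rfl⟩ := hn
    simp [coeff_expand_mul, coeff_dissect, pow_mul, hζ.pow_eq_one]
  · have hgeom := mul_neg_geom_sum (ζ ^ n) m
    rw [← pow_mul, mul_comm n, pow_mul, hζ.pow_eq_one, one_pow, sub_self] at hgeom
    have hne : 1 - ζ ^ n ≠ 0 := sub_ne_zero.2 fun h => hn (hζ.dvd_of_pow_eq_one _ h.symm)
    rw [(mul_eq_zero.1 hgeom).resolve_left hne, zero_mul, coeff_expand_of_not_dvd _ _ _ hn,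
      smul_zero]

lemma rescale_expand {R : Type*} [CommRing R] {ζ : R} {m : ℕ} (hm : m ≠ 0) (hζ : ζ ^ m = 1)
    (f : R⟦X⟧) : rescale ζ (expand m hm f) = expand m hm f := by
  ext n
  rw [coeff_rescale]
  by_cases hn : m ∣ n
  · obtain ⟨k, rfl⟩ := hn
    rw [pow_mul, hζ, one_pow, one_mul]
  · rw [coeff_expand_of_not_dvd _ _ _ hn, mul_zero]

end Trace

section Conjugates

open PowerSeries

variable {K : Type*} [CommRing K] {P : K⟦X⟧}

lemma SatisfiesModularEquation.map {L : Type*} [CommRing L] (φ : K →+* L) {W : K⟦X⟧}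
    (hPW : SatisfiesModularEquation P W) :
    SatisfiesModularEquation (PowerSeries.map φ P) (PowerSeries.map φ W) := by
  have h := congrArg (PowerSeries.map φ) hPW
  simpa only [SatisfiesModularEquation, map_add, map_mul, map_pow, map_X] using h

lemma SatisfiesModularEquation.isRoot {W : K⟦X⟧} (hPW : SatisfiesModularEquation P W) :
    (modularPolynomial (X ^ 23) W).IsRoot (X ^ 22 * P) := by
  rw [SatisfiesModularEquation] at hPW
  rw [Polynomial.IsRoot.def, eval_modularPolynomial]
  linear_combination X ^ 505 * hPW

lemma SatisfiesModularEquation.isRoot_rescale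
    (hP : SatisfiesModularEquation P (expand 23 (by simp) P)) {ζ : K} (hζ : ζ ^ 23 = 1) :
    (modularPolynomial (X ^ 23) (expand 23 (by simp) P)).IsRoot (rescale ζ (X ^ 22 * P)) := by
  have h := hP.isRoot.map (f := rescale ζ)
  rwa [map_modularPolynomial, rescale_expand (by simp) hζ, map_pow, rescale_X, mul_pow, ← map_pow,
    hζ, map_one, one_mul] at h

lemma SatisfiesModularEquation.isRoot_expand [IsDomain K]
    (hP : SatisfiesModularEquation P (expand 23 (by simp) P)) :
    (modularPolynomial (X ^ 23) (expand 23 (by simp) P)).IsRoot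
      (expand 23 (by simp) (expand 23 (by simp) P)) := by
  have h := congrArg (expand 23 (by simp)) hP
  simp only [map_add, map_mul, map_pow, expand_X] at h
  rw [Polynomial.IsRoot.def, eval_modularPolynomial]
  refine (mul_eq_zero.1 ?_).resolve_left (pow_ne_zero 23 (X_ne_zero (R := K)))
  linear_combination h

/-- The `24` conjugates over `K⟦X²³⟧` of the root `X²² P` of the modular polynomial: the rotations
`X ↦ ζʲ X` of this root, and `P(X⁵²⁹)`. -/
noncomputable def modularRoot (ζ : K) (P : K⟦X⟧) : Option (Fin 23) → K⟦X⟧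
  | none => expand 23 (by simp) (expand 23 (by simp) P)
  | some j => rescale (ζ ^ (j : ℕ)) (X ^ 22 * P)

lemma modularRoot_injective [IsDomain K] {ζ : K} (hζ : IsPrimitiveRoot ζ 23)
    (hP : constantCoeff P = 1) : Injective (modularRoot ζ P) := by
  have hsome (j : Fin 23) : coeff 22 (modularRoot ζ P (some j)) = (ζ ^ 22) ^ (j : ℕ) := by
    rw [modularRoot, coeff_rescale, ← zero_add 22, coeff_X_pow_mul,
      coeff_zero_eq_constantCoeff_apply, hP, mul_one, zero_add, ← pow_mul, ← pow_mul, mul_comm]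
  have hnone : coeff 22 (modularRoot ζ P none) = 0 :=
    coeff_expand_of_not_dvd _ _ _ (by norm_num)
  have hne (j : ℕ) : (ζ ^ 22) ^ j ≠ 0 :=
    pow_ne_zero _ (pow_ne_zero _ (hζ.ne_zero (by simp)))
  have hζ' : IsPrimitiveRoot (ζ ^ 22) 23 := hζ.pow_of_coprime 22 (by norm_num)
  intro a b hab
  have hcoeff := congrArg (coeff 22) hab
  rcases a with _ | a <;> rcases b with _ | b
  · rfl
  · exact absurd (hnone.symm.trans (hcoeff.trans (hsome b))) (hne b).symm
  · exact absurd ((hsome a).symm.trans (hcoeff.trans hnone)) (hne a)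
  · rw [hsome, hsome] at hcoeff
    exact congrArg some (Fin.ext (hζ'.pow_inj a.2 b.2 hcoeff))

lemma SatisfiesModularEquation.smul_dissect_add_expand [IsDomain K]
    (hmod : SatisfiesModularEquation P (expand 23 (by simp) P)) {ζ : K} (hζ : IsPrimitiveRoot ζ 23)
    (hP : constantCoeff P = 1) :
    23 • dissect 23 (X ^ 22 * P) + expand 23 (by simp) P = P ^ 23 := by
  have hroot : ∀ i, (modularPolynomial (X ^ 23) (expand 23 (by simp) P)).IsRoot
      (modularRoot ζ P i)
    | none => hmod.isRoot_expand
    | some j => hmod.isRoot_rescale (by rw [← pow_mul, mul_comm, pow_mul, hζ.pow_eq_one, one_pow])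
  have hsum := sum_eq_neg_nextCoeff_of_isRoot (monic_modularPolynomial _ _)
    (by simp [natDegree_modularPolynomial]) (modularRoot_injective hζ hP) hroot
  simp only [nextCoeff_modularPolynomial, neg_neg, Fintype.sum_option, modularRoot] at hsum
  rw [sum_rescale_pow (by simp) hζ, add_comm, ← map_nsmul, ← map_add, ← map_pow] at hsum
  ext n
  simpa only [coeff_expand_mul] using congrArg (coeff (23 * n)) hsum

end Conjugates

section ModTwo

open PowerSeries

variable {P : (ZMod 2)⟦X⟧}

theorem dissect_X_pow_mul_add_expand (hP : pentagonalSeries (ZMod 2) * P = 1) :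
    dissect 23 (X ^ 22 * P) + expand 23 (by simp) P = P ^ 23 := by
  let φ := algebraMap (ZMod 2) (AlgebraicClosure (ZMod 2))
  have : NeZero ((23 : ℕ) : ZMod 2) := ⟨by decide⟩
  obtain ⟨ζ, hζ⟩ := HasEnoughRootsOfUnity.exists_primitiveRoot (AlgebraicClosure (ZMod 2)) 23
  have hmod := (satisfiesModularEquation_of_pentagonalSeries_mul_eq_one hP).map φ
  rw [map_expand] at hmod
  have hP₀ : constantCoeff (map φ P) = 1 := by
    have h := congrArg (constantCoeff (R := ZMod 2)) hP
    rw [map_mul, map_one] at h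
    have hunit : ∀ a b : ZMod 2, a * b = 1 → b = 1 := by decide
    rw [← coeff_zero_eq_constantCoeff_apply, coeff_map, coeff_zero_eq_constantCoeff_apply,
      hunit _ _ h, map_one]
  have htrace := hmod.smul_dissect_add_expand hζ hP₀
  have htwentyThree : ((23 : ℕ) : (ZMod 2)⟦X⟧) = 1 :=
    congrArg (C (R := ZMod 2)) (show ((23 : ℕ) : ZMod 2) = 1 from rfl)
  apply map_injective φ φ.injective
  rw [← map_X φ, ← map_expand, ← map_pow, ← map_mul, map_dissect, ← map_nsmul, ← map_add,
    ← map_pow, nsmul_eq_mul, htwentyThree, one_mul] at htrace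
  exact htrace

end ModTwo

/-! ### Partitions -/

section Partitions

open PowerSeries

/-- The generating series `∑ p(n) Xⁿ` of partitions. -/
noncomputable def partitionSeries (R : Type*) [CommSemiring R] : R⟦X⟧ :=
  countSeries R fun x : Σ k : ℕ, k.Partition => x.1

lemma finiteFibres_partition_size : FiniteFibres fun x : Σ k : ℕ, k.Partition => x.1 := fun n =>
  (Set.finite_range (Sigma.mk n)).subset (Set.range_sigmaMk n).ge

variable (R : Type*)

lemma partitionSeries_eq_mk_card [CommSemiring R] :
    partitionSeries R = mk fun n => ((Nat.Partition.restricted n fun _ => True).card : R) := by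
  ext n
  have hfibre : {x : Σ k : ℕ, k.Partition | x.1 = n} = Set.range (Sigma.mk n) :=
    (Set.range_sigmaMk n).symm
  rw [partitionSeries, coeff_countSeries, coeff_mk, hfibre, ← Set.image_univ,
    Set.ncard_image_of_injective _ sigma_mk_injective, Set.ncard_univ, Nat.card_eq_fintype_card]
  simp [Nat.Partition.restricted]

lemma coeff_partitionSeries_pow [CommSemiring R] (t n : ℕ) :
    coeff n (partitionSeries R ^ t) = numMultipartitions t n := by
  rw [partitionSeries, countSeries_pow finiteFibres_partition_size, coeff_countSeries]
  rfl

open WithPiTopology in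
lemma pentagonalSeries_mul_partitionSeries [CommRing R] :
    pentagonalSeries R * partitionSeries R = 1 := by
  let _ : TopologicalSpace R := ⊥
  have : DiscreteTopology R := ⟨rfl⟩
  have hprod := (Nat.Partition.hasProd_powerSeriesMk_card_restricted R fun _ => True).mul
    (hasProd_one_sub_X_pow R)
  have hfactor (i : ℕ) : (∑' j : ℕ, (X : R⟦X⟧) ^ ((i + 1) * j)) * (1 - X ^ (i + 1)) = 1 := by
    simp only [pow_mul]
    exact tsum_pow_mul_one_sub_of_constantCoeff_eq_zero (by simp)
  simp only [if_true, hfactor] at hprod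
  rw [partitionSeries_eq_mk_card, mul_comm]
  exact hprod.unique hasProd_one

open WithPiTopology in
lemma continuous_expand [CommRing R] [TopologicalSpace R] (m : ℕ) (hm : m ≠ 0) :
    Continuous (expand m hm : R⟦X⟧ → R⟦X⟧) := by
  refine continuous_iff_continuousAt.2 fun f => (tendsto_iff_coeff_tendsto ..).2 fun n => ?_
  simp only [coeff_expand]
  split_ifs
  · exact (continuous_coeff R (n / m)).continuousAt
  · exact tendsto_const_nhds

open WithPiTopology in
lemma mk_card_countRestricted_mul_pentagonalSeries [CommRing R] (m : ℕ) (hm : m ≠ 0) :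
    (mk fun n => ((Nat.Partition.countRestricted n m).card : R)) * pentagonalSeries R =
      expand m hm (pentagonalSeries R) := by
  let _ : TopologicalSpace R := ⊥
  have : DiscreteTopology R := ⟨rfl⟩
  have hprod := (Nat.Partition.hasProd_powerSeriesMk_card_countRestricted R
    (Nat.pos_of_ne_zero hm)).mul (hasProd_one_sub_X_pow R)
  have hexpand := (hasProd_one_sub_X_pow R).map (expand m hm) (continuous_expand R m hm)
  refine hprod.unique ?_
  convert! hexpand using 1
  ext1 i
  simp only [Function.comp, map_sub, map_one, map_pow, expand_X, pow_mul, geom_sum_mul_neg]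
  rw [← pow_mul, ← pow_mul, mul_comm]

lemma numRegularPartitions_eq_card_countRestricted {m : ℕ} (hm : m ≠ 0) (n : ℕ) :
    numRegularPartitions m n = (Nat.Partition.countRestricted n m).card := by
  rw [← Nat.Partition.card_restricted_eq_card_countRestricted n (Nat.pos_of_ne_zero hm)]
  exact Nat.subtype_card _ (by simp [Nat.Partition.restricted])

lemma coeff_expand_pentagonalSeries_mul_partitionSeries [CommRing R] (m : ℕ) (hm : m ≠ 0) (n : ℕ) :
    coeff n (expand m hm (pentagonalSeries R) * partitionSeries R) = numRegularPartitions m n := by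
  rw [← mk_card_countRestricted_mul_pentagonalSeries, mul_assoc,
    pentagonalSeries_mul_partitionSeries, mul_one, coeff_mk,
    numRegularPartitions_eq_card_countRestricted hm]

end Partitions

section Congruence

open PowerSeries

lemma coeff_expand_pentagonalSeries_mul_expand_eq_zero {R : Type*} [CommRing R] {k m N : ℕ}
    (hk : k ≠ 0) (hm : m ≠ 0)
    (hN : ∀ j : ZMod m, k * (j * (3 * j - 1)) ≠ 2 * (N : ZMod m)) (f : R⟦X⟧) :
    coeff N (expand k hk (pentagonalSeries R) * expand m hm f) = 0 := by
  rw [coeff_mul]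
  refine Finset.sum_eq_zero fun ⟨a, b⟩ hab => ?_
  simp only [Finset.HasAntidiagonal.mem_antidiagonal] at hab
  by_cases hb : m ∣ b
  swap
  · rw [coeff_expand_of_not_dvd _ _ _ hb, mul_zero]
  by_cases ha : k ∣ a
  swap
  · rw [coeff_expand_of_not_dvd _ _ _ ha, zero_mul]
  obtain ⟨c, rfl⟩ := ha
  obtain ⟨d, rfl⟩ := hb
  rw [coeff_expand_mul, coeff_pentagonalSeries_eq_zero, zero_mul]
  rintro ⟨j, rfl⟩
  have hpent := congrArg (Int.cast : ℤ → ZMod m) (two_mul_natCast_pentagonal j)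
  have hsum := congrArg (Nat.cast : ℕ → ZMod m) hab
  push_cast at hpent hsum
  rw [CharP.cast_eq_zero (ZMod m) m] at hsum
  exact hN j (by linear_combination 2 * hsum - k * hpent)

theorem numRegularPartitions_modEq_numMultipartitions {k t N : ℕ} (hkt : 2 ^ k + t = 23)
    (hN : ∀ j : ZMod 23, 2 ^ k * (j * (3 * j - 1)) ≠ 2 * (N : ZMod 23)) :
    numRegularPartitions (23 * 2 ^ k) (23 * N - 22) ≡ numMultipartitions t N [MOD 2] := by
  have hpos : 0 < N := Nat.pos_of_ne_zero fun h => hN 0 (by simp [h])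
  set E := pentagonalSeries (ZMod 2)
  set P := partitionSeries (ZMod 2)
  have hEP : E * P = 1 := pentagonalSeries_mul_partitionSeries (ZMod 2)
  have hpow : 2 ^ k ≠ 0 := by positivity
  have hmain : expand (2 ^ k) hpow E * P ^ 23 = P ^ t := by
    rw [← hkt, pow_add, ← mul_assoc, ← pow_two_pow_eq_expand, ← mul_pow, hEP, one_pow, one_mul]
  rw [← ZMod.natCast_eq_natCast_iff]
  calc (numRegularPartitions (23 * 2 ^ k) (23 * N - 22) : ZMod 2)
      = coeff (23 * N - 22 + 22) (X ^ 22 * (expand (23 * 2 ^ k) (by positivity) E * P)) := by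
        rw [coeff_X_pow_mul, coeff_expand_pentagonalSeries_mul_partitionSeries]
    _ = coeff N (expand (2 ^ k) hpow E * dissect 23 (X ^ 22 * P)) := by
        rw [expand_mul 23 (by simp) _ hpow, mul_left_comm, Nat.sub_add_cancel (by omega),
          ← coeff_dissect, dissect_expand_mul]
    _ = coeff N (expand (2 ^ k) hpow E * dissect 23 (X ^ 22 * P)) +
          coeff N (expand (2 ^ k) hpow E * expand 23 (by simp) P) := by
        rw [coeff_expand_pentagonalSeries_mul_expand_eq_zero hpow (by simp)
          (by exact_mod_cast hN), add_zero]
    _ = coeff N (P ^ t) := by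
        rw [← map_add, ← mul_add, dissect_X_pow_mul_add_expand hEP, hmain]
    _ = numMultipartitions t N := coeff_partitionSeries_pow _ _ _

theorem numRegularPartitions_modEq_numMultipartitions_of_residue {k t B : ℕ}
    (hkt : 2 ^ k + t = 23)
    (hB : ∀ j : ZMod 23, 2 ^ k * (j * (3 * j - 1)) ≠ 2 * (B : ZMod 23)) (n : ℕ) :
    numRegularPartitions (23 * 2 ^ k) (529 * n + 23 * B - 22) ≡
      numMultipartitions t (23 * n + B) [MOD 2] := by
  have hcast : ((23 * n + B : ℕ) : ZMod 23) = B := by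
    simp [show (23 : ZMod 23) = 0 from rfl]
  rw [show 529 * n + 23 * B - 22 = 23 * (23 * n + B) - 22 by omega]
  exact numRegularPartitions_modEq_numMultipartitions hkt (by rwa [hcast])

end Congruence

end ModularEquation

theorem stmt_6 (n : ℕ) :
    (∀ B ∈ ({3, 5, 8, 9, 12, 13, 15, 17, 18, 19, 20} : Finset ℕ),
      numRegularPartitions 46 (529 * n + 23 * B - 22) ≡
        numMultipartitions 21 (23 * n + B) [MOD 2]) ∧
    (∀ B ∈ ({1, 3, 6, 7, 10, 11, 13, 15, 16, 17, 18} : Finset ℕ),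
      numRegularPartitions 92 (529 * n + 23 * B - 22) ≡
        numMultipartitions 19 (23 * n + B) [MOD 2]) ∧
    (∀ B ∈ ({2, 3, 6, 7, 9, 11, 12, 13, 14, 20, 22} : Finset ℕ),
      numRegularPartitions 184 (529 * n + 23 * B - 22) ≡
        numMultipartitions 15 (23 * n + B) [MOD 2]) ∧
    (∀ B ∈ ({1, 3, 4, 5, 6, 12, 14, 17, 18, 21, 22} : Finset ℕ),
      numRegularPartitions 368 (529 * n + 23 * B - 22) ≡
        numMultipartitions 7 (23 * n + B) [MOD 2]) := by
  refine ⟨fun B hB => ?_, fun B hB => ?_, fun B hB => ?_, fun B hB => ?_⟩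
  · refine ModularEquation.numRegularPartitions_modEq_numMultipartitions_of_residue (k := 1) rfl
      ?_ n
    revert B
    decide
  · refine ModularEquation.numRegularPartitions_modEq_numMultipartitions_of_residue (k := 2) rfl
      ?_ n
    revert B
    decide
  · refine ModularEquation.numRegularPartitions_modEq_numMultipartitions_of_residue (k := 3) rfl
      ?_ n
    revert B
    decide
  · refine ModularEquation.numRegularPartitions_modEq_numMultipartitions_of_residue (k := 4) rfl
      ?_ n
    revert B
    decide
end

section
/- For every natural number n and every B in {11, 18, 21, 26, 28, 33}, the number of 50-regular partitions satisfies b_50(875n + 25B − 26) ≡ p_23(35n + B) (mod 2). -/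
/-!
All series are taken modulo two. Write `F` for the pentagonal series, `P = 1 / F` for the partition
series and `φ` for the substitution of `X ^ 5` for `X`. Reflections of the quadratic forms
`x ^ 2 + 3 * y ^ 2` and `x ^ 2 + 5 * y ^ 2` pair off all but a few of the representations counted
by products of theta series, and comparing the fixed points gives `F * φ F = F ^ 6 + X * φ F ^ 6`.
This identity determines the parts of `P` and of its powers along residue classes modulo five.
Extracting the exponents congruent to `4` modulo five twice from the generating function
`φ (φ F) ^ 2 * P` of `50`-regular partitions leaves, up to the factor `X ^ 2`, the series
`P ^ 23 + F ^ 2 * φ P ^ 5 + X * F`. At the exponents in question the last two terms vanish: `F ^ 2`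
has no exponents `1` or `3` modulo five, and no pentagonal number is `3`, `4` or `6` modulo seven.
-/

namespace RegularPartitionParity

open PowerSeries

section WeightSeries

variable {ι κ : Type*} {R : Type*} [CommSemiring R] {S : Set ι} {T : Set κ} {v : κ → ℕ} {w : ι → ℕ}

theorem finite_fiber (hw : Northcott w) (S : Set ι) (n : ℕ) : {i ∈ S | w i = n}.Finite :=
  (hw.finite_le n).subset fun _ hi ↦ hi.2.le

theorem northcott_of_le {u : ι → ℕ} (hw : Northcott w) (h : ∀ i, w i ≤ u i) : Northcott u where
  finite_le n := (hw.finite_le n).subset fun i hi ↦ (h i).trans hi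

theorem northcott_add_prod (hw : Northcott w) (hv : Northcott v) :
    Northcott fun i : ι × κ ↦ w i.1 + v i.2 where
  finite_le n := ((hw.finite_le n).prod (hv.finite_le n)).subset fun _ hi ↦
    ⟨(Nat.le_add_right _ _).trans hi, (Nat.le_add_left _ _).trans hi⟩

theorem northcott_sum_pi {σ : Type*} [Fintype σ] (hw : Northcott w) :
    Northcott fun f : σ → ι ↦ ∑ j, w (f j) where
  finite_le n := (Set.Finite.pi' fun _ ↦ hw.finite_le n).subset fun f hf j ↦
    (Finset.single_le_sum (f := fun j ↦ w (f j)) (fun _ _ ↦ Nat.zero_le _)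
      (Finset.mem_univ j)).trans hf

variable (R) in
/-- The generating function `∑ i ∈ S, X ^ w i` of a set `S` weighted by `w`. Elements whose weight
is attained infinitely often on `S` contribute nothing, by the convention for `Set.ncard`. -/
noncomputable def weightSeries (S : Set ι) (w : ι → ℕ) : R⟦X⟧ :=
  mk fun n ↦ ({i ∈ S | w i = n}.ncard : R)

theorem coeff_weightSeries (S : Set ι) (w : ι → ℕ) (n : ℕ) :
    coeff n (weightSeries R S w) = ({i ∈ S | w i = n}.ncard : R) :=
  coeff_mk _ _

theorem weightSeries_congr_of_bijOn {e : ι → κ} (he : Set.BijOn e S T)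
    (h : ∀ i ∈ S, v (e i) = w i) : weightSeries R S w = weightSeries R T v := by
  ext n
  rw [coeff_weightSeries, coeff_weightSeries, Set.BijOn.ncard_eq (f := e)]
  refine ⟨fun i hi ↦ ⟨he.mapsTo hi.1, (h i hi.1).trans hi.2⟩, he.injOn.mono fun _ hi ↦ hi.1, ?_⟩
  rintro _ ⟨hj, rfl⟩
  obtain ⟨i, hi, rfl⟩ := he.surjOn hj
  exact ⟨i, ⟨hi, (h i hi).symm⟩, rfl⟩

theorem weightSeries_mul (hw : Northcott w) (hv : Northcott v) (S : Set ι) (T : Set κ) :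
    weightSeries R S w * weightSeries R T v =
      weightSeries R (S ×ˢ T) fun i ↦ w i.1 + v i.2 := by
  classical
  ext n
  simp only [coeff_mul, coeff_weightSeries, ← Nat.cast_mul, ← Nat.cast_sum]
  congr 1
  have hfin := finite_fiber (northcott_add_prod hw hv) (S ×ˢ T) n
  rw [Set.ncard_eq_toFinset_card _ hfin, Finset.card_eq_sum_card_fiberwise
    (f := fun i ↦ (w i.1, v i.2)) (t := Finset.HasAntidiagonal.antidiagonal n)
    (fun i hi ↦ Finset.HasAntidiagonal.mem_antidiagonal.2 ((hfin.mem_toFinset.1 hi).2))]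
  refine Finset.sum_congr rfl fun p hp ↦ ?_
  rw [← Set.ncard_prod, ← Set.ncard_coe_finset]
  congr 1
  ext i
  simp only [Set.mem_prod, Set.mem_ofPred_eq, Finset.coe_filter, Set.Finite.mem_toFinset,
    Prod.ext_iff]
  have := Finset.HasAntidiagonal.mem_antidiagonal.1 hp
  grind

theorem weightSeries_pow (hw : Northcott w) (t : ℕ) :
    weightSeries R Set.univ w ^ t =
      weightSeries R Set.univ fun f : Fin t → ι ↦ ∑ j, w (f j) := by
  induction t with
  | zero =>
    ext n
    rw [pow_zero, coeff_one, coeff_weightSeries]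
    obtain rfl | hn := eq_or_ne n 0
    · simp
    · simp [hn, hn.symm]
  | succ t ih =>
    rw [pow_succ', ih, weightSeries_mul hw (northcott_sum_pi hw), Set.univ_prod_univ]
    exact weightSeries_congr_of_bijOn (Set.bijOn_univ.2 (Fin.consEquiv fun _ ↦ ι).bijective)
      fun i _ ↦ by simp [Fin.sum_univ_succ]

theorem expand_weightSeries {R : Type*} [CommRing R] {d : ℕ} (hd : d ≠ 0) (S : Set ι) (w : ι → ℕ) :
    expand d hd (weightSeries R S w) = weightSeries R S fun i ↦ d * w i := by
  ext n
  rw [coeff_expand]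
  split_ifs with h
  · obtain ⟨k, rfl⟩ := h
    rw [Nat.mul_div_cancel_left k (Nat.pos_of_ne_zero hd), coeff_weightSeries, coeff_weightSeries]
    simp only [Nat.mul_right_inj hd]
  · suffices {i ∈ S | d * w i = n} = ∅ by
      rw [coeff_weightSeries, this, Set.ncard_empty, Nat.cast_zero]
    refine Set.eq_empty_of_forall_notMem ?_
    rintro i ⟨-, rfl⟩
    exact h (dvd_mul_right d _)

theorem X_pow_mul_weightSeries (r : ℕ) (S : Set ι) (w : ι → ℕ) :
    X ^ r * weightSeries R S w = weightSeries R S fun i ↦ w i + r := by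
  ext n
  rw [coeff_X_pow_mul']
  split_ifs with h
  · rw [coeff_weightSeries, coeff_weightSeries]
    simp only [eq_tsub_iff_add_eq_of_le h]
  · suffices {i ∈ S | w i + r = n} = ∅ by
      rw [coeff_weightSeries, this, Set.ncard_empty, Nat.cast_zero]
    refine Set.eq_empty_of_forall_notMem ?_
    rintro i ⟨-, rfl⟩
    exact h (Nat.le_add_left r _)

section CharTwo

variable {R : Type*} [CommRing R] [CharP R 2]

open scoped symmDiff in
theorem weightSeries_add_weightSeries (hw : Northcott w) (S T : Set ι) :
    weightSeries R S w + weightSeries R T w = weightSeries R (S ∆ T) w := by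
  ext n
  have hS := finite_fiber hw S n
  have hT := finite_fiber hw T n
  rw [map_add, coeff_weightSeries, coeff_weightSeries, coeff_weightSeries]
  rw [← Set.ncard_inter_add_ncard_sdiff_eq_ncard _ {i ∈ T | w i = n} hS,
    ← Set.ncard_inter_add_ncard_sdiff_eq_ncard {i ∈ T | w i = n} {i ∈ S | w i = n} hT,
    Set.inter_comm {i ∈ T | w i = n}]
  have hdisj : {i ∈ S ∆ T | w i = n} =
      ({i ∈ S | w i = n} \ {i ∈ T | w i = n}) ∪ ({i ∈ T | w i = n} \ {i ∈ S | w i = n}) := by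
    ext i
    simp only [Set.mem_ofPred_eq, Set.mem_symmDiff, Set.mem_union, Set.mem_sdiff]
    tauto
  rw [hdisj, Set.ncard_union_eq disjoint_sdiff_sdiff hS.sdiff hT.sdiff]
  push_cast
  linear_combination
    (({i ∈ S | w i = n} ∩ {i ∈ T | w i = n}).ncard : R) * CharTwo.two_eq_zero (R := R)

theorem weightSeries_eq_fixedPoints (hw : Northcott w) {σ : ι → ι} (hσ : Set.MapsTo σ S S)
    (hσσ : ∀ i ∈ S, σ (σ i) = i) (hwσ : ∀ i ∈ S, w (σ i) = w i) :
    weightSeries R S w = weightSeries R {i ∈ S | σ i = i} w := by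
  classical
  ext n
  rw [coeff_weightSeries, coeff_weightSeries]
  have hfin := finite_fiber hw S n
  have hfixed : {i ∈ {i ∈ S | σ i = i} | w i = n} = {i ∈ hfin.toFinset | σ i = i} := by
    ext i
    simp only [Set.mem_ofPred_eq, Finset.coe_filter, Set.Finite.mem_toFinset]
    tauto
  rw [hfixed, Set.ncard_coe_finset, Set.ncard_eq_toFinset_card _ hfin, Finset.card_eq_sum_ones,
    Finset.card_eq_sum_ones, Nat.cast_sum, Nat.cast_sum,
    ← Finset.sum_filter_add_sum_filter_not hfin.toFinset (fun i ↦ σ i = i), add_eq_left]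
  refine Finset.sum_involution (fun i _ ↦ σ i) (fun _ _ ↦ by simpa using CharTwo.add_self_eq_zero _)
    (fun i hi _ ↦ (Finset.mem_filter.1 hi).2) (fun i hi ↦ ?_) fun i hi ↦ ?_
  · obtain ⟨hiS, hin⟩ := hfin.mem_toFinset.1 (Finset.mem_filter.1 hi).1
    refine Finset.mem_filter.2 ⟨hfin.mem_toFinset.2 ⟨hσ hiS, (hwσ i hiS).trans hin⟩, ?_⟩
    rw [hσσ i hiS]
    exact fun h ↦ (Finset.mem_filter.1 hi).2 h.symm
  · exact hσσ i (hfin.mem_toFinset.1 (Finset.mem_filter.1 hi).1).1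

theorem weightSeries_eq_of_involution (hw : Northcott w) {σ : ι → ι} (hσ : Set.MapsTo σ S S)
    (hσσ : ∀ i ∈ S, σ (σ i) = i) (hwσ : ∀ i ∈ S, w (σ i) = w i) {e : κ → ι}
    (he : Set.BijOn e T {i ∈ S | σ i = i}) (hv : ∀ j ∈ T, w (e j) = v j) :
    weightSeries R S w = weightSeries R T v :=
  (weightSeries_eq_fixedPoints hw hσ hσσ hwσ).trans (weightSeries_congr_of_bijOn he hv).symm

end CharTwo

end WeightSeries

section Multisection

section Semiring

variable {R : Type*} [Semiring R]

/-- The series `∑ n, (coeff (m * n + r) g) * X ^ n` extracting the coefficients of `g` along the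
arithmetic progression `r, m + r, 2 * m + r, …`. -/
noncomputable def multisection (m r : ℕ) : R⟦X⟧ →ₗ[R] R⟦X⟧ where
  toFun g := mk fun n ↦ coeff (m * n + r) g
  map_add' _ _ := by ext; simp
  map_smul' _ _ := by ext; simp

@[simp]
theorem coeff_multisection (m r n : ℕ) (g : R⟦X⟧) :
    coeff n (multisection m r g) = coeff (m * n + r) g := by
  simp [multisection]

theorem multisection_succ_X_mul (m r : ℕ) (g : R⟦X⟧) :
    multisection m (r + 1) (X * g) = multisection m r g := by
  ext n
  rw [coeff_multisection, coeff_multisection, ← add_assoc, coeff_succ_X_mul]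

theorem multisection_zero_X_mul (m : ℕ) (g : R⟦X⟧) :
    multisection (m + 1) 0 (X * g) = X * multisection (m + 1) m g := by
  ext n
  cases n with
  | zero => simp
  | succ n =>
    rw [coeff_multisection, coeff_succ_X_mul, coeff_multisection,
      show (m + 1) * (n + 1) + 0 = (m + 1) * n + m + 1 by ring, coeff_succ_X_mul]

end Semiring

variable {R : Type*} [CommRing R] {m : ℕ}

theorem coeff_X_pow_mul_expand_of_not_modEq (hm : m ≠ 0) {n s : ℕ} (h : ¬ s ≡ n [MOD m])
    (a : R⟦X⟧) : coeff n (X ^ s * expand m hm a) = 0 := by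
  rw [coeff_X_pow_mul', coeff_expand]
  split_ifs with hsn hdvd
  · exact absurd ((Nat.modEq_iff_dvd' hsn).2 hdvd) h
  all_goals rfl

theorem multisection_X_pow_mul_expand (hm : m ≠ 0) (k : ℕ) {r : ℕ} (hr : r < m) (a : R⟦X⟧) :
    multisection m r (X ^ k * expand m hm a) = if k % m = r then X ^ (k / m) * a else 0 := by
  ext n
  rw [coeff_multisection]
  split_ifs with hkr
  · have hX : X ^ k * expand m hm a = X ^ r * expand m hm (X ^ (k / m) * a) := by
      rw [map_mul, map_pow, expand_X, ← mul_assoc, ← pow_mul, ← pow_add, ← hkr, Nat.mod_add_div]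
    rw [hX, coeff_X_pow_mul, coeff_expand_mul]
  · refine coeff_X_pow_mul_expand_of_not_modEq hm (fun h ↦ hkr ?_) a
    rw [h, Nat.mul_add_mod, Nat.mod_eq_of_lt hr]

theorem multisection_zero_expand (hm : m ≠ 0) (a : R⟦X⟧) :
    multisection m 0 (expand m hm a) = a := by
  simpa using multisection_X_pow_mul_expand hm 0 (Nat.pos_of_ne_zero hm) a

theorem eq_sum_X_pow_mul_expand_multisection (hm : m ≠ 0) (g : R⟦X⟧) :
    g = ∑ s ∈ Finset.range m, X ^ s * expand m hm (multisection m s g) := by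
  ext n
  obtain ⟨q, r, hr, rfl⟩ : ∃ q r, r < m ∧ m * q + r = n :=
    ⟨n / m, n % m, Nat.mod_lt n (Nat.pos_of_ne_zero hm), Nat.div_add_mod n m⟩
  rw [map_sum, Finset.sum_eq_single_of_mem r (Finset.mem_range.2 hr), coeff_X_pow_mul,
    coeff_expand_mul, coeff_multisection]
  intro s hs hsr
  refine coeff_X_pow_mul_expand_of_not_modEq hm (fun h ↦ hsr ?_) _
  rwa [Nat.ModEq, Nat.mul_add_mod, Nat.mod_eq_of_lt hr,
    Nat.mod_eq_of_lt (Finset.mem_range.1 hs)] at h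

theorem multisection_expand_mul (hm : m ≠ 0) {r : ℕ} (hr : r < m) (a g : R⟦X⟧) :
    multisection m r (expand m hm a * g) = a * multisection m r g := by
  conv_lhs => rw [eq_sum_X_pow_mul_expand_multisection hm g, Finset.mul_sum]
  simp only [mul_left_comm (expand m hm a), ← map_mul, map_sum,
    multisection_X_pow_mul_expand hm _ hr]
  rw [Finset.sum_eq_single_of_mem r (Finset.mem_range.2 hr)]
  · rw [if_pos (Nat.mod_eq_of_lt hr), Nat.div_eq_of_lt hr, pow_zero, one_mul]
  · intro s hs hsr
    rw [if_neg]
    rwa [Nat.mod_eq_of_lt (Finset.mem_range.1 hs)]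

theorem expand_injective (hm : m ≠ 0) : Function.Injective (expand m hm : R⟦X⟧ →ₐ[R] R⟦X⟧) :=
  fun f g h ↦ by
    ext n
    simpa only [coeff_expand_mul] using congrArg (coeff (m * n)) h

theorem expand_comm {d : ℕ} (hd : d ≠ 0) (hm : m ≠ 0) (g : R⟦X⟧) :
    expand d hd (expand m hm g) = expand m hm (expand d hd g) := by
  simp only [← expand_mul, mul_comm d m]

theorem multisection_expand {d q r s : ℕ} (hd : d ≠ 0) (hdm : m.Coprime d) (hr : r < m)
    (hs : s < m) (h : d * s = m * q + r) (g : R⟦X⟧) :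
    multisection m r (expand d hd g) = X ^ q * expand d hd (multisection m s g) := by
  have hm : m ≠ 0 := (Nat.zero_lt_of_lt hs).ne'
  conv_lhs => rw [eq_sum_X_pow_mul_expand_multisection hm g, map_sum]
  simp only [map_mul, map_pow, expand_X, ← pow_mul, expand_comm hd hm, map_sum,
    multisection_X_pow_mul_expand hm _ hr]
  rw [Finset.sum_eq_single_of_mem s (Finset.mem_range.2 hs)]
  · have hmod : d * s % m = r := by rw [h, Nat.mul_add_mod, Nat.mod_eq_of_lt hr]
    have hdiv : d * s / m = q := by
      rw [h, Nat.mul_add_div (Nat.pos_of_ne_zero hm), Nat.div_eq_of_lt hr, add_zero]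
    rw [if_pos hmod, hdiv]
  · intro t ht hts
    refine if_neg fun htr ↦ hts ?_
    have hmod : d * t ≡ d * s [MOD m] := by
      rw [Nat.ModEq, htr, h, Nat.mul_add_mod, Nat.mod_eq_of_lt hr]
    exact (Nat.ModEq.cancel_left_of_coprime hdm hmod).eq_of_lt_of_lt (Finset.mem_range.1 ht) hs

end Multisection

section GeneratingFunctions

open PowerSeries.WithPiTopology

variable (R : Type*) [CommRing R]

/-- The generating function of the number of partitions. -/
noncomputable def partitionSeries : R⟦X⟧ :=
  mk fun n ↦ (Fintype.card n.Partition : R)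

theorem constantCoeff_pentagonalSeries : constantCoeff (pentagonalSeries R) = 1 := by
  have h : coeff 0 (pentagonalSeries R) = Int.negOnePow 0 := coeff_pentagonalSeries_pentagonal R 0
  simpa using h

theorem partitionSeries_mul_pentagonalSeries : partitionSeries R * pentagonalSeries R = 1 := by
  let : TopologicalSpace R := ⊥
  have : DiscreteTopology R := ⟨rfl⟩
  have hP : HasProd (fun i : ℕ ↦ ∑' j : ℕ, (X ^ (i + 1)) ^ j) (partitionSeries R) := by
    simpa [Nat.Partition.restricted, partitionSeries, pow_mul] using
      Nat.Partition.hasProd_powerSeriesMk_card_restricted R fun _ ↦ True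
  have h := hP.mul (hasProd_one_sub_X_pow R)
  simp only [fun i : ℕ ↦ tsum_pow_mul_one_sub_of_constantCoeff_eq_zero
    (show constantCoeff (X ^ (i + 1) : R⟦X⟧) = 0 by simp)] at h
  exact h.unique hasProd_one

theorem partitionSeries_mul_pentagonalSeries_pow (i : ℕ) :
    (partitionSeries R * pentagonalSeries R) ^ i = 1 := by
  rw [partitionSeries_mul_pentagonalSeries, one_pow]

theorem continuous_expand [TopologicalSpace R] {m : ℕ} (hm : m ≠ 0) :
    Continuous (expand m hm : R⟦X⟧ →ₐ[R] R⟦X⟧) := by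
  refine continuous_iff_continuousAt.2 fun g ↦ (tendsto_iff_coeff_tendsto _ _ _ _).2 fun d ↦ ?_
  simp only [coeff_expand]
  split_ifs
  · exact (continuous_coeff R _).continuousAt
  · exact tendsto_const_nhds

theorem mk_numRegularPartitions_mul_pentagonalSeries {m : ℕ} (hm : m ≠ 0) :
    mk (fun n ↦ (numRegularPartitions m n : R)) * pentagonalSeries R =
      expand m hm (pentagonalSeries R) := by
  let : TopologicalSpace R := ⊥
  have : DiscreteTopology R := ⟨rfl⟩
  have hB : HasProd (fun i : ℕ ↦ ∑ j ∈ Finset.range m, (X ^ (i + 1)) ^ j)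
      (mk fun n ↦ (numRegularPartitions m n : R)) := by
    have hcard (n : ℕ) : numRegularPartitions m n = (Nat.Partition.countRestricted n m).card := by
      rw [← Nat.Partition.card_restricted_eq_card_countRestricted n (Nat.pos_of_ne_zero hm),
        numRegularPartitions, Nat.card_eq_fintype_card, Fintype.card_subtype,
        Nat.Partition.restricted]
    simpa only [hcard, pow_mul] using
      Nat.Partition.hasProd_powerSeriesMk_card_countRestricted R (Nat.pos_of_ne_zero hm)
  have h := hB.mul (hasProd_one_sub_X_pow R)
  simp only [geom_sum_mul_neg, pow_right_comm _ _ m, ← expand_X m hm] at h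
  exact h.unique (by simpa [Function.comp_def] using
    (hasProd_one_sub_X_pow R).map (expand m hm) (continuous_expand R hm))

theorem northcott_sigma_fst {β : ℕ → Type*} [∀ n, Finite (β n)] :
    Northcott (Sigma.fst : (Σ n, β n) → ℕ) where
  finite_le n := (Set.finite_Iic n).preimage' fun k _ ↦ by
    rw [← Set.range_sigmaMk]
    exact Set.finite_range _

theorem partitionSeries_eq_weightSeries :
    partitionSeries R =
      weightSeries R Set.univ (Sigma.fst : (Σ n : ℕ, n.Partition) → ℕ) := by
  ext n
  have hfiber : {π : Σ n : ℕ, n.Partition | π ∈ Set.univ ∧ π.1 = n} = Sigma.mk n '' Set.univ := by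
    rw [Set.image_univ, Set.range_sigmaMk]
    ext π
    simp
  rw [coeff_weightSeries, hfiber, Set.ncard_image_of_injective _ sigma_mk_injective,
    Set.ncard_univ, Nat.card_eq_fintype_card, partitionSeries, coeff_mk]

theorem mk_numMultipartitions (t : ℕ) :
    mk (fun n ↦ (numMultipartitions t n : R)) = partitionSeries R ^ t := by
  rw [partitionSeries_eq_weightSeries, weightSeries_pow northcott_sigma_fst]
  ext n
  simp only [coeff_mk, coeff_weightSeries, Set.mem_univ, true_and, numMultipartitions,
    ← Nat.card_coe_set_eq, Set.coe_ofPred]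

end GeneratingFunctions

section FrobeniusModTwo

instance charP_powerSeries (R : Type*) [CommSemiring R] (p : ℕ) [CharP R p] : CharP R⟦X⟧ p :=
  charP_of_injective_ringHom C_injective p

theorem expand_card_zmod (p : ℕ) [hp : Fact p.Prime] (g : (ZMod p)⟦X⟧) :
    expand p hp.out.ne_zero g = g ^ p := by
  have h := MvPowerSeries.map_frobenius_expand (σ := Unit) (R := ZMod p) p (f := g) hp.out.ne_zero
  rw [ZMod.frobenius_zmod] at h
  rw [← h]
  rfl

theorem expand_two_mul_zmod_two {d : ℕ} (hd : d ≠ 0) (g : (ZMod 2)⟦X⟧) :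
    expand (2 * d) (mul_ne_zero two_ne_zero hd) g = expand d hd g ^ 2 := by
  rw [← expand_card_zmod 2, ← expand_mul]

theorem expand_four_zmod_two (g : (ZMod 2)⟦X⟧) : expand 4 four_ne_zero g = g ^ 4 := by
  rw [expand_two_mul_zmod_two two_ne_zero, expand_card_zmod 2, ← pow_mul]

end FrobeniusModTwo

section Theta

theorem northcott_natAbs_sq : Northcott fun x : ℤ ↦ x.natAbs ^ 2 where
  finite_le n := (Set.finite_Icc (-n : ℤ) n).subset fun x (hx : x.natAbs ^ 2 ≤ n) ↦ by
    have : x.natAbs ≤ n := (Nat.le_self_pow two_ne_zero _).trans hx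
    exact ⟨by omega, by omega⟩

theorem northcott_const_mul {ι : Type*} {w : ι → ℕ} (hw : Northcott w) {d : ℕ} (hd : d ≠ 0) :
    Northcott fun i ↦ d * w i :=
  northcott_of_le hw fun i ↦ Nat.le_mul_of_pos_left (w i) (Nat.pos_of_ne_zero hd)

theorem northcott_natAbs_sq_add_mul {d : ℕ} (hd : d ≠ 0) :
    Northcott fun i : ℤ × ℤ ↦ i.1.natAbs ^ 2 + d * i.2.natAbs ^ 2 :=
  northcott_add_prod northcott_natAbs_sq (northcott_const_mul northcott_natAbs_sq hd)

/-- The theta series `∑ X ^ (x ^ 2)` modulo two, over the integers `x ≡ 1` modulo `4`, so that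
each pair `±x` of odd integers is counted once. -/
noncomputable def thetaOdd : (ZMod 2)⟦X⟧ :=
  weightSeries (ZMod 2) {x : ℤ | x % 4 = 1} fun x ↦ x.natAbs ^ 2

/-- The part of `thetaOdd` supported on the integers prime to `3`. -/
noncomputable def thetaOddPrimeToThree : (ZMod 2)⟦X⟧ :=
  weightSeries (ZMod 2) {x : ℤ | x % 4 = 1 ∧ x % 3 ≠ 0} fun x ↦ x.natAbs ^ 2

theorem pentagonalSeries_eq_weightSeries (R : Type*) [CommRing R] [CharP R 2] :
    pentagonalSeries R = weightSeries R Set.univ pentagonal := by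
  ext n
  rw [coeff_weightSeries]
  by_cases hn : n ∈ Set.range pentagonal
  · obtain ⟨k, rfl⟩ := hn
    have hfiber : {i | i ∈ Set.univ ∧ pentagonal i = pentagonal k} = {k} := by
      simp [pentagonal_inj]
    rw [coeff_pentagonalSeries_pentagonal, hfiber, Set.ncard_singleton]
    rcases Int.units_eq_one_or k.negOnePow with h | h <;> simp [h, CharTwo.neg_eq]
  · have hfiber : {i | i ∈ Set.univ ∧ pentagonal i = n} = ∅ := by
      simpa [Set.eq_empty_iff_forall_notMem] using hn
    rw [coeff_pentagonalSeries_eq_zero R hn, hfiber, Set.ncard_empty, Nat.cast_zero]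

theorem natCast_pentagonal_mul_add_one (k : ℤ) : 24 * (pentagonal k : ℤ) + 1 = (6 * k - 1) ^ 2 := by
  linear_combination 12 * two_mul_natCast_pentagonal k

theorem thetaOddPrimeToThree_eq :
    thetaOddPrimeToThree = X * expand 24 (by norm_num) (pentagonalSeries (ZMod 2)) := by
  rw [pentagonalSeries_eq_weightSeries, expand_weightSeries, ← pow_one X, X_pow_mul_weightSeries]
  refine (weightSeries_congr_of_bijOn (e := fun k : ℤ ↦ if Even k then 1 - 6 * k else 6 * k - 1)
    ⟨fun k _ ↦ ?_, fun k _ l _ hkl ↦ ?_, fun x hx ↦ ?_⟩ fun k _ ↦ ?_).symm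
  · simp only [Set.mem_ofPred_eq, Int.even_iff]
    split_ifs <;> omega
  · simp only [Int.even_iff] at hkl
    split_ifs at hkl <;> omega
  · obtain ⟨hx4, hx3⟩ := hx
    by_cases hx6 : x % 6 = 1
    · exact ⟨(1 - x) / 6, trivial, by simp only [Int.even_iff]; split_ifs <;> omega⟩
    · exact ⟨(x + 1) / 6, trivial, by simp only [Int.even_iff]; split_ifs <;> omega⟩
  · zify
    rw [natCast_pentagonal_mul_add_one, sq_abs]
    split_ifs <;> ring

/-- In the coordinates `x = 2 * u - y`, where `x ^ 2 + 3 * y ^ 2 = 4 * (u ^ 2 - u * y + y ^ 2)`,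
this swaps `u` and `y` up to a common sign, chosen so that the second coordinate is `1` modulo
`4`. -/
def eisensteinSwap (i : ℤ × ℤ) : ℤ × ℤ :=
  if (i.1 + i.2) / 2 % 4 = 1 then (2 * i.2 - (i.1 + i.2) / 2, (i.1 + i.2) / 2)
  else ((i.1 + i.2) / 2 - 2 * i.2, -((i.1 + i.2) / 2))

theorem eisensteinSwap_of_mod_four_eq_one {u : ℤ} (hu : u % 4 = 1) (y : ℤ) :
    eisensteinSwap (2 * u - y, y) = (2 * y - u, u) := by
  simp [eisensteinSwap, hu]

theorem eisensteinSwap_of_mod_four_eq_three {u : ℤ} (hu : u % 4 = 3) (y : ℤ) :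
    eisensteinSwap (2 * u - y, y) = (u - 2 * y, -u) := by
  simp [eisensteinSwap, hu]

theorem exists_eisenstein_coordinates {x y : ℤ} (hx : x % 4 = 1) (hy : y % 4 = 1) :
    ∃ u : ℤ, x = 2 * u - y ∧ (u % 4 = 1 ∨ u % 4 = 3) :=
  ⟨(x + y) / 2, by omega, by omega⟩

theorem eisensteinSwap_eisensteinSwap {i : ℤ × ℤ} (hx : i.1 % 4 = 1) (hy : i.2 % 4 = 1) :
    eisensteinSwap (eisensteinSwap i) = i := by
  obtain ⟨x, y⟩ := i
  obtain ⟨u, rfl, hu | hu⟩ := exists_eisenstein_coordinates (x := x) (y := y) hx hy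
  · rw [eisensteinSwap_of_mod_four_eq_one hu, eisensteinSwap_of_mod_four_eq_one hy]
  · rw [eisensteinSwap_of_mod_four_eq_three hu, show u - 2 * y = 2 * -y - -u by ring,
      eisensteinSwap_of_mod_four_eq_three (by grind)]
    ring_nf

theorem natAbs_sq_eisensteinSwap {i : ℤ × ℤ} (hx : i.1 % 4 = 1) (hy : i.2 % 4 = 1) :
    (eisensteinSwap i).1.natAbs ^ 2 + 3 * (eisensteinSwap i).2.natAbs ^ 2 =
      i.1.natAbs ^ 2 + 3 * i.2.natAbs ^ 2 := by
  obtain ⟨x, y⟩ := i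
  zify
  simp only [sq_abs]
  obtain ⟨u, rfl, hu | hu⟩ := exists_eisenstein_coordinates (x := x) (y := y) hx hy
  · rw [eisensteinSwap_of_mod_four_eq_one hu]
    ring
  · rw [eisensteinSwap_of_mod_four_eq_three hu]
    ring

theorem thetaOddPrimeToThree_mul_expand_three :
    thetaOddPrimeToThree * expand 3 three_ne_zero thetaOdd =
      expand 4 four_ne_zero thetaOddPrimeToThree := by
  rw [thetaOddPrimeToThree, thetaOdd, expand_weightSeries, expand_weightSeries,
    weightSeries_mul northcott_natAbs_sq (northcott_const_mul northcott_natAbs_sq three_ne_zero)]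
  refine weightSeries_eq_of_involution (northcott_natAbs_sq_add_mul three_ne_zero)
    (σ := eisensteinSwap) ?_ (fun i hi ↦ eisensteinSwap_eisensteinSwap hi.1.1 hi.2)
    (fun i hi ↦ natAbs_sq_eisensteinSwap hi.1.1 hi.2) (e := fun z ↦ (z, z)) ⟨?_, ?_, ?_⟩
    fun z _ ↦ by ring
  · rintro ⟨x, y⟩ ⟨⟨hx, hx3⟩, hy⟩
    obtain ⟨u, rfl, hu | hu⟩ := exists_eisenstein_coordinates (x := x) (y := y) hx hy
    · rw [eisensteinSwap_of_mod_four_eq_one hu]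
      exact ⟨⟨by grind, by grind⟩, hu⟩
    · rw [eisensteinSwap_of_mod_four_eq_three hu]
      exact ⟨⟨by grind, by grind⟩, by grind⟩
  · rintro z ⟨hz, hz3⟩
    refine ⟨⟨⟨hz, hz3⟩, hz⟩, ?_⟩
    simpa [two_mul] using eisensteinSwap_of_mod_four_eq_one hz z
  · exact fun _ _ _ _ h ↦ congrArg Prod.fst h
  · rintro ⟨x, y⟩ ⟨⟨⟨hx, hx3⟩, hy⟩, hfix⟩
    refine ⟨x, ⟨hx, hx3⟩, ?_⟩
    obtain ⟨u, rfl, hu | hu⟩ := exists_eisenstein_coordinates (x := x) (y := y) hx hy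
    · rw [eisensteinSwap_of_mod_four_eq_one hu] at hfix
      grind
    · rw [eisensteinSwap_of_mod_four_eq_three hu] at hfix
      grind

-- The involutions of this lemma and the next are reflections for `x ^ 2 + 5 * y ^ 2`; they come
-- from the representation `3 ^ 2 = 2 ^ 2 + 5 * 1 ^ 2`.
theorem weightSeries_modEq_three :
    weightSeries (ZMod 2) {i : ℤ × ℤ | i.1 % 4 = 1 ∧ i.2 % 4 = 1 ∧ (i.1 - i.2) % 3 = 0}
      (fun i ↦ i.1.natAbs ^ 2 + 5 * i.2.natAbs ^ 2) = expand 6 (by norm_num) thetaOdd := by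
  rw [thetaOdd, expand_weightSeries]
  refine weightSeries_eq_of_involution (northcott_natAbs_sq_add_mul (by norm_num))
    (σ := fun i ↦ ((5 * i.2 - 2 * i.1) / 3, (i.1 + 2 * i.2) / 3)) ?_ ?_ ?_ (e := fun z ↦ (z, z))
    ⟨?_, ?_, ?_⟩ fun z _ ↦ by ring
  · rintro ⟨x, y⟩ ⟨hx, hy, hxy⟩
    refine ⟨?_, ?_, ?_⟩ <;> dsimp only at * <;> omega
  · rintro ⟨x, y⟩ ⟨-, -, hxy⟩
    ext <;> dsimp only at * <;> omega
  · rintro ⟨x, y⟩ ⟨-, -, hxy⟩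
    obtain ⟨k, rfl⟩ : ∃ k, x = y + 3 * k := ⟨(x - y) / 3, by dsimp only at *; omega⟩
    rw [show (5 * y - 2 * (y + 3 * k)) / 3 = y - 2 * k by omega,
      show (y + 3 * k + 2 * y) / 3 = y + k by omega]
    zify
    simp only [sq_abs]
    ring
  · intro z (hz : z % 4 = 1)
    refine ⟨⟨hz, hz, by simp⟩, ?_⟩
    ext <;> dsimp only <;> omega
  · exact fun _ _ _ _ h ↦ congrArg Prod.fst h
  · rintro ⟨x, y⟩ ⟨⟨hx, -, -⟩, hfix⟩
    have hxy' : x = y := by grind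
    exact ⟨x, hx, by rw [hxy']⟩

theorem weightSeries_modEq_neg_three :
    weightSeries (ZMod 2) {i : ℤ × ℤ | i.1 % 4 = 1 ∧ i.2 % 4 = 1 ∧ (i.1 + i.2) % 3 = 0}
      (fun i ↦ i.1.natAbs ^ 2 + 5 * i.2.natAbs ^ 2) = expand 30 (by norm_num) thetaOdd := by
  rw [thetaOdd, expand_weightSeries]
  refine weightSeries_eq_of_involution (northcott_natAbs_sq_add_mul (by norm_num))
    (σ := fun i ↦ ((5 * i.2 + 2 * i.1) / 3, (i.1 - 2 * i.2) / 3)) ?_ ?_ ?_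
    (e := fun z ↦ (5 * z, z)) ⟨?_, ?_, ?_⟩ fun z _ ↦ by rw [Int.natAbs_mul]; ring
  · rintro ⟨x, y⟩ ⟨hx, hy, hxy⟩
    refine ⟨?_, ?_, ?_⟩ <;> dsimp only at * <;> omega
  · rintro ⟨x, y⟩ ⟨-, -, hxy⟩
    ext <;> dsimp only at * <;> omega
  · rintro ⟨x, y⟩ ⟨-, -, hxy⟩
    obtain ⟨k, rfl⟩ : ∃ k, x = 3 * k - y := ⟨(x + y) / 3, by dsimp only at *; omega⟩
    rw [show (5 * y + 2 * (3 * k - y)) / 3 = y + 2 * k by omega,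
      show (3 * k - y - 2 * y) / 3 = k - y by omega]
    zify
    simp only [sq_abs]
    ring
  · intro z (hz : z % 4 = 1)
    refine ⟨⟨?_, hz, ?_⟩, ?_⟩
    · dsimp only
      omega
    · dsimp only
      omega
    · ext <;> dsimp only <;> omega
  · exact fun _ _ _ _ h ↦ congrArg Prod.snd h
  · rintro ⟨x, y⟩ ⟨⟨-, hy, -⟩, hfix⟩
    have hxy' : 5 * y = x := by grind
    exact ⟨y, hy, by rw [← hxy']⟩

open scoped symmDiff in
theorem thetaOddPrimeToThree_mul_expand_five :
    thetaOddPrimeToThree * expand 5 (by norm_num) thetaOddPrimeToThree =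
      expand 6 (by norm_num) thetaOdd + expand 30 (by norm_num) thetaOdd := by
  have hsymm : {i : ℤ × ℤ | i.1 % 4 = 1 ∧ i.2 % 4 = 1 ∧ (i.1 - i.2) % 3 = 0} ∆
      {i : ℤ × ℤ | i.1 % 4 = 1 ∧ i.2 % 4 = 1 ∧ (i.1 + i.2) % 3 = 0} =
        {x : ℤ | x % 4 = 1 ∧ x % 3 ≠ 0} ×ˢ {x : ℤ | x % 4 = 1 ∧ x % 3 ≠ 0} := by
    ext ⟨x, y⟩
    simp only [Set.mem_symmDiff, Set.mem_prod, Set.mem_ofPred_eq]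
    have hx : x % 3 = 0 ∨ x % 3 = 1 ∨ x % 3 = 2 := by omega
    have hy : y % 3 = 0 ∨ y % 3 = 1 ∨ y % 3 = 2 := by omega
    rcases hx with hx | hx | hx <;> rcases hy with hy | hy | hy <;> omega
  rw [← weightSeries_modEq_three, ← weightSeries_modEq_neg_three,
    weightSeries_add_weightSeries (northcott_natAbs_sq_add_mul (by norm_num)), hsymm,
    thetaOddPrimeToThree, expand_weightSeries,
    weightSeries_mul northcott_natAbs_sq (northcott_const_mul northcott_natAbs_sq (by norm_num))]

theorem thetaOddPrimeToThree_ne_zero : thetaOddPrimeToThree ≠ 0 := by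
  rw [thetaOddPrimeToThree_eq]
  refine mul_ne_zero X_ne_zero fun h ↦ ?_
  simpa [constantCoeff_pentagonalSeries] using congrArg constantCoeff h

theorem expand_three_thetaOdd :
    expand 3 three_ne_zero thetaOdd = thetaOddPrimeToThree ^ 3 := by
  refine mul_left_cancel₀ thetaOddPrimeToThree_ne_zero ?_
  rw [thetaOddPrimeToThree_mul_expand_three, expand_four_zmod_two]
  ring

theorem pentagonalSeries_mul_expand_five :
    pentagonalSeries (ZMod 2) * expand 5 (by norm_num) (pentagonalSeries (ZMod 2)) =
      pentagonalSeries (ZMod 2) ^ 6 +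
        X * expand 5 (by norm_num) (pentagonalSeries (ZMod 2)) ^ 6 := by
  have h6 : expand 6 (by norm_num) thetaOdd = thetaOddPrimeToThree ^ 6 := by
    rw [expand_two_mul_zmod_two three_ne_zero, expand_three_thetaOdd, ← pow_mul]
  have h30 : expand 30 (by norm_num) thetaOdd =
      expand 5 (by norm_num) thetaOddPrimeToThree ^ 6 := by
    rw [← map_pow, ← h6, ← expand_mul]
  have h := thetaOddPrimeToThree_mul_expand_five
  rw [h6, h30, thetaOddPrimeToThree_eq, map_mul, expand_X, expand_comm] at h
  refine expand_injective (m := 24) (by norm_num) (mul_left_cancel₀ (pow_ne_zero 6 X_ne_zero) ?_)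
  simp only [map_mul, map_add, map_pow, expand_X]
  linear_combination h

end Theta

section PentagonalDissection

theorem natCast_pentagonal_mul_add_one_of_ring (R : Type*) [CommRing R] (k : ℤ) :
    24 * (pentagonal k : R) + 1 = (6 * k - 1) ^ 2 := by
  exact_mod_cast congrArg (Int.cast : ℤ → R) (natCast_pentagonal_mul_add_one k)

theorem pentagonal_one_sub_five_mul (k : ℤ) :
    pentagonal (1 - 5 * k) = 5 * (5 * pentagonal k) + 1 := by
  have h := natCast_pentagonal_mul_add_one k
  have h' := natCast_pentagonal_mul_add_one (1 - 5 * k)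
  zify
  linarith

theorem pentagonal_mod_five_lt_three (k : ℤ) : pentagonal k % 5 < 3 := by
  have h : ∀ p l : ZMod 5, 24 * p + 1 = (6 * l - 1) ^ 2 → p.val < 3 := by decide
  simpa only [ZMod.val_natCast] using h _ _ (natCast_pentagonal_mul_add_one_of_ring (ZMod 5) k)

theorem exists_eq_one_sub_five_mul {k : ℤ} (hk : pentagonal k % 5 = 1) : ∃ j, k = 1 - 5 * j := by
  have h : ∀ p l : ZMod 5, 24 * p + 1 = (6 * l - 1) ^ 2 → p.val = 1 → l = 1 := by decide
  have hk1 : (k : ZMod 5) = (1 : ℤ) := by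
    simpa using
      h _ _ (natCast_pentagonal_mul_add_one_of_ring (ZMod 5) k) (by rwa [ZMod.val_natCast])
  obtain ⟨j, hj⟩ := (ZMod.intCast_eq_intCast_iff_dvd_sub k 1 5).1 hk1
  exact ⟨j, by push_cast at hj; linarith⟩

theorem pentagonal_mod_seven_mem (k : ℤ) : pentagonal k % 7 ∈ ({0, 1, 2, 5} : Finset ℕ) := by
  have h : ∀ p l : ZMod 7, 24 * p + 1 = (6 * l - 1) ^ 2 → p.val ∈ ({0, 1, 2, 5} : Finset ℕ) := by
    decide
  simpa only [ZMod.val_natCast] using h _ _ (natCast_pentagonal_mul_add_one_of_ring (ZMod 7) k)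

theorem sq_mul_add_pow_four_mul_of_mul_eq_pow_six_add {R : Type*} [CommRing R] [CharP R 2]
    {x f c p q : R} (hp : p * f = 1) (hq : q * c = 1) (h : f * c = f ^ 6 + x * c ^ 6) :
    x ^ 2 * c ^ 6 * p ^ 5 + x ^ 4 * c ^ 20 * p ^ 27 = p ^ 23 + f ^ 2 * q ^ 5 + x * f := by
  have two0 : (2 : R) = 0 := CharTwo.two_eq_zero
  have hpq (i j : ℕ) : (p * f) ^ i * (q * c) ^ j = 1 := by rw [hp, hq, one_pow, one_pow, one_mul]
  have hx : x * c ^ 6 = f * c + f ^ 6 := by linear_combination -h - f ^ 6 * two0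
  have hx2 : x ^ 2 * c ^ 12 = f ^ 2 * c ^ 2 + f ^ 12 := by
    linear_combination congrArg (· ^ 2) hx + f ^ 7 * c * two0
  have hx4 : x ^ 4 * c ^ 24 = f ^ 4 * c ^ 4 + f ^ 24 := by
    linear_combination congrArg (· ^ 2) hx2 + f ^ 14 * c ^ 2 * two0
  have h1 : x ^ 2 * c ^ 6 * p ^ 5 = p ^ 3 * q ^ 4 + f ^ 7 * q ^ 6 := by
    linear_combination q ^ 6 * p ^ 5 * hx2 - x ^ 2 * c ^ 6 * p ^ 5 * hpq 0 6
      + p ^ 3 * q ^ 4 * hpq 2 2 + f ^ 7 * q ^ 6 * hpq 5 0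
  have h2 : x ^ 4 * c ^ 20 * p ^ 27 = p ^ 23 + p ^ 3 * q ^ 4 := by
    linear_combination q ^ 4 * p ^ 27 * hx4 - x ^ 4 * c ^ 20 * p ^ 27 * hpq 0 4
      + p ^ 23 * hpq 4 4 + p ^ 3 * q ^ 4 * hpq 24 0
  have h3 : f ^ 7 * q ^ 6 = f ^ 2 * q ^ 5 + x * f := by
    linear_combination (-f * q ^ 6) * h + f ^ 2 * q ^ 5 * hq - x * f * hpq 0 6 - x * f * two0
  linear_combination h1 + h2 + h3 + p ^ 3 * q ^ 4 * two0

local notation "F" => pentagonalSeries (ZMod 2)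

local notation "φ" => expand (R := ZMod 2) 5 (by norm_num)

theorem coeff_pentagonalSeries_zmod_two_eq_iff {m n : ℕ} :
    coeff m F = coeff n F ↔ (m ∈ Set.range pentagonal ↔ n ∈ Set.range pentagonal) := by
  have h01 (a b : ZMod 2) : a = b ↔ (a = 0 ↔ b = 0) := by
    revert a b
    decide
  rw [h01, coeff_pentagonalSeries_eq_zero_iff, coeff_pentagonalSeries_eq_zero_iff, not_iff_not]

theorem multisection_five_one_pentagonalSeries : multisection 5 1 F = φ F := by
  ext n
  rw [coeff_multisection, coeff_expand]
  split_ifs with h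
  · obtain ⟨n, rfl⟩ := h
    rw [Nat.mul_div_cancel_left n (by norm_num), coeff_pentagonalSeries_zmod_two_eq_iff]
    refine ⟨fun ⟨k, hk⟩ ↦ ?_, fun ⟨j, hj⟩ ↦ ⟨1 - 5 * j, by rw [pentagonal_one_sub_five_mul, hj]⟩⟩
    obtain ⟨j, rfl⟩ := exists_eq_one_sub_five_mul (k := k) (by omega)
    rw [pentagonal_one_sub_five_mul] at hk
    exact ⟨j, by omega⟩
  · refine coeff_pentagonalSeries_eq_zero _ fun ⟨k, hk⟩ ↦ h ?_
    obtain ⟨j, rfl⟩ := exists_eq_one_sub_five_mul (k := k) (by omega)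
    rw [pentagonal_one_sub_five_mul] at hk
    exact ⟨pentagonal j, by omega⟩

theorem multisection_five_pentagonalSeries_eq_zero {r : ℕ} (hr : 3 ≤ r) (hr5 : r < 5) :
    multisection 5 r F = 0 := by
  ext n
  rw [coeff_multisection, coeff_pentagonalSeries_eq_zero, map_zero]
  rintro ⟨k, hk⟩
  have := pentagonal_mod_five_lt_three k
  omega

theorem coeff_pentagonalSeries_eq_zero_of_mod_seven {n : ℕ}
    (hn : n % 7 = 3 ∨ n % 7 = 4 ∨ n % 7 = 6) : coeff n F = 0 := by
  refine coeff_pentagonalSeries_eq_zero _ ?_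
  rintro ⟨k, rfl⟩
  have := pentagonal_mod_seven_mem k
  simp only [Finset.mem_insert, Finset.mem_singleton] at this
  omega

local notation "F₀" => multisection 5 0 F

local notation "F₂" => multisection 5 2 F

theorem pentagonalSeries_eq_dissection : F = φ F₀ + X * φ (φ F) + X ^ 2 * φ F₂ := by
  conv_lhs => rw [eq_sum_X_pow_mul_expand_multisection (m := 5) (by norm_num) F]
  simp only [Finset.sum_range_succ, Finset.sum_range_zero, zero_add, pow_zero, one_mul, pow_one,
    multisection_five_one_pentagonalSeries,
    multisection_five_pentagonalSeries_eq_zero (le_refl 3) (by norm_num),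
    multisection_five_pentagonalSeries_eq_zero (Nat.le_succ 3) (by norm_num), map_zero, mul_zero,
    add_zero]

-- The factors `X ^ 0` and `X ^ 1` below let `multisection_X_pow_mul_expand` rewrite every summand.
theorem pentagonalSeries_sq_eq_dissection :
    F ^ 2 = X ^ 0 * φ (F₀ ^ 2) + X ^ 2 * φ (φ F ^ 2) + X ^ 4 * φ (F₂ ^ 2) := by
  conv_lhs => rw [pentagonalSeries_eq_dissection]
  simp only [CharTwo.add_sq, map_pow]
  ring

theorem pentagonalSeries_pow_five_eq_dissection :
    F ^ 5 = X ^ 0 * φ (F₀ ^ 5) + X ^ 1 * φ (F₀ ^ 4 * φ F) + X ^ 2 * φ (F₀ ^ 4 * F₂) +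
      X ^ 4 * φ (F₀ * φ F ^ 4) + X ^ 5 * φ (φ F ^ 5) + X ^ 6 * φ (φ F ^ 4 * F₂) +
      X ^ 8 * φ (F₀ * F₂ ^ 4) + X ^ 9 * φ (F₂ ^ 4 * φ F) + X ^ 10 * φ (F₂ ^ 5) := by
  have h : F ^ 5 = (F ^ 2) ^ 2 * F := by ring
  rw [h, pentagonalSeries_sq_eq_dissection]
  conv_lhs => enter [2]; rw [pentagonalSeries_eq_dissection]
  simp only [CharTwo.add_sq, map_pow, map_mul]
  ring

theorem pentagonalSeries_pow_six_eq_dissection :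
    F ^ 6 = X ^ 0 * φ (F₀ ^ 6) + X ^ 2 * φ (F₀ ^ 4 * φ F ^ 2) +
      X ^ 4 * φ (F₀ ^ 4 * F₂ ^ 2 + F₀ ^ 2 * φ F ^ 4) + X ^ 6 * φ (φ F ^ 6) +
      X ^ 8 * φ (F₀ ^ 2 * F₂ ^ 4 + F₂ ^ 2 * φ F ^ 4) + X ^ 10 * φ (F₂ ^ 4 * φ F ^ 2) +
      X ^ 12 * φ (F₂ ^ 6) := by
  have h : F ^ 6 = (F ^ 2) ^ 2 * F ^ 2 := by ring
  rw [h, pentagonalSeries_sq_eq_dissection]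
  simp only [CharTwo.add_sq, map_pow, map_mul, map_add]
  ring

theorem multisection_five_zero_pentagonalSeries_ne_zero : F₀ ≠ 0 := by
  intro h
  simpa [constantCoeff_pentagonalSeries] using congrArg (coeff 0) h

theorem multisection_five_zero_mul_multisection_five_two : F₀ * F₂ = φ F ^ 2 := by
  have h := congrArg (multisection 5 4) pentagonalSeries_mul_expand_five
  rw [mul_comm, multisection_expand_mul _ (by norm_num),
    multisection_five_pentagonalSeries_eq_zero (by norm_num) (by norm_num), mul_zero, ← map_pow,
    ← pow_one X, map_add, pentagonalSeries_pow_six_eq_dissection] at h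
  simp only [map_add (multisection 5 4),
    multisection_X_pow_mul_expand (m := 5) (r := 4) (by norm_num) _ (by norm_num), Nat.reduceMod,
    Nat.reduceDiv, Nat.reduceEqDiff, reduceIte, add_zero, zero_add] at h
  have hsq : (F₀ * F₂) ^ 2 = (φ F ^ 2) ^ 2 := by
    refine mul_left_cancel₀ (pow_ne_zero 2 multisection_five_zero_pentagonalSeries_ne_zero) ?_
    linear_combination -h - φ F ^ 4 * F₀ ^ 2 * CharTwo.two_eq_zero (R := (ZMod 2)⟦X⟧)
  exact CharTwo.sq_inj.1 hsq

theorem pentagonalSeries_eq_multisection_pow_five_add : F = F₀ ^ 5 + X ^ 2 * F₂ ^ 5 := by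
  have h := congrArg (multisection 5 0) pentagonalSeries_mul_expand_five
  rw [mul_comm, multisection_expand_mul _ (by norm_num), ← map_pow,
    ← pow_one X, map_add, pentagonalSeries_pow_six_eq_dissection] at h
  simp only [map_add (multisection 5 0),
    multisection_X_pow_mul_expand (m := 5) (r := 0) (by norm_num) _ (by norm_num), Nat.reduceMod,
    Nat.reduceDiv, Nat.reduceEqDiff, reduceIte, OfNat.ofNat_ne_zero, add_zero] at h
  refine mul_left_cancel₀ multisection_five_zero_pentagonalSeries_ne_zero ?_
  linear_combination h - X ^ 2 * F₂ ^ 4 * multisection_five_zero_mul_multisection_five_two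

theorem multisection_five_zero_pentagonalSeries_pow_five :
    multisection 5 0 (F ^ 5) = F + X * φ F ^ 5 := by
  rw [pentagonalSeries_pow_five_eq_dissection]
  simp only [map_add,
    multisection_X_pow_mul_expand (m := 5) (r := 0) (by norm_num) _ (by norm_num), Nat.reduceMod,
    Nat.reduceDiv, Nat.reduceEqDiff, reduceIte, OfNat.ofNat_ne_zero, add_zero]
  linear_combination -pentagonalSeries_eq_multisection_pow_five_add

local notation "P" => partitionSeries (ZMod 2)

theorem X_mul_expand_five_pow_six_mul_partitionSeries_pow_succ (t : ℕ) :
    X * (φ (F ^ 6) * P ^ (t + 1)) = F ^ 5 * P ^ t + φ F * P ^ t := by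
  rw [map_pow]
  linear_combination (-P ^ (t + 1)) * pentagonalSeries_mul_expand_five
    + (φ F - F ^ 5) * P ^ t * partitionSeries_mul_pentagonalSeries (ZMod 2)
    - F ^ 5 * P ^ t * CharTwo.two_eq_zero (R := (ZMod 2)⟦X⟧)

theorem multisection_five_four_partitionSeries : multisection 5 4 P = φ F ^ 5 * P ^ 6 := by
  have hU := congrArg (multisection 5 0) (X_mul_expand_five_pow_six_mul_partitionSeries_pow_succ 0)
  rw [pow_zero, pow_one, mul_one, mul_one, multisection_zero_X_mul,
    multisection_expand_mul _ (by norm_num), map_add,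
    multisection_five_zero_pentagonalSeries_pow_five, multisection_zero_expand] at hU
  have hF : F ^ 6 * multisection 5 4 P = φ F ^ 5 := by
    refine mul_left_cancel₀ X_ne_zero ?_
    linear_combination hU + F * CharTwo.two_eq_zero (R := (ZMod 2)⟦X⟧)
  linear_combination P ^ 6 * hF
    - multisection 5 4 P * partitionSeries_mul_pentagonalSeries_pow (ZMod 2) 6

theorem multisection_five_one_partitionSeries_pow_four :
    multisection 5 1 (P ^ 4) = X ^ 3 * φ F ^ 20 * P ^ 24 := by
  rw [← expand_four_zmod_two, multisection_expand _ (by norm_num) (by norm_num)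
    (show 4 < 5 by norm_num) (q := 3) (by norm_num), multisection_five_four_partitionSeries,
    expand_four_zmod_two]
  ring

theorem pow_six_mul_multisection_partitionSeries_pow_five :
    F ^ 6 * multisection 5 0 (P ^ 5) = φ F + X ^ 3 * F * φ F ^ 20 * P ^ 24 := by
  have h : X * (φ (F ^ 6) * P ^ 5) = F + φ F * P ^ 4 := by
    linear_combination X_mul_expand_five_pow_six_mul_partitionSeries_pow_succ 4
      + F * partitionSeries_mul_pentagonalSeries_pow (ZMod 2) 4
  have hU := congrArg (multisection 5 1) h
  rw [multisection_succ_X_mul, multisection_expand_mul _ (by norm_num), map_add,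
    multisection_expand_mul _ (by norm_num), multisection_five_one_pentagonalSeries,
    multisection_five_one_partitionSeries_pow_four] at hU
  linear_combination hU

theorem pow_twelve_mul_multisection_partitionSeries_pow_six :
    F ^ 12 * multisection 5 4 (P ^ 6) = φ F ^ 6 + X ^ 2 * F ^ 2 * φ F ^ 20 * P ^ 24 := by
  have h : X * (φ (F ^ 6) * P ^ 6) = φ 1 + φ F * P ^ 5 := by
    rw [map_one]
    linear_combination X_mul_expand_five_pow_six_mul_partitionSeries_pow_succ 5
      + partitionSeries_mul_pentagonalSeries_pow (ZMod 2) 5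
  have hU := congrArg (multisection 5 0) h
  rw [multisection_zero_X_mul, multisection_expand_mul _ (by norm_num), map_add,
    multisection_zero_expand, multisection_expand_mul _ (by norm_num)] at hU
  refine mul_left_cancel₀ X_ne_zero ?_
  linear_combination F ^ 6 * hU + F * pow_six_mul_multisection_partitionSeries_pow_five
    + pentagonalSeries_mul_expand_five + F ^ 6 * CharTwo.two_eq_zero (R := (ZMod 2)⟦X⟧)

local notation "B₅₀" => mk fun n ↦ (numRegularPartitions 50 n : ZMod 2)

theorem mk_numRegularPartitions_fifty : B₅₀ = φ (φ F ^ 2) * P := by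
  have h := mk_numRegularPartitions_mul_pentagonalSeries (ZMod 2) (m := 50) (by norm_num)
  rw [expand_two_mul_zmod_two (d := 25) (by norm_num),
    expand_mul 5 (by norm_num) 5 (by norm_num)] at h
  rw [map_pow, ← h, mul_assoc, mul_comm F, partitionSeries_mul_pentagonalSeries, mul_one]

theorem multisection_five_four_mk_numRegularPartitions_fifty :
    multisection 5 4 B₅₀ = φ (F ^ 7) * P ^ 6 := by
  rw [mk_numRegularPartitions_fifty, multisection_expand_mul _ (by norm_num),
    multisection_five_four_partitionSeries, map_pow]
  ring

theorem X_sq_mul_multisection_multisection_mk_numRegularPartitions_fifty :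
    X ^ 2 * multisection 5 4 (multisection 5 4 B₅₀) = P ^ 23 + F ^ 2 * φ P ^ 5 + X * F := by
  have hP := partitionSeries_mul_pentagonalSeries (ZMod 2)
  have hQ : φ P * φ F = 1 := by rw [← map_mul, hP, map_one]
  have hPF := partitionSeries_mul_pentagonalSeries_pow (ZMod 2)
  rw [← sq_mul_add_pow_four_mul_of_mul_eq_pow_six_add hP hQ pentagonalSeries_mul_expand_five,
    multisection_five_four_mk_numRegularPartitions_fifty, multisection_expand_mul _ (by norm_num)]
  have hU : multisection 5 4 (P ^ 6) = φ F ^ 6 * P ^ 12 + X ^ 2 * φ F ^ 20 * P ^ 34 := by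
    linear_combination P ^ 12 * pow_twelve_mul_multisection_partitionSeries_pow_six
      - multisection 5 4 (P ^ 6) * hPF 12 + X ^ 2 * φ F ^ 20 * P ^ 34 * hPF 2
  rw [hU]
  linear_combination (X ^ 2 * φ F ^ 6 * P ^ 5 + X ^ 4 * φ F ^ 20 * P ^ 27) * hPF 7

theorem coeff_pentagonalSeries_sq_mul_expand_five_eq_zero {n : ℕ} (hn : n % 5 = 1 ∨ n % 5 = 3)
    (g : (ZMod 2)⟦X⟧) : coeff n (F ^ 2 * φ g) = 0 := by
  have h : multisection 5 (n % 5) (F ^ 2) = 0 := by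
    rw [pentagonalSeries_sq_eq_dissection]
    simp only [map_add,
      multisection_X_pow_mul_expand (m := 5) (by norm_num) _ (Nat.mod_lt n (by norm_num))]
    rcases hn with hn | hn <;> simp [hn]
  rw [← Nat.div_add_mod n 5, ← coeff_multisection, mul_comm,
    multisection_expand_mul _ (Nat.mod_lt n (by norm_num)), h, mul_zero, map_zero]

theorem numRegularPartitions_fifty_modEq {n : ℕ} (h5 : n % 5 = 1 ∨ n % 5 = 3)
    (h7 : n % 7 = 0 ∨ n % 7 = 4 ∨ n % 7 = 5) :
    numRegularPartitions 50 (25 * n - 26) ≡ numMultipartitions 23 n [MOD 2] := by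
  obtain ⟨n, rfl⟩ : ∃ k, n = k + 2 := ⟨n - 2, by omega⟩
  have h := congrArg (coeff (n + 2))
    X_sq_mul_multisection_multisection_mk_numRegularPartitions_fifty
  rw [coeff_X_pow_mul, coeff_multisection, coeff_multisection, ← mk_numMultipartitions, map_add,
    map_add, ← map_pow, coeff_pentagonalSeries_sq_mul_expand_five_eq_zero h5, coeff_succ_X_mul,
    coeff_pentagonalSeries_eq_zero_of_mod_seven (by omega), add_zero, add_zero, coeff_mk,
    coeff_mk] at h
  rw [← ZMod.natCast_eq_natCast_iff, ← h]
  congr 2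
  omega

end PentagonalDissection

end RegularPartitionParity

theorem stmt_7 (n : ℕ) :
    (∀ B ∈ ({11, 18, 21, 26, 28, 33} : Finset ℕ),
      numRegularPartitions 50 (875 * n + 25 * B - 26) ≡
        numMultipartitions 23 (35 * n + B) [MOD 2]) := by
  intro B hB
  simp only [Finset.mem_insert, Finset.mem_singleton] at hB
  rw [show 875 * n + 25 * B - 26 = 25 * (35 * n + B) - 26 by omega]
  exact RegularPartitionParity.numRegularPartitions_fifty_modEq (by omega) (by omega)
end

section
/- For every natural number n and every B in {6, 12, 17, 26, 27, 31}, the number of 100-regular partitions satisfies b_100(875n + 25B − 26) ≡ p_21(35n + B) (mod 2). -/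
/-!
Modulo 2, write `f_k = ∏ (1 - q ^ (k * n))` over `n ≥ 1`. The generating function of the
`100`-regular partitions is `f₁₀₀ / f₁ = f₂₅ ^ 4 / f₁`.

Counting the representations of integers by `x² + 2 y²` and `x² + 5 y²`, with the help of
`(x - D y)² + D (x + y)² = (D + 1) (x² + D y²)`, shows that `f₁ ^ 3` is the theta series of the
triangular numbers and that `f₁ f₅ = f₁ ^ 6 + q f₅ ^ 6`. By the latter and its image under
`q ↦ q ^ 5`, both `f₁` and `q f₂₅` are roots of `t ^ 6 - f₅ t + q f₅ ^ 6`; dividing out the second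
root writes `1 / f₁` as a multiple, by a series in `q ^ 5`, of a polynomial in `f₁` and `q f₂₅`. For
`k ≤ 4` the terms of `f₁ ^ k` with exponent `≡ k` modulo `5` add up to `(q f₂₅) ^ k`, so this is an
explicit `5`-dissection. Applied twice, it gives
`∑ b₁₀₀(25 n + 24) q ^ (n + 2) = 1 / f₁ ^ 21 + q f₁ ^ 3 + f₁ ^ 4 / f₅ ^ 5`.
The last term has no exponents `≡ 1, 2` modulo `5`, and the exponents `m` of `q f₁ ^ 3` are those
for which `8 m - 7` is a square, which forces `m ≡ 0, 1, 2, 4` modulo `7`.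
-/

section GeneratingFunctions

open PowerSeries Finset Filter WithPiTopology

variable (R : Type*)

/-- The generating function of partitions. -/
noncomputable def partitionSeries [Semiring R] : R⟦X⟧ :=
  .mk fun n ↦ (Fintype.card n.Partition : R)

/-- The generating function of `m`-regular partitions. -/
noncomputable def regularPartitionSeries [Semiring R] (m : ℕ) : R⟦X⟧ :=
  .mk fun n ↦ (numRegularPartitions m n : R)

/-- A `t`-multipartition is a weak composition of its size into `t` parts together with a partition
of each part. -/
noncomputable def multipartitionEquiv (t n : ℕ) :
    {f : Fin t → Σ k : ℕ, k.Partition // ∑ i, (f i).1 = n} ≃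
      Σ l : finsuppAntidiag (univ : Finset (Fin t)) n, ∀ i, (l.1 i).Partition where
  toFun f := ⟨⟨Finsupp.equivFunOnFinite.symm fun i ↦ (f.1 i).1,
    mem_finsuppAntidiag.mpr ⟨f.2, subset_univ _⟩⟩, fun i ↦ (f.1 i).2⟩
  invFun g := ⟨fun i ↦ ⟨g.1.1 i, g.2 i⟩, (mem_finsuppAntidiag.mp g.1.2).1⟩
  left_inv _ := rfl
  right_inv _ := Sigma.ext (Subtype.ext (Finsupp.ext fun _ ↦ rfl)) HEq.rfl

theorem coeff_partitionSeries_pow [CommSemiring R] (t n : ℕ) :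
    coeff n (partitionSeries R ^ t) = numMultipartitions t n := by
  have hcard : numMultipartitions t n =
      ∑ l ∈ finsuppAntidiag (univ : Finset (Fin t)) n, ∏ i, Fintype.card (l i).Partition := by
    rw [numMultipartitions, Nat.card_congr (multipartitionEquiv t n), Nat.card_eq_fintype_card,
      Fintype.card_sigma, ← sum_coe_sort (finsuppAntidiag univ n)]
    simp_rw [Fintype.card_pi]
  rw [← Fin.prod_const, coeff_prod, hcard]
  push_cast
  simp only [partitionSeries, coeff_mk]

variable [CommRing R]

theorem hasProd_one_sub_X_pow_mul [TopologicalSpace R] {m : ℕ} (hm : m ≠ 0) :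
    HasProd (fun i : ℕ ↦ (1 - X ^ ((i + 1) * m) : R⟦X⟧)) (expand m hm (pentagonalSeries R)) := by
  have hprod (s : Finset ℕ) :
      ∏ i ∈ s, (1 - X ^ ((i + 1) * m) : R⟦X⟧) = expand m hm (∏ i ∈ s, (1 - X ^ (i + 1))) := by
    simp only [map_prod, map_sub, map_one, map_pow, expand_X, ← pow_mul, mul_comm m]
  rw [HasProd, tendsto_iff_coeff_tendsto]
  refine fun n ↦ tendsto_nhds_of_eventually_eq ?_
  simp only [SummationFilter.unconditional_filter]
  filter_upwards [coeff_prod_one_sub_X_pow_eventually_eq R (n / m)] with s hs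
  rw [hprod, coeff_expand, coeff_expand, hs]

theorem regularPartitionSeries_mul_pentagonalSeries {m : ℕ} (hm : m ≠ 0) :
    regularPartitionSeries R m * pentagonalSeries R = expand m hm (pentagonalSeries R) := by
  let _ : TopologicalSpace R := ⊥
  have _ : DiscreteTopology R := ⟨rfl⟩
  have hglaisher : regularPartitionSeries R m =
      .mk fun n ↦ (#(Nat.Partition.countRestricted n m) : R) := by
    ext n
    rw [regularPartitionSeries, coeff_mk, coeff_mk,
      ← Nat.Partition.card_restricted_eq_card_countRestricted n (Nat.pos_of_ne_zero hm),
      numRegularPartitions, Nat.card_eq_fintype_card, Fintype.card_subtype,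
      Nat.Partition.restricted]
  have hgeom (i : ℕ) :
      (∑ j ∈ range m, X ^ ((i + 1) * j)) * (1 - X ^ (i + 1)) = (1 - X ^ ((i + 1) * m) : R⟦X⟧) := by
    simp_rw [pow_mul, geom_sum_mul_neg]
  have hreg := (Nat.Partition.hasProd_powerSeriesMk_card_countRestricted R
    (Nat.pos_of_ne_zero hm)).mul (hasProd_one_sub_X_pow R)
  simp_rw [hgeom, ← hglaisher] at hreg
  exact hreg.unique (hasProd_one_sub_X_pow_mul R hm)

theorem partitionSeries_mul_pentagonalSeries :
    partitionSeries R * pentagonalSeries R = 1 := by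
  let _ : TopologicalSpace R := ⊥
  have _ : DiscreteTopology R := ⟨rfl⟩
  have hpart := Nat.Partition.hasProd_powerSeriesMk_card_restricted R fun _ ↦ True
  have hgeom (i : ℕ) : (∑' j : ℕ, X ^ ((i + 1) * j)) * (1 - X ^ (i + 1)) = (1 : R⟦X⟧) := by
    simp_rw [pow_mul]
    exact tsum_pow_mul_one_sub_of_constantCoeff_eq_zero (by simp)
  simp only [Nat.Partition.restricted, implies_true, filter_true, card_univ, if_true] at hpart
  have hone := hpart.mul (hasProd_one_sub_X_pow R)
  simp_rw [hgeom] at hone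
  exact hone.unique hasProd_one

end GeneratingFunctions

section Representations

open Finset

theorem card_eq_card_zero_add_two_mul_card_pos {α G : Type*} [AddCommGroup G] [LinearOrder G]
    [IsOrderedAddMonoid G] {s : Finset α} {σ : α → α} {f : α → G} (hσ : σ.Involutive)
    (hs : ∀ a ∈ s, σ a ∈ s) (hf : ∀ a, f (σ a) = -f a) :
    #s = #{a ∈ s | f a = 0} + 2 * #{a ∈ s | 0 < f a} := by
  have hneg : #{a ∈ s | f a < 0} = #{a ∈ s | 0 < f a} := by
    refine card_nbij' σ σ ?_ ?_ (fun a _ ↦ hσ a) (fun a _ ↦ hσ a) <;>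
    · intro a ha
      simp only [coe_filter, Set.mem_ofPred_eq, hf, neg_pos, neg_lt_zero] at ha ⊢
      exact ⟨hs a ha.1, ha.2⟩
  have hlt : #{a ∈ s | f a ≠ 0} = #{a ∈ s | f a < 0} + #{a ∈ s | 0 < f a} := by
    rw [← card_filter_add_card_filter_not (s := {a ∈ s | f a ≠ 0}) (fun a ↦ f a < 0),
      filter_filter, filter_filter]
    congr 2 <;> refine filter_congr fun a _ ↦ ?_ <;> grind
  rw [← card_filter_add_card_filter_not (s := s) (fun a ↦ f a = 0), hlt, hneg, two_mul]

theorem card_of_forall_neg_mem {s : Finset (ℤ × ℤ)} (hfst : ∀ p ∈ s, (-p.1, p.2) ∈ s)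
    (hsnd : ∀ p ∈ s, (p.1, -p.2) ∈ s) (hzero : (0, 0) ∉ s) :
    #s = 2 * (#{p ∈ s | 0 < p.1 ∧ p.2 = 0} + #{p ∈ s | p.1 = 0 ∧ 0 < p.2}) +
      4 * #{p ∈ s | 0 < p.1 ∧ 0 < p.2} := by
  have hnegSnd : (fun p : ℤ × ℤ ↦ (p.1, -p.2)).Involutive := fun p ↦ by simp
  have hall := card_eq_card_zero_add_two_mul_card_pos (σ := fun p : ℤ × ℤ ↦ (-p.1, p.2))
    (f := Prod.fst) (fun p ↦ by simp) hfst fun _ ↦ rfl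
  have haxis := card_eq_card_zero_add_two_mul_card_pos (s := {p ∈ s | p.1 = 0}) (f := Prod.snd)
    hnegSnd (by grind) fun _ ↦ rfl
  have hhalf := card_eq_card_zero_add_two_mul_card_pos (s := {p ∈ s | 0 < p.1}) (f := Prod.snd)
    hnegSnd (by grind) fun _ ↦ rfl
  have horigin : {p ∈ s | p.1 = 0 ∧ p.2 = 0} = ∅ := by grind
  simp only [filter_filter, horigin, card_empty] at haxis hhalf
  lia

/-- The solutions of `x² + D y² = M` in integers, for `1 ≤ D`: the box then contains all of
them. -/
noncomputable def representations (D M : ℤ) : Finset (ℤ × ℤ) :=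
  {p ∈ Icc (-M) M ×ˢ Icc (-M) M | p.1 ^ 2 + D * p.2 ^ 2 = M}

variable {D M m : ℤ}

theorem mem_representations (hD : 1 ≤ D) {p : ℤ × ℤ} :
    p ∈ representations D M ↔ p.1 ^ 2 + D * p.2 ^ 2 = M := by
  simp only [representations, mem_filter, mem_product, mem_Icc, and_iff_right_iff_imp]
  intro h
  have hx := Int.natAbs_le_self_sq p.1
  have hy := Int.natAbs_le_self_sq p.2
  have hDy : p.2 ^ 2 ≤ D * p.2 ^ 2 := le_mul_of_one_le_left (sq_nonneg _) hD
  lia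

theorem card_eq_ite_of_subsingleton {α : Type*} {s : Finset α} {q : Prop} [Decidable q]
    (hs : (s : Set α).Subsingleton) (hq : s.Nonempty ↔ q) : #s = if q then 1 else 0 := by
  split_ifs with h
  · exact le_antisymm (card_le_one.mpr fun _ ha _ hb ↦ hs ha hb) (card_pos.mpr (hq.mpr h))
  · exact card_eq_zero.mpr (not_nonempty_iff_eq_empty.mp (mt hq.mp h))

theorem card_representations_modEq_four (hD : 1 ≤ D) (hM : M ≠ 0) [Decidable (∃ t, M = D * t ^ 2)] :
    #(representations D M) ≡
      2 * ((if IsSquare M then 1 else 0) + if ∃ t, M = D * t ^ 2 then 1 else 0) [MOD 4] := by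
  have hfst : #{p ∈ representations D M | 0 < p.1 ∧ p.2 = 0} = if IsSquare M then 1 else 0 := by
    refine card_eq_ite_of_subsingleton (fun p hp q hq ↦ ?_) ⟨fun ⟨p, hp⟩ ↦ ?_, ?_⟩
    · simp only [coe_filter, mem_representations hD, Set.mem_ofPred_eq] at hp hq
      refine Prod.ext ((sq_eq_sq₀ hp.2.1.le hq.2.1.le).mp ?_) (by lia)
      simpa [hp.2.2, hq.2.2] using hp.1.trans hq.1.symm
    · simp only [mem_filter, mem_representations hD] at hp
      exact ⟨p.1, by rw [← hp.1, hp.2.2]; ring⟩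
    · rintro ⟨r, rfl⟩
      refine ⟨(|r|, 0), ?_⟩
      simpa [mem_representations hD, ← sq] using hM
  have hsnd : #{p ∈ representations D M | p.1 = 0 ∧ 0 < p.2} =
      if ∃ t, M = D * t ^ 2 then 1 else 0 := by
    refine card_eq_ite_of_subsingleton (fun p hp q hq ↦ ?_) ⟨fun ⟨p, hp⟩ ↦ ?_, ?_⟩
    · simp only [coe_filter, mem_representations hD, Set.mem_ofPred_eq] at hp hq
      refine Prod.ext (by lia) ((sq_eq_sq₀ hp.2.2.le hq.2.2.le).mp ?_)
      have hsq := hp.1.trans hq.1.symm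
      rw [hp.2.1, hq.2.1] at hsq
      exact mul_left_cancel₀ (by lia) (add_left_cancel hsq)
    · simp only [mem_filter, mem_representations hD] at hp
      exact ⟨p.2, by rw [← hp.1, hp.2.1]; ring⟩
    · rintro ⟨t, rfl⟩
      refine ⟨(0, |t|), ?_⟩
      simpa [mem_representations hD] using right_ne_zero_of_mul hM
  rw [← hfst, ← hsnd, card_of_forall_neg_mem (by simp [mem_representations hD])
    (by simp [mem_representations hD]) (by simpa [mem_representations hD] using hM.symm)]
  exact Nat.add_mul_mod_self_left ..

theorem sq_emod_four (x : ℤ) : x ^ 2 % 4 = x % 2 := by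
  rcases Int.even_or_odd x with hx | hx
  · rw [Int.even_iff.mp hx,
      Int.emod_eq_zero_of_dvd (by simpa using pow_dvd_pow_of_dvd hx.two_dvd 2)]
  · rw [Int.odd_iff.mp hx, Int.sq_mod_four_eq_one_of_odd hx]

theorem sq_emod_three (x : ℤ) : x ^ 2 % 3 = if x % 3 = 0 then 0 else 1 := by
  have : x % 3 = 0 ∨ x % 3 = 1 ∨ x % 3 = 2 := by lia
  rcases this with h | h | h <;> simp [sq, Int.mul_emod, h]

theorem emod_three_eq_zero_iff_of_mem_representations (hD : D = 2 ∨ D = 5) {p : ℤ × ℤ}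
    (hp : p ∈ representations D ((D + 1) * m)) : p.1 % 3 = 0 ↔ p.2 % 3 = 0 := by
  rw [mem_representations (by lia)] at hp
  have hx := sq_emod_three p.1
  have hy := sq_emod_three p.2
  rcases hD with rfl | rfl <;> split_ifs at hx hy <;> lia

theorem emod_two_of_mem_representations (hD : D = 2 ∨ D = 5) (hm : m % 4 = 1) {p : ℤ × ℤ}
    (hp : p ∈ representations D ((D + 1) * m)) : p.1 % 2 = 1 ∧ p.2 % 2 = 1 := by
  rw [mem_representations (by lia)] at hp
  have hx := sq_emod_four p.1
  have hy := sq_emod_four p.2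
  rcases hD with rfl | rfl <;> lia

theorem card_representations_emod_three_eq (hD : D = 2 ∨ D = 5) (hm : m % 4 = 1) :
    #{p ∈ representations D ((D + 1) * m) | p.1 % 3 = p.2 % 3} = #(representations D m) := by
  have hD1 : 1 ≤ D := by lia
  symm
  refine card_bij (fun p _ ↦ (p.1 - D * p.2, p.1 + p.2)) (fun p hp ↦ ?_) (fun p _ q _ h ↦ ?_)
    fun p hp ↦ ?_
  · simp only [mem_filter, mem_representations hD1] at hp ⊢
    refine ⟨by rw [← hp]; ring, ?_⟩
    rcases hD with rfl | rfl <;> lia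
  · rw [Prod.mk.injEq] at h
    have hsnd : p.2 = q.2 := by rcases hD with rfl | rfl <;> lia
    exact Prod.ext (by lia) hsnd
  · rw [mem_filter] at hp
    have hodd := emod_two_of_mem_representations hD hm hp.1
    obtain ⟨t, ht⟩ : D + 1 ∣ p.2 - p.1 := by rcases hD with rfl | rfl <;> lia
    have hx : p.2 - t - D * t = p.1 := by linear_combination ht
    refine ⟨(p.2 - t, t), ?_, Prod.ext hx (by simp)⟩
    rw [mem_representations hD1] at hp ⊢
    refine mul_left_cancel₀ (show D + 1 ≠ 0 by lia) ?_
    linear_combination hp.1 + (p.2 - t - D * t + p.1) * hx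

theorem four_dvd_card_representations_emod_three_eq_zero (hD : D = 2 ∨ D = 5) (hm : m % 4 = 1) :
    4 ∣ #{p ∈ representations D ((D + 1) * m) | p.1 % 3 = 0 ∧ p.2 % 3 = 0} := by
  have hD1 : 1 ≤ D := by lia
  have hodd {p : ℤ × ℤ} := emod_two_of_mem_representations (p := p) hD hm
  have hfst : {p ∈ representations D ((D + 1) * m) |
      (p.1 % 3 = 0 ∧ p.2 % 3 = 0) ∧ 0 < p.1 ∧ p.2 = 0} = ∅ := by grind
  have hsnd : {p ∈ representations D ((D + 1) * m) |
      (p.1 % 3 = 0 ∧ p.2 % 3 = 0) ∧ p.1 = 0 ∧ 0 < p.2} = ∅ := by grind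
  rw [card_of_forall_neg_mem (by simp only [mem_filter, mem_representations hD1, neg_sq]; lia)
    (by simp only [mem_filter, mem_representations hD1, neg_sq]; lia) (by grind),
    filter_filter, filter_filter, hfst, hsnd, card_empty]
  simp

theorem card_representations_emod_six_modEq_two (hD : D = 2 ∨ D = 5) (hm : m % 4 = 1)
    [Decidable (∃ t, m = D * t ^ 2)] :
    #{p ∈ representations D ((D + 1) * m) | p.1 % 6 = 5 ∧ p.2 % 6 = 5} ≡
      (if IsSquare m then 1 else 0) + (if ∃ t, m = D * t ^ 2 then 1 else 0) [MOD 2] := by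
  have hD1 : 1 ≤ D := by lia
  have hodd {p : ℤ × ℤ} := emod_two_of_mem_representations (p := p) hD hm
  have hthree {p : ℤ × ℤ} := emod_three_eq_zero_iff_of_mem_representations (m := m) (p := p) hD
  have hsplit := card_eq_card_zero_add_two_mul_card_pos
    (s := {p ∈ representations D ((D + 1) * m) | p.1 % 3 = p.2 % 3}) (σ := Neg.neg)
    (f := fun p ↦ 1 - (p.1 + 1) % 3) neg_involutive
    (by simp only [mem_filter, mem_representations hD1, Prod.fst_neg, Prod.snd_neg, neg_sq]; lia)
    (by simp only [Prod.fst_neg]; lia)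
  have hzero : {p ∈ representations D ((D + 1) * m) | p.1 % 3 = p.2 % 3 ∧ 1 - (p.1 + 1) % 3 = 0} =
      {p ∈ representations D ((D + 1) * m) | p.1 % 3 = 0 ∧ p.2 % 3 = 0} :=
    filter_congr fun p hp ↦ by grind
  have hpos : {p ∈ representations D ((D + 1) * m) | p.1 % 3 = p.2 % 3 ∧ 0 < 1 - (p.1 + 1) % 3} =
      {p ∈ representations D ((D + 1) * m) | p.1 % 6 = 5 ∧ p.2 % 6 = 5} :=
    filter_congr fun p hp ↦ by grind
  rw [filter_filter, filter_filter, hzero, hpos, card_representations_emod_three_eq hD hm] at hsplit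
  have hfour := four_dvd_card_representations_emod_three_eq_zero hD hm
  have hcard := card_representations_modEq_four hD1 (show m ≠ 0 by lia)
  rw [Nat.ModEq] at hcard ⊢
  lia

end Representations

section PentagonalSeries

open PowerSeries Finset

theorem sq_six_mul_sub_one (k : ℤ) : (6 * k - 1) ^ 2 = 24 * (pentagonal k : ℤ) + 1 := by
  linear_combination -12 * two_mul_natCast_pentagonal k

theorem mem_range_pentagonal_iff_isSquare {n : ℕ} :
    n ∈ Set.range pentagonal ↔ IsSquare (24 * n + 1) := by
  constructor
  · rintro ⟨k, rfl⟩
    rw [← Int.isSquare_natCast_iff]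
    push_cast
    exact ⟨6 * k - 1, by rw [← sq_six_mul_sub_one, sq]⟩
  · rintro ⟨r, hr⟩
    have hsq : (r : ℤ) ^ 2 = 24 * n + 1 := by rw [sq]; exact_mod_cast hr.symm
    have htwo := sq_emod_four r
    have hthree := sq_emod_three r
    obtain ⟨k, hk⟩ : ∃ k : ℤ, (6 * k - 1) ^ 2 = r ^ 2 := by
      have : (r : ℤ) % 6 = 1 ∨ (r : ℤ) % 6 = 5 := by split_ifs at hthree <;> lia
      rcases this with h | h
      · exact ⟨-(r / 6), by rw [← neg_sq]; congr 1; lia⟩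
      · exact ⟨(r + 1) / 6, by congr 1; lia⟩
    rw [sq_six_mul_sub_one, hsq] at hk
    exact ⟨k, by lia⟩

open scoped Classical in
theorem coeff_pentagonalSeries_zmod_two (n : ℕ) :
    coeff n (pentagonalSeries (ZMod 2)) = if n ∈ Set.range pentagonal then 1 else 0 := by
  split_ifs with h
  · obtain ⟨k, rfl⟩ := h
    rw [coeff_pentagonalSeries_pentagonal]
    rcases Int.even_or_odd k with hk | hk
    · simp [Int.negOnePow_even _ hk]
    · simp [Int.negOnePow_odd _ hk]
  · exact coeff_pentagonalSeries_eq_zero _ h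

open scoped Classical in
theorem coeff_expand_pentagonalSeries_zmod_two {d : ℕ} (hd : d ≠ 0) (n : ℕ) :
    coeff n (expand d hd (pentagonalSeries (ZMod 2))) =
      if n ∈ Set.range (d * pentagonal ·) then 1 else 0 := by
  by_cases hn : d ∣ n
  · obtain ⟨a, rfl⟩ := hn
    simp [coeff_pentagonalSeries_zmod_two, hd]
  · rw [coeff_expand_of_not_dvd _ _ _ hn, if_neg]
    rintro ⟨l, rfl⟩
    exact hn (dvd_mul_right _ _)

theorem coeff_pentagonalSeries_mul_expand {d : ℕ} (hd : d ≠ 0) (n : ℕ) :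
    coeff n (pentagonalSeries (ZMod 2) * expand d hd (pentagonalSeries (ZMod 2))) =
      #{p ∈ representations d (24 * n + 1 + d) | p.1 % 6 = 5 ∧ p.2 % 6 = 5} := by
  classical
  have hd1 : (1 : ℤ) ≤ d := by lia
  simp_rw [coeff_mul, coeff_pentagonalSeries_zmod_two, coeff_expand_pentagonalSeries_zmod_two,
    ite_zero_mul_ite_zero, mul_one, sum_boole]
  congr 1
  symm
  refine card_bij (fun p _ ↦ (pentagonal ((p.1 + 1) / 6), d * pentagonal ((p.2 + 1) / 6)))
    (fun p hp ↦ ?_) (fun p hp q hq h ↦ ?_) fun p hp ↦ ?_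
  · rw [mem_filter, mem_representations hd1] at hp
    have hx := sq_six_mul_sub_one ((p.1 + 1) / 6)
    have hy := sq_six_mul_sub_one ((p.2 + 1) / 6)
    rw [show 6 * ((p.1 + 1) / 6) - 1 = p.1 by lia] at hx
    rw [show 6 * ((p.2 + 1) / 6) - 1 = p.2 by lia] at hy
    rw [mem_filter, HasAntidiagonal.mem_antidiagonal]
    refine ⟨?_, ⟨_, rfl⟩, ⟨_, rfl⟩⟩
    zify
    refine mul_left_cancel₀ (show (24 : ℤ) ≠ 0 by simp) ?_
    linear_combination hp.1 - hx - d * hy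
  · rw [mem_filter] at hp hq
    simp only [Prod.mk.injEq, pentagonal_inj, mul_eq_mul_left_iff, hd, or_false] at h
    exact Prod.ext (by lia) (by lia)
  · obtain ⟨a, b⟩ := p
    rw [mem_filter, HasAntidiagonal.mem_antidiagonal] at hp
    obtain ⟨rfl, ⟨k, rfl⟩, ⟨l, rfl⟩⟩ := hp
    refine ⟨(6 * k - 1, 6 * l - 1), ?_, ?_⟩
    · rw [mem_filter, mem_representations hd1, sq_six_mul_sub_one, sq_six_mul_sub_one]
      refine ⟨?_, by lia, by lia⟩
      push_cast
      ring
    · simp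

end PentagonalSeries

section SquareSeries

open PowerSeries

/-- The series `∑ q ^ n` over those `n` for which `c * n + 1` is a square: a theta series, with
`c = 24` for the generalized pentagonal numbers and `c = 8` for the triangular numbers. -/
noncomputable def squareSeries (R : Type*) [Semiring R] (c : ℕ) : R⟦X⟧ :=
  .mk fun n ↦ if IsSquare (c * n + 1) then 1 else 0

theorem coeff_squareSeries (R : Type*) [Semiring R] (c n : ℕ) :
    coeff n (squareSeries R c) = if IsSquare (c * n + 1) then 1 else 0 :=
  coeff_mk _ _

theorem expand_zmod_prime (p : ℕ) [Fact p.Prime] (f : (ZMod p)⟦X⟧) :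
    expand p (NeZero.ne p) f = f ^ p := by
  rw [← MvPowerSeries.map_frobenius_expand p (NeZero.ne p), ZMod.frobenius_zmod]
  simp [expand]

theorem pentagonalSeries_eq_squareSeries :
    pentagonalSeries (ZMod 2) = squareSeries (ZMod 2) 24 := by
  ext n
  simp only [coeff_pentagonalSeries_zmod_two, coeff_squareSeries, mem_range_pentagonal_iff_isSquare]

theorem coeff_pentagonalSeries_mul_expand_eq_ite {d m n : ℕ} (hd : d = 2 ∨ d = 5)
    (hm : m % 4 = 1) (hmn : (d + 1) * m = 24 * n + 1 + d) [Decidable (∃ t, m = d * t ^ 2)] :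
    coeff n (pentagonalSeries (ZMod 2) * expand d (by lia) (pentagonalSeries (ZMod 2))) =
      (if IsSquare m then 1 else 0) + if ∃ t, m = d * t ^ 2 then 1 else 0 := by
  classical
  have hcard := card_representations_emod_six_modEq_two (D := d) (m := m) (by lia) (by lia)
  have hexists : (∃ t : ℤ, (m : ℤ) = d * t ^ 2) ↔ ∃ t : ℕ, m = d * t ^ 2 :=
    ⟨fun ⟨t, ht⟩ ↦ ⟨t.natAbs, by zify; rwa [sq_abs]⟩, fun ⟨t, ht⟩ ↦ ⟨t, by exact_mod_cast ht⟩⟩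
  simp only [Int.isSquare_natCast_iff, hexists] at hcard
  rw [coeff_pentagonalSeries_mul_expand, ← Nat.cast_ofNat (R := ℤ) (n := 24)]
  rw [show ((24 : ℕ) * (n : ℤ) + 1 + d) = (d + 1) * m by exact_mod_cast hmn.symm,
    (ZMod.natCast_eq_natCast_iff _ _ _).mpr hcard]
  push_cast
  rfl

theorem pentagonalSeries_pow_three :
    pentagonalSeries (ZMod 2) ^ 3 = squareSeries (ZMod 2) 8 := by
  classical
  ext n
  have h := coeff_pentagonalSeries_mul_expand_eq_ite (d := 2) (m := 8 * n + 1) (n := n) (by simp)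
    (by lia) (by ring)
  rw [expand_zmod_prime, ← pow_succ', if_neg (c := ∃ t, _) (by rintro ⟨t, ht⟩; lia), add_zero] at h
  rw [h, coeff_squareSeries]

theorem squareSeries_four : squareSeries (ZMod 2) 4 = pentagonalSeries (ZMod 2) ^ 6 := by
  rw [show 6 = 3 * 2 by rfl, pow_mul, pentagonalSeries_pow_three, ← expand_zmod_prime]
  ext n
  rw [coeff_expand, coeff_squareSeries, coeff_squareSeries]
  by_cases hn : 2 ∣ n
  · rw [if_pos hn, show 4 * n + 1 = 8 * (n / 2) + 1 by lia]
  · rw [if_neg hn, if_neg]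
    rintro ⟨r, hr⟩
    obtain ⟨s, rfl | rfl⟩ := Nat.even_or_odd' r
    · lia
    · obtain ⟨u, hu⟩ := Nat.even_mul_succ_self s
      lia

theorem pentagonalSeries_mul_expand_five :
    pentagonalSeries (ZMod 2) * expand 5 (by simp) (pentagonalSeries (ZMod 2)) =
      pentagonalSeries (ZMod 2) ^ 6 + X * expand 5 (by simp) (pentagonalSeries (ZMod 2)) ^ 6 := by
  classical
  ext n
  rw [coeff_pentagonalSeries_mul_expand_eq_ite (m := 4 * n + 1) (by simp) (by lia) (by ring),
    ← map_pow, ← squareSeries_four, map_add, coeff_squareSeries]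
  congr 1
  rcases n with - | n
  · rw [coeff_zero_X_mul, if_neg]
    rintro ⟨t, ht⟩
    lia
  rw [coeff_succ_X_mul]
  by_cases hn : 5 ∣ n
  · obtain ⟨k, rfl⟩ := hn
    rw [coeff_expand_mul, coeff_squareSeries]
    congr 1
    rw [IsSquare, eq_iff_iff]
    exact exists_congr fun t ↦ by rw [sq]; lia
  · rw [coeff_expand_of_not_dvd _ _ _ hn, if_neg]
    rintro ⟨t, ht⟩
    lia

end SquareSeries

section ResiduePart

open PowerSeries Finset

variable {R S : Type*} [Semiring R] [CommRing S] {N : ℕ}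

/-- The part of a power series consisting of the terms whose exponent lies in the residue class
`r` modulo `N`. -/
noncomputable def residuePart (r : ZMod N) : R⟦X⟧ →ₗ[R] R⟦X⟧ where
  toFun f := .mk fun n ↦ if (n : ZMod N) = r then coeff n f else 0
  map_add' f g := by ext n; simp [ite_add_zero]
  map_smul' a f := by ext n; simp

theorem coeff_residuePart (r : ZMod N) (f : R⟦X⟧) (n : ℕ) :
    coeff n (residuePart r f) = if (n : ZMod N) = r then coeff n f else 0 := by
  simp [residuePart]

theorem residuePart_eq_self_iff {r : ZMod N} {f : R⟦X⟧} :
    residuePart r f = f ↔ ∀ n : ℕ, coeff n f ≠ 0 → (n : ZMod N) = r := by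
  simp only [PowerSeries.ext_iff, coeff_residuePart]
  grind

theorem residuePart_mul {r s t : ZMod N} {g : R⟦X⟧} (hg : residuePart s g = g) (h : s + r = t)
    (f : R⟦X⟧) : residuePart t (g * f) = g * residuePart r f := by
  rw [residuePart_eq_self_iff] at hg
  ext n
  rw [coeff_residuePart, coeff_mul, coeff_mul, ite_sum_zero]
  refine sum_congr rfl fun p hp ↦ ?_
  rw [HasAntidiagonal.mem_antidiagonal] at hp
  subst hp h
  by_cases hp : coeff p.1 g = 0
  · simp [hp]
  · simp [coeff_residuePart, ← hg _ hp]

theorem residuePart_zero_one : residuePart (0 : ZMod N) (1 : R⟦X⟧) = 1 := by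
  refine residuePart_eq_self_iff.mpr fun n hn ↦ ?_
  rw [coeff_one] at hn
  simp_all

theorem residuePart_pow {r s : ZMod N} {f : R⟦X⟧} (hf : residuePart r f = f) {k : ℕ}
    (h : k * r = s) : residuePart s (f ^ k) = f ^ k := by
  subst h
  induction k with
  | zero => simpa using residuePart_zero_one
  | succ k ih => rw [pow_succ, residuePart_mul (r := r) ih (by push_cast; ring), hf]

theorem residuePart_X : residuePart (1 : ZMod N) (X : R⟦X⟧) = X := by
  refine residuePart_eq_self_iff.mpr fun n hn ↦ ?_
  rw [coeff_X] at hn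
  simp_all

theorem residuePart_expand {M : ℕ} (hM : M ≠ 0) (hNM : N ∣ M) (f : S⟦X⟧) :
    residuePart (0 : ZMod N) (expand M hM f) = expand M hM f := by
  refine residuePart_eq_self_iff.mpr fun n hn ↦ ?_
  rw [ZMod.natCast_eq_zero_iff]
  exact hNM.trans (not_not.mp (mt (coeff_expand_of_not_dvd M hM f) hn))

theorem residuePart_expand_of_coprime {p : ℕ} (hp : p ≠ 0) (hpN : p.Coprime N) {r s : ZMod N}
    (h : p * r = s) (f : S⟦X⟧) : residuePart s (expand p hp f) = expand p hp (residuePart r f) := by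
  subst h
  ext n
  rw [coeff_residuePart]
  by_cases hn : p ∣ n
  · obtain ⟨k, rfl⟩ := hn
    rw [coeff_expand_mul, coeff_expand_mul, coeff_residuePart]
    congr 1
    rw [Nat.cast_mul, ((ZMod.isUnit_iff_coprime p N).mpr hpN).mul_right_inj]
  · rw [coeff_expand_of_not_dvd p hp _ hn, coeff_expand_of_not_dvd p hp _ hn, ite_self]

theorem residuePart_pow_prime {p : ℕ} [Fact p.Prime] (hpN : p.Coprime N) {r s : ZMod N}
    (h : p * r = s) (f : (ZMod p)⟦X⟧) : residuePart s (f ^ p) = residuePart r f ^ p := by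
  rw [← expand_zmod_prime, residuePart_expand_of_coprime _ hpN h, expand_zmod_prime]

theorem coeff_eq_of_residuePart_eq_X_pow_mul_expand {r : ℕ} (hN : N ≠ 0) {f g : S⟦X⟧}
    (h : residuePart (r : ZMod N) f = X ^ r * expand N hN g) (n : ℕ) :
    coeff (N * n + r) f = coeff n g := by
  rw [← coeff_expand_mul N hN g, ← coeff_X_pow_mul (expand N hN g) r, ← h, coeff_residuePart]
  simp

theorem residuePart_squareSeries_eq_zero {c : ℕ} {r : ZMod N} (hr : ¬ IsSquare (c * r + 1)) :
    residuePart r (squareSeries R c) = 0 := by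
  ext n
  rw [coeff_residuePart, coeff_squareSeries, ← ite_and, if_neg, map_zero]
  rintro ⟨rfl, hn⟩
  exact hr (by simpa using hn.map (Nat.castRingHom (ZMod N)))

theorem natCast_eq_and_isSquare_iff {p c s : ℕ} (hp : p.Prime) (hs : c * s + 1 = p ^ 2) (n : ℕ) :
    (n : ZMod p) = s ∧ IsSquare (c * n + 1) ↔ ∃ k, n = p ^ 2 * k + s ∧ IsSquare (c * k + 1) := by
  have hmul (k : ℕ) : c * (p ^ 2 * k + s) + 1 = (p * p) * (c * k + 1) := by
    linear_combination hs
  constructor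
  · rintro ⟨hns, r, hr⟩
    have hdvd : p ∣ c * n + 1 := by
      rw [← ZMod.natCast_eq_zero_iff, Nat.cast_succ, Nat.cast_mul, hns, ← Nat.cast_mul,
        ← Nat.cast_succ, Nat.succ_eq_add_one, hs]
      simp
    obtain ⟨t, rfl⟩ := (hp.dvd_mul.mp (hr ▸ hdvd)).elim id id
    obtain ⟨j, rfl⟩ : ∃ j, n = j + s := by
      have hc : 0 < c := Nat.pos_of_ne_zero fun hc ↦
        (Nat.one_lt_pow two_ne_zero hp.one_lt).ne (by simpa [hc] using hs)
      have ht : 1 ≤ t * t := Nat.one_le_iff_ne_zero.mpr fun ht ↦ by simp_all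
      have hle : c * s + 1 ≤ c * n + 1 := by
        rw [hs, hr, mul_mul_mul_comm, ← sq]
        exact Nat.le_mul_of_pos_right _ ht
      exact Nat.exists_eq_add_of_le' (le_of_mul_le_mul_left (Nat.le_of_succ_le_succ hle) hc)
    have hcop : (p ^ 2).Coprime c := by
      rw [← hs]
      simp
    obtain ⟨k, rfl⟩ : p ^ 2 ∣ j := by
      refine hcop.dvd_of_dvd_mul_left ((Nat.dvd_add_left (dvd_refl (p ^ 2))).mp ?_)
      exact ⟨t * t, by linear_combination hr - hs⟩
    refine ⟨k, rfl, t, ?_⟩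
    rw [hmul] at hr
    exact mul_left_cancel₀ (mul_ne_zero hp.ne_zero hp.ne_zero) (by linear_combination hr)
  · rintro ⟨k, rfl, r, hr⟩
    exact ⟨by simp, p * r, by rw [hmul, hr]; ring⟩

theorem residuePart_squareSeries {p c s : ℕ} (hp : p.Prime) (hs : c * s + 1 = p ^ 2) :
    residuePart (s : ZMod p) (squareSeries S c) =
      X ^ s * expand (p ^ 2) (pow_ne_zero 2 hp.ne_zero) (squareSeries S c) := by
  ext n
  simp only [coeff_residuePart, coeff_squareSeries]
  rw [← ite_and]
  by_cases hn : ∃ k, n = p ^ 2 * k + s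
  · obtain ⟨k, rfl⟩ := hn
    rw [coeff_X_pow_mul, coeff_expand_mul, coeff_squareSeries]
    refine if_congr ?_ rfl rfl
    rw [natCast_eq_and_isSquare_iff hp hs]
    simp [hp.ne_zero]
  · rw [if_neg (by rw [natCast_eq_and_isSquare_iff hp hs]; tauto), coeff_X_pow_mul']
    split_ifs with hsn
    · rw [coeff_expand_of_not_dvd]
      rintro ⟨k, hk⟩
      exact hn ⟨k, by lia⟩
    · rfl

end ResiduePart

section Dissection

open PowerSeries Finset

local notation "f₁" => pentagonalSeries (ZMod 2)
local notation "f₅" => expand 5 (by simp) (pentagonalSeries (ZMod 2))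
local notation "f₂₅" => expand 25 (by simp) (pentagonalSeries (ZMod 2))
local notation "p₁" => partitionSeries (ZMod 2)
local notation "p₅" => expand 5 (by simp) (partitionSeries (ZMod 2))

theorem powerSeries_zmod_two_two_eq_zero : (2 : (ZMod 2)⟦X⟧) = 0 :=
  have := charP_of_injective_ringHom (C_injective (R := ZMod 2)) 2
  CharTwo.two_eq_zero

theorem expand_five_expand_five {R : Type*} [CommRing R] (f : R⟦X⟧) :
    expand 5 (by simp) (expand 5 (by simp) f) = expand 25 (by simp) f :=
  (expand_mul 5 (by simp) 5 (by simp) f).symm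

theorem residuePart_pentagonalSeries_pow {k : ℕ} (hk : k ≤ 4) :
    residuePart (k : ZMod 5) (f₁ ^ k) = (X * f₂₅) ^ k := by
  have h₁ : residuePart (1 : ZMod 5) f₁ = X * f₂₅ := by
    have h := residuePart_squareSeries (p := 5) (c := 24) (s := 1) (S := ZMod 2) (by norm_num) rfl
    rw [← pentagonalSeries_eq_squareSeries] at h
    simpa using h
  have h₂ : residuePart (2 : ZMod 5) (f₁ ^ 2) = (X * f₂₅) ^ 2 := by
    rw [residuePart_pow_prime (p := 2) (r := 1) (s := 2) (by decide) rfl, h₁]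
  interval_cases k
  · simpa using residuePart_zero_one
  · simpa using h₁
  · exact h₂
  · have h := residuePart_squareSeries (p := 5) (c := 8) (s := 3) (S := ZMod 2) (by norm_num) rfl
    rw [← pentagonalSeries_pow_three, map_pow (expand _ _), ← mul_pow] at h
    exact h
  · have h := residuePart_pow_prime (p := 2) (N := 5) (r := 2) (by decide) rfl (f₁ ^ 2)
    rw [h₂, ← pow_mul, ← pow_mul] at h
    exact h

theorem residuePart_pentagonalSeries_eq_zero {r : ZMod 5} (hr : r = 3 ∨ r = 4) :
    residuePart r f₁ = 0 := by
  rw [pentagonalSeries_eq_squareSeries]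
  apply residuePart_squareSeries_eq_zero
  revert r
  decide

theorem residuePart_pentagonalSeries_pow_four_eq_zero {r : ZMod 5} (hr : r = 1 ∨ r = 2) :
    residuePart r (f₁ ^ 4) = 0 := by
  have hs : -r = 3 ∨ -r = 4 := by
    revert r
    decide
  rw [show 4 = 2 * 2 by rfl, pow_mul,
    residuePart_pow_prime (p := 2) (r := 2 * -r) (by decide) (by revert r; decide),
    residuePart_pow_prime (p := 2) (r := -r) (s := 2 * -r) (by decide) rfl,
    residuePart_pentagonalSeries_eq_zero hs, zero_pow two_ne_zero, zero_pow two_ne_zero]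

theorem expand_five_mul_expand_twenty_five : f₅ * f₂₅ = f₅ ^ 6 + X ^ 5 * f₂₅ ^ 6 := by
  simpa [expand_five_expand_five] using
    congrArg (expand 5 (by simp)) pentagonalSeries_mul_expand_five

theorem geom_sum_pentagonalSeries :
    ∑ i ∈ range 6, (X * f₂₅) ^ i * f₁ ^ (5 - i) = f₅ := by
  have hunit : constantCoeff p₁ = 1 ∧ constantCoeff f₁ = 1 := by
    simpa using congrArg constantCoeff (partitionSeries_mul_pentagonalSeries (ZMod 2))
  -- `X * f₂₅` and `f₁` are both roots of `t ^ 6 - f₅ * t + X * f₅ ^ 6`.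
  have hne : X * f₂₅ - f₁ ≠ 0 := fun h ↦ by simpa [hunit.2] using congrArg constantCoeff h
  refine mul_right_cancel₀ hne ((geom_sum₂_mul _ _ 6).trans ?_)
  linear_combination pentagonalSeries_mul_expand_five - X * expand_five_mul_expand_twenty_five

theorem expand_twenty_five_mul_pow_six_mul_add_eq_one :
    f₂₅ * p₅ ^ 6 * (f₅ + (X * f₂₅) ^ 5) = 1 := by
  have h : p₅ * f₅ = 1 := by rw [← map_mul, partitionSeries_mul_pentagonalSeries, map_one]
  calc
    _ = (p₅ * f₅) ^ 6 := by
      linear_combination p₅ ^ 6 * expand_five_mul_expand_twenty_five +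
        p₅ ^ 6 * X ^ 5 * f₂₅ ^ 6 * powerSeries_zmod_two_two_eq_zero
    _ = 1 := by rw [h, one_pow]

theorem partitionSeries_eq_mul_geom_sum :
    p₁ = f₂₅ * p₅ ^ 6 * ∑ i ∈ range 5, (X * f₂₅) ^ i * f₁ ^ (4 - i) := by
  have hsum := geom_sum_pentagonalSeries
  have h := partitionSeries_mul_pentagonalSeries (ZMod 2)
  simp only [sum_range_succ, sum_range_zero] at hsum ⊢
  calc
    p₁ = f₂₅ * p₅ ^ 6 * (p₁ * (f₅ + (X * f₂₅) ^ 5)) := by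
      linear_combination -p₁ * expand_twenty_five_mul_pow_six_mul_add_eq_one
    _ = _ := by
      linear_combination -f₂₅ * p₅ ^ 6 * p₁ * hsum +
        f₂₅ * p₅ ^ 6 * p₁ * (X * f₂₅) ^ 5 * powerSeries_zmod_two_two_eq_zero +
        f₂₅ * p₅ ^ 6 * (f₁ ^ 4 + X * f₂₅ * f₁ ^ 3 +
          (X * f₂₅) ^ 2 * f₁ ^ 2 + (X * f₂₅) ^ 3 * f₁ + (X * f₂₅) ^ 4) * h

theorem partitionSeries_pow_three_eq_mul :
    p₁ ^ 3 = f₂₅ * p₅ ^ 6 * (∑ i ∈ range 3, (X * f₂₅) ^ i * f₁ ^ (2 - i) +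
      (X * f₂₅) ^ 3 * p₁ + (X * f₂₅) ^ 4 * p₁ ^ 2) := by
  have heq := partitionSeries_eq_mul_geom_sum
  have h := partitionSeries_mul_pentagonalSeries (ZMod 2)
  simp only [sum_range_succ, sum_range_zero] at heq ⊢
  calc
    p₁ ^ 3 = f₂₅ * p₅ ^ 6 * ((p₁ * f₁) ^ 2 * (f₁ ^ 2 + X * f₂₅ * f₁) +
        (p₁ * f₁) ^ 2 * (X * f₂₅) ^ 2 + p₁ * f₁ * ((X * f₂₅) ^ 3 * p₁) +
          (X * f₂₅) ^ 4 * p₁ ^ 2) := by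
      linear_combination p₁ ^ 2 * heq
    _ = _ := by rw [h]; ring

theorem residuePart_zero_expand_twenty_five_mul :
    residuePart (0 : ZMod 5) (f₂₅ * p₅ ^ 6) = f₂₅ * p₅ ^ 6 := by
  rw [← expand_five_expand_five, ← map_pow, ← map_mul, residuePart_expand _ dvd_rfl]

theorem residuePart_X_mul_expand_twenty_five_pow_mul {k : ℕ} {r s : ZMod 5} (h : k + r = s)
    (f : (ZMod 2)⟦X⟧) : residuePart s ((X * f₂₅) ^ k * f) = (X * f₂₅) ^ k * residuePart r f := by
  have hX : residuePart (1 : ZMod 5) (X * f₂₅) = X * f₂₅ := by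
    rw [residuePart_mul residuePart_X (add_zero 1), residuePart_expand _ (by decide)]
  exact residuePart_mul (residuePart_pow hX (mul_one _)) h f

theorem residuePart_geom_sum_pentagonalSeries {k : ℕ} (hk : k ≤ 4) :
    residuePart (k : ZMod 5) (∑ i ∈ range (k + 1), (X * f₂₅) ^ i * f₁ ^ (k - i)) =
      ((k + 1 : ℕ) : (ZMod 2)⟦X⟧) * (X * f₂₅) ^ k := by
  have hterm {i : ℕ} (hi : i ≤ k) :
      residuePart (k : ZMod 5) ((X * f₂₅) ^ i * f₁ ^ (k - i)) = (X * f₂₅) ^ k := by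
    rw [residuePart_X_mul_expand_twenty_five_pow_mul (r := ((k - i : ℕ) : ZMod 5))
      (by rw [← Nat.cast_add, Nat.add_sub_cancel' hi]), residuePart_pentagonalSeries_pow (by lia),
      ← pow_add, Nat.add_sub_cancel' hi]
  rw [map_sum, sum_congr rfl fun i hi ↦ hterm (mem_range_succ_iff.mp hi)]
  simp

theorem residuePart_four_partitionSeries :
    residuePart (4 : ZMod 5) p₁ = f₂₅ * p₅ ^ 6 * (X * f₂₅) ^ 4 := by
  have h := residuePart_geom_sum_pentagonalSeries (k := 4) le_rfl
  push_cast at h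
  conv_lhs => rw [partitionSeries_eq_mul_geom_sum]
  rw [residuePart_mul residuePart_zero_expand_twenty_five_mul (zero_add _), h]
  linear_combination 2 * f₂₅ * p₅ ^ 6 * (X * f₂₅) ^ 4 * powerSeries_zmod_two_two_eq_zero

theorem residuePart_two_partitionSeries_pow_three :
    residuePart (2 : ZMod 5) (p₁ ^ 3) = f₂₅ * p₅ ^ 6 * (X * f₂₅) ^ 2 *
      (1 + f₂₅ * p₅ ^ 6 * (X * f₂₅) ^ 5 + (f₂₅ * p₅ ^ 6 * (X * f₂₅) ^ 5) ^ 2) := by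
  have h := residuePart_geom_sum_pentagonalSeries (k := 2) (by decide)
  push_cast at h
  conv_lhs => rw [partitionSeries_pow_three_eq_mul]
  rw [residuePart_mul residuePart_zero_expand_twenty_five_mul (zero_add _), map_add, map_add, h,
    residuePart_X_mul_expand_twenty_five_pow_mul (r := 4) (by decide),
    residuePart_X_mul_expand_twenty_five_pow_mul (r := 3) (by decide),
    residuePart_pow_prime (p := 2) (r := 4) (s := 3) (by decide) rfl,
    residuePart_four_partitionSeries]
  linear_combination f₂₅ * p₅ ^ 6 * (X * f₂₅) ^ 2 * powerSeries_zmod_two_two_eq_zero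

theorem residuePart_four_partitionSeries_pow_six :
    residuePart (4 : ZMod 5) (p₁ ^ 6) = X ^ 4 * expand 5 (by simp)
      (f₅ ^ 6 * p₁ ^ 12 * (1 + (X * f₅ ^ 6 * p₁ ^ 6) ^ 2 + (X * f₅ ^ 6 * p₁ ^ 6) ^ 4)) := by
  have h := residuePart_pow_prime (p := 2) (N := 5) (r := 2) (s := 4) (by decide) rfl (p₁ ^ 3)
  have hfrob (a b : (ZMod 2)⟦X⟧) : (1 + a + b) ^ 2 = 1 + a ^ 2 + b ^ 2 := by
    linear_combination (a + b + a * b) * powerSeries_zmod_two_two_eq_zero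
  rw [← pow_mul, residuePart_two_partitionSeries_pow_three, mul_pow, hfrob] at h
  rw [h]
  simp only [map_mul, map_add, map_pow, map_one, expand_X, expand_five_expand_five]
  ring

theorem residuePart_four_regularPartitionSeries_hundred :
    residuePart (4 : ZMod 5) (regularPartitionSeries (ZMod 2) 100) =
      X ^ 4 * expand 5 (by simp) (f₅ ^ 9 * p₁ ^ 6) := by
  have hexpand : expand 100 (by simp) f₁ = f₂₅ ^ 4 := by
    rw [show 4 = 2 * 2 by rfl, pow_mul, ← expand_zmod_prime, ← expand_zmod_prime, ← expand_mul,
      ← expand_mul]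
  have hreg : regularPartitionSeries (ZMod 2) 100 = f₂₅ ^ 4 * p₁ := by
    rw [← hexpand, ← regularPartitionSeries_mul_pentagonalSeries _ (by simp)]
    linear_combination -regularPartitionSeries (ZMod 2) 100 *
      partitionSeries_mul_pentagonalSeries (ZMod 2)
  rw [hreg, ← map_pow, residuePart_mul (residuePart_expand _ (by decide) _) (zero_add 4),
    residuePart_four_partitionSeries]
  simp only [map_mul, map_pow, expand_five_expand_five]
  ring

theorem coeff_regularPartitionSeries_hundred (n : ℕ) :
    coeff (25 * n + 24) (regularPartitionSeries (ZMod 2) 100) = coeff n (f₅ ^ 6 * p₁ ^ 3 *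
      (1 + (X * f₅ ^ 6 * p₁ ^ 6) ^ 2 + (X * f₅ ^ 6 * p₁ ^ 6) ^ 4)) := by
  rw [show 25 * n + 24 = 5 * (5 * n + 4) + 4 by ring,
    coeff_eq_of_residuePart_eq_X_pow_mul_expand (by simp)
      residuePart_four_regularPartitionSeries_hundred]
  apply coeff_eq_of_residuePart_eq_X_pow_mul_expand (by simp)
  have hcancel (f : (ZMod 2)⟦X⟧) : f₁ ^ 9 * (f₅ ^ 6 * p₁ ^ 12 * f) = f₅ ^ 6 * p₁ ^ 3 * f := calc
    _ = (p₁ * f₁) ^ 9 * (f₅ ^ 6 * p₁ ^ 3 * f) := by ring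
    _ = _ := by rw [partitionSeries_mul_pentagonalSeries, one_pow, one_mul]
  rw [← map_pow, residuePart_mul (residuePart_expand _ dvd_rfl _) (zero_add _), Nat.cast_ofNat,
    residuePart_four_partitionSeries_pow_six, mul_left_comm, ← map_mul, hcancel]

theorem X_sq_mul_eq_partitionSeries_pow_add :
    X ^ 2 * (f₅ ^ 6 * p₁ ^ 3 * (1 + (X * f₅ ^ 6 * p₁ ^ 6) ^ 2 + (X * f₅ ^ 6 * p₁ ^ 6) ^ 4)) =
      p₁ ^ 21 + X * f₁ ^ 3 + p₅ ^ 5 * f₁ ^ 4 := by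
  have hp₁ (k : ℕ) : (p₁ * f₁) ^ k = 1 := by rw [partitionSeries_mul_pentagonalSeries, one_pow]
  have hp₅ : p₅ * f₅ = 1 := by rw [← map_mul, partitionSeries_mul_pentagonalSeries, map_one]
  have hquintic : p₁ ^ 5 * f₅ = 1 + X * f₅ ^ 6 * p₁ ^ 6 := by
    linear_combination p₁ ^ 6 * pentagonalSeries_mul_expand_five - p₁ ^ 5 * f₅ * hp₁ 1 + hp₁ 6
  set t := X * f₅ ^ 6 * p₁ ^ 6
  set u := p₅ * f₁ ^ 5
  have hut : u * (1 + t) = 1 := calc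
    u * (1 + t) = (p₁ * f₁) ^ 5 * (p₅ * f₅) := by rw [← hquintic]; ring
    _ = 1 := by rw [hp₁, hp₅, one_mul]
  have hXf₅ : X * f₅ ^ 6 * p₁ ^ 3 = t * f₁ ^ 3 := by
    linear_combination -X * f₅ ^ 6 * p₁ ^ 3 * hp₁ 3
  have hXf₁ : X * f₁ ^ 3 = p₁ ^ 21 * (t * u ^ 6) := calc
    X * f₁ ^ 3 = X * f₁ ^ 3 * (p₁ * f₁) ^ 27 * (p₅ * f₅) ^ 6 := by rw [hp₁, hp₅]; ring
    _ = p₁ ^ 21 * (t * u ^ 6) := by ring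
  have hp₅f₁ : p₅ ^ 5 * f₁ ^ 4 = p₁ ^ 21 * u ^ 5 := by
    linear_combination -p₅ ^ 5 * f₁ ^ 4 * hp₁ 21
  have hcubic : u ^ 6 * (t ^ 2 + t ^ 4 + t ^ 6) = 1 + t * u ^ 6 + u ^ 5 := by
    have hut_pow : (u * (1 + t)) ^ 6 = 1 := by rw [hut, one_pow]
    linear_combination hut_pow + u ^ 5 * hut -
      u ^ 6 * (1 + 4 * t + 7 * t ^ 2 + 10 * t ^ 3 + 7 * t ^ 4 + 3 * t ^ 5) *
        powerSeries_zmod_two_two_eq_zero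
  calc
    _ = t * (1 + t ^ 2 + t ^ 4) * (X * f₁ ^ 3) := by
      linear_combination X * (1 + t ^ 2 + t ^ 4) * hXf₅
    _ = p₁ ^ 21 * (u ^ 6 * (t ^ 2 + t ^ 4 + t ^ 6)) := by rw [hXf₁]; ring
    _ = p₁ ^ 21 + X * f₁ ^ 3 + p₅ ^ 5 * f₁ ^ 4 := by rw [hcubic, hXf₁, hp₅f₁]; ring

theorem coeff_expand_pow_mul_pentagonalSeries_pow_four {m : ℕ} (hm : m % 5 = 1 ∨ m % 5 = 2) :
    coeff m (p₅ ^ 5 * f₁ ^ 4) = 0 := by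
  have hzero : residuePart (m : ZMod 5) (p₅ ^ 5 * f₁ ^ 4) = 0 := by
    rw [← map_pow, residuePart_mul (residuePart_expand _ dvd_rfl _) (zero_add _),
      residuePart_pentagonalSeries_pow_four_eq_zero, mul_zero]
    exact hm.imp (ZMod.natCast_eq_natCast_iff' m 1 5).mpr (ZMod.natCast_eq_natCast_iff' m 2 5).mpr
  simpa [coeff_residuePart] using congrArg (coeff m) hzero

theorem numRegularPartitions_modEq_numMultipartitions_add {m : ℕ} (hm : 1 < m)
    (h5 : m % 5 = 1 ∨ m % 5 = 2) :
    numRegularPartitions 100 (25 * m - 26) ≡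
      numMultipartitions 21 m + (if IsSquare (8 * m - 7) then 1 else 0) [MOD 2] := by
  obtain ⟨n, rfl⟩ := Nat.exists_eq_add_of_le' hm
  have h := congrArg (coeff (n + 2)) X_sq_mul_eq_partitionSeries_pow_add
  rw [coeff_X_pow_mul, ← coeff_regularPartitionSeries_hundred, map_add, map_add,
    coeff_partitionSeries_pow, coeff_succ_X_mul, pentagonalSeries_pow_three, coeff_squareSeries,
    coeff_expand_pow_mul_pentagonalSeries_pow_four h5, add_zero, regularPartitionSeries, coeff_mk,
    show 25 * n + 24 = 25 * (n + 2) - 26 by lia,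
    show 8 * (n + 1) + 1 = 8 * (n + 2) - 7 by lia] at h
  rw [← ZMod.natCast_eq_natCast_iff, h]
  push_cast
  rfl

end Dissection

theorem stmt_8_general {m : ℕ} (hm : 1 < m) (h5 : m % 5 = 1 ∨ m % 5 = 2) :
    numRegularPartitions 100 (25 * m - 26) ≡ numMultipartitions 21 m [MOD 2] ↔
      ¬ IsSquare (8 * m - 7) := by
  have h := numRegularPartitions_modEq_numMultipartitions_add hm h5
  split_ifs at h with hsq
  · simp only [Nat.ModEq, hsq] at h ⊢
    lia
  · exact iff_of_true h hsq

theorem not_isSquare_eight_mul_sub_seven {m : ℕ} (hm : m % 7 = 3 ∨ m % 7 = 5 ∨ m % 7 = 6) :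
    ¬ IsSquare (8 * m - 7) := by
  rintro ⟨r, hr⟩
  have hmod : m % 7 = (r % 7) * (r % 7) % 7 := by
    rw [← Nat.mul_mod, ← hr]
    lia
  have hlt : r % 7 < 7 := Nat.mod_lt _ (by decide)
  interval_cases r % 7 <;> lia

theorem stmt_8 (n : ℕ) :
    (∀ B ∈ ({6, 12, 17, 26, 27, 31} : Finset ℕ),
      numRegularPartitions 100 (875 * n + 25 * B - 26) ≡
        numMultipartitions 21 (35 * n + B) [MOD 2]) := by
  intro B hB
  have hB₃₅ : 1 < B ∧ (B % 5 = 1 ∨ B % 5 = 2) ∧ (B % 7 = 3 ∨ B % 7 = 5 ∨ B % 7 = 6) := by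
    revert B
    decide
  rw [show 875 * n + 25 * B - 26 = 25 * (35 * n + B) - 26 by lia,
    stmt_8_general (by lia) (by lia)]
  exact not_isSquare_eight_mul_sub_seven (by lia)
end
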